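/- Let u be an AB-entropy solution of u_t + f(x,u)_x = 0 on ℝ × [0,∞). Then for every x ∈ ℝ the set C(u,x) is nonempty, i.e. there exists an AB-genuine/interface characteristic ζ : [0,T] → ℝ for u with ζ(T) = x. -/

import Mathlib

open MeasureTheory Set Filter

noncomputable section

/-- The discontinuous flux `f(x,u) = f_l(u)` for `x < 0`, `f_r(u)` for `x > 0`
(the value at the interface is taken to be `f_r(u)`). -/
def dflux (fl fr : ℝ → ℝ) (x u : ℝ) : ℝ := if x < 0 then fl u else fr u

/-- The connection function `c^{AB}`. -/
def cAB (A B : ℝ) (x : ℝ) : ℝ := if x ≤ 0 then A else B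

/-- An `AB`-entropy solution of `u_t + f(x,u)_x = 0` on `ℝ × [0,∞)` with
initial datum `u0`, for the flux `f(x,·) = fl` on `x<0` and `fr` on `x>0`,
relative to the connection `(A,B)`.  The structure bundles the solution `u`
(as a function of `(x,t)`), its one-sided spatial limits `um x t = u(x-,t)` and
`up x t = u(x+,t)` (for `t > 0`), the weak (distributional) formulation, the
Kružkov entropy inequalities away from the interface, the `AB`-interface
entropy inequality, `L¹_loc`-continuity in time and the initial condition. -/
structure ABSol (fl fr : ℝ → ℝ) (A B : ℝ) (u0 : ℝ → ℝ) where
  u : ℝ → ℝ → ℝ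
  meas : Measurable (Function.uncurry u)
  bdd : ∃ M : ℝ, ∀ x t, |u x t| ≤ M
  um : ℝ → ℝ → ℝ
  up : ℝ → ℝ → ℝ
  um_spec : ∀ x t, 0 < t →
    Tendsto (fun y => u y t) (nhdsWithin x (Iio x)) (nhds (um x t))
  up_spec : ∀ x t, 0 < t →
    Tendsto (fun y => u y t) (nhdsWithin x (Ioi x)) (nhds (up x t))
  weak : ∀ φ : ℝ → ℝ → ℝ,
    ContDiff ℝ 1 (fun p : ℝ × ℝ => φ p.1 p.2) →
    HasCompactSupport (fun p : ℝ × ℝ => φ p.1 p.2) →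
    (∀ x t, t ≤ 0 → φ x t = 0) →
    (∫ p : ℝ × ℝ, (u p.1 p.2 * deriv (fun s => φ p.1 s) p.2 +
        dflux fl fr p.1 (u p.1 p.2) * deriv (fun y => φ y p.2) p.1)) = 0
  kruzkov_l : ∀ (k : ℝ) (φ : ℝ → ℝ → ℝ),
    ContDiff ℝ 1 (fun p : ℝ × ℝ => φ p.1 p.2) →
    HasCompactSupport (fun p : ℝ × ℝ => φ p.1 p.2) →
    (∀ x t, 0 ≤ φ x t) →
    (∀ x t, 0 ≤ x ∨ t ≤ 0 → φ x t = 0) →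
    0 ≤ ∫ p : ℝ × ℝ, (|u p.1 p.2 - k| * deriv (fun s => φ p.1 s) p.2 +
        Real.sign (u p.1 p.2 - k) * (fl (u p.1 p.2) - fl k) *
          deriv (fun y => φ y p.2) p.1)
  kruzkov_r : ∀ (k : ℝ) (φ : ℝ → ℝ → ℝ),
    ContDiff ℝ 1 (fun p : ℝ × ℝ => φ p.1 p.2) →
    HasCompactSupport (fun p : ℝ × ℝ => φ p.1 p.2) →
    (∀ x t, 0 ≤ φ x t) →
    (∀ x t, x ≤ 0 ∨ t ≤ 0 → φ x t = 0) →
    0 ≤ ∫ p : ℝ × ℝ, (|u p.1 p.2 - k| * deriv (fun s => φ p.1 s) p.2 +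
        Real.sign (u p.1 p.2 - k) * (fr (u p.1 p.2) - fr k) *
          deriv (fun y => φ y p.2) p.1)
  interfaceEntropy : ∀ φ : ℝ → ℝ → ℝ,
    ContDiff ℝ 1 (fun p : ℝ × ℝ => φ p.1 p.2) →
    HasCompactSupport (fun p : ℝ × ℝ => φ p.1 p.2) →
    (∀ x t, 0 ≤ φ x t) →
    (∀ x t, t ≤ 0 → φ x t = 0) →
    0 ≤ ∫ p : ℝ × ℝ, (|u p.1 p.2 - cAB A B p.1| * deriv (fun s => φ p.1 s) p.2 +
        Real.sign (u p.1 p.2 - cAB A B p.1) *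
          (dflux fl fr p.1 (u p.1 p.2) - dflux fl fr p.1 (cAB A B p.1)) *
          deriv (fun y => φ y p.2) p.1)
  timeCont : ∀ (r t₀ : ℝ), 0 ≤ t₀ →
    Tendsto (fun t => ∫ x in Icc (-r) r, |u x t - u x t₀|)
      (nhdsWithin t₀ (Ici 0)) (nhds 0)
  init : ∀ᵐ x : ℝ ∂volume, u x 0 = u0 x

/-- `AB`-genuine/interface characteristic for the `AB`-entropy solution `sol`,
on the time interval `[0,T]`, where `γ = f_l(A) = f_r(B)`. -/
def IsABgic (T : ℝ) (fl fr : ℝ → ℝ) (γ : ℝ) {A B : ℝ} {u0 : ℝ → ℝ}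
    (sol : ABSol fl fr A B u0) (ζ : ℝ → ℝ) : Prop :=
  (∃ K : NNReal, LipschitzOnWith K ζ (Icc 0 T)) ∧
  (∀ᵐ t ∂(volume.restrict (Icc 0 T)),
    (ζ t < 0 → HasDerivAt ζ (deriv fl (sol.um (ζ t) t)) t ∧
      deriv fl (sol.um (ζ t) t) = deriv fl (sol.up (ζ t) t)) ∧
    (0 < ζ t → HasDerivAt ζ (deriv fr (sol.um (ζ t) t)) t ∧
      deriv fr (sol.um (ζ t) t) = deriv fr (sol.up (ζ t) t)) ∧
    (ζ t = 0 → fl (sol.um 0 t) = γ ∧ fr (sol.up 0 t) = γ))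

/-- `C(u,x)`: the set of `AB`-genuine/interface characteristics of `sol`
reaching `x` at time `T`. -/
def charSet (T : ℝ) (fl fr : ℝ → ℝ) (γ : ℝ) {A B : ℝ} {u0 : ℝ → ℝ}
    (sol : ABSol fl fr A B u0) (x : ℝ) : Set (ℝ → ℝ) :=
  {ζ | IsABgic T fl fr γ sol ζ ∧ ζ T = x}

/-- `C₀(u,x)`: the set of initial positions `ζ(0)` of characteristics in `C(u,x)`. -/
def charSet0 (T : ℝ) (fl fr : ℝ → ℝ) (γ : ℝ) {A B : ℝ} {u0 : ℝ → ℝ}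
    (sol : ABSol fl fr A B u0) (x : ℝ) : Set ℝ :=
  (fun ζ : ℝ → ℝ => ζ 0) '' charSet T fl fr γ sol x

/-- Membership in `L^∞(ℝ)`: measurable and (essentially) bounded. -/
def IsLinf (g : ℝ → ℝ) : Prop :=
  Measurable g ∧ ∃ M : ℝ, ∀ᵐ x : ℝ ∂volume, |g x| ≤ M

/-- `ω ∈ A^{[AB]}(T)`: the profile `ω` is attainable at time `T`. -/
def Attainable (T : ℝ) (fl fr : ℝ → ℝ) (A B : ℝ) (ω : ℝ → ℝ) : Prop :=
  ∃ u0 : ℝ → ℝ, IsLinf u0 ∧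
    ∃ sol : ABSol fl fr A B u0, ∀ᵐ x : ℝ ∂volume, sol.u x T = ω x

/-- `I_T^{[AB]}(ω)`: the set of (bounded) initial data whose `AB`-entropy
solution coincides a.e. with `ω` at time `T`. -/
def InitialSet (T : ℝ) (fl fr : ℝ → ℝ) (A B : ℝ) (ω : ℝ → ℝ) : Set (ℝ → ℝ) :=
  {u0 | IsLinf u0 ∧
    ∃ sol : ABSol fl fr A B u0, ∀ᵐ x : ℝ ∂volume, sol.u x T = ω x}

/-- `x` is a point of continuity of `ω`: the one-sided limits exist and coincide. -/
def ContinuityPt (ω : ℝ → ℝ) (x : ℝ) : Prop :=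
  ∃ l : ℝ, Tendsto ω (nhdsWithin x (Iio x)) (nhds l) ∧
    Tendsto ω (nhdsWithin x (Ioi x)) (nhds l)

/-!
The potential `U` with `U_x = u` and `U_t = -f(x, u)` turns the conservation law into a
Hamilton–Jacobi equation: the Kružkov inequalities make `U` a viscosity supersolution on each side
of the interface, so `U` satisfies a Hopf–Lax formula there. Its minimising segments are genuine
characteristics, since along their interior `U` is squeezed between two differentiable functions
and hence is differentiable in `x`, with derivative read off the velocity of the segment. Following
a minimising segment backwards from `(x, T)` one arrives at time `0` or at the interface.

On the interface, `U(0, t) + γ t` is non-increasing, because the flux through it is at least `γ`.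
While this function is constant, the flux is `γ` and the characteristic may stay on the interface.
At the first time `s` of such an interval, either `s = 0` or some minimising segment arrives at
`(0, s)` from time `0`; otherwise the traces of `U` near `s` would violate the supersolution
property that the interface entropy inequality expresses.
-/

open scoped Topology NNReal Convolution

section LineDerivatives

variable {E : Type*} [NormedAddCommGroup E] [NormedSpace ℝ E]

lemma lineDeriv_eq_zero_of_nonneg {φ : E → ℝ} (hφ : 0 ≤ φ) {p : E} (hp : φ p = 0) (v : E) :
    lineDeriv ℝ φ p v = 0 := by
  refine IsLocalMin.deriv_eq_zero (Eventually.of_forall fun t => ?_)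
  simpa [hp] using hφ (p + t • v)

lemma lineDeriv_zero_one (φ : ℝ × ℝ → ℝ) (p : ℝ × ℝ) :
    lineDeriv ℝ φ p (0, 1) = deriv (fun s => φ (p.1, s)) p.2 := by
  have h := deriv_comp_const_add (fun s => φ (p.1, s)) p.2 0
  rw [add_zero] at h
  simp [← h, lineDeriv, Prod.add_def]

lemma lineDeriv_one_zero (φ : ℝ × ℝ → ℝ) (p : ℝ × ℝ) :
    lineDeriv ℝ φ p (1, 0) = deriv (fun y => φ (y, p.2)) p.1 := by
  have h := deriv_comp_const_add (fun y => φ (y, p.2)) p.1 0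
  rw [add_zero] at h
  simp [← h, lineDeriv, Prod.add_def]

lemma integrable_mul_lineDeriv [MeasurableSpace E] [BorelSpace E] {μ : Measure E}
    [IsFiniteMeasureOnCompacts μ] {K : ℝ≥0} {φ : E → ℝ} (hφ : LipschitzWith K φ) (h0 : 0 ≤ φ)
    {S : Set E}
    (hS : IsCompact S) (hφS : tsupport φ ⊆ S) {a : E → ℝ} (ha : Measurable a) {C : ℝ}
    (haC : ∀ p ∈ S, |a p| ≤ C) (v : E) :
    Integrable (fun p => a p * lineDeriv ℝ φ p v) μ := by
  have hsupp : Function.support (fun p => a p * lineDeriv ℝ φ p v) ⊆ S := by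
    refine fun p hp => hφS (subset_tsupport φ fun h => hp ?_)
    simp only [lineDeriv_eq_zero_of_nonneg h0 h, mul_zero]
  rw [← integrableOn_iff_integrable_of_support_subset hsupp]
  refine Measure.integrableOn_of_bounded (M := C * (K * ‖v‖)) hS.measure_lt_top.ne
    (ha.mul (measurable_lineDeriv hφ.continuous)).aestronglyMeasurable ?_
  refine (ae_restrict_iff' hS.measurableSet).2 (Eventually.of_forall fun p hp => ?_)
  rw [norm_mul]
  exact mul_le_mul (haC p hp) (norm_lineDeriv_le_of_lipschitz ℝ hφ) (norm_nonneg _)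
    ((abs_nonneg _).trans (haC p hp))

end LineDerivatives

section Mollification

variable {E : Type*} [NormedAddCommGroup E] [NormedSpace ℝ E] [FiniteDimensional ℝ E]
  [MeasurableSpace E] [BorelSpace E] {μ : Measure E} [μ.IsAddHaarMeasure] {K : ℝ≥0} {φ ρ : E → ℝ}

lemma integral_lineDeriv_eq_zero (hφ : LipschitzWith K φ) (hc : HasCompactSupport φ) (v : E) :
    ∫ p, lineDeriv ℝ φ p v ∂μ = 0 := by
  have h := (LipschitzWith.const (1 : ℝ) (α := E)).integral_lineDeriv_mul_eq (μ := μ) hφ hc (-v)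
  simpa [lineDeriv] using h.symm

lemma lineDeriv_convolution (hφ : LipschitzWith K φ) (hρ : Continuous ρ)
    (hρc : HasCompactSupport ρ) (v p : E) :
    lineDeriv ℝ (ρ ⋆[ContinuousLinearMap.lsmul ℝ ℝ, μ] φ) p v =
      (ρ ⋆[ContinuousLinearMap.lsmul ℝ ℝ, μ] fun q => lineDeriv ℝ φ q v) p := by
  have hφc := hφ.continuous
  have hmeas : Measurable fun q => lineDeriv ℝ φ (p - q) v :=
    (measurable_lineDeriv hφc).comp (measurable_const.sub measurable_id)
  have hlip : ∀ q, LipschitzOnWith (Real.nnabs (|ρ q| * (K * ‖v‖)))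
      (fun t : ℝ => ρ q * φ (p + t • v - q)) univ := by
    refine fun q => LipschitzOnWith.of_dist_le_mul fun s _ t _ => ?_
    have hdist : dist (p + s • v - q) (p + t • v - q) = ‖v‖ * dist s t := by
      rw [dist_sub_right, dist_add_left, dist_eq_norm, ← sub_smul, norm_smul, mul_comm,
        Real.dist_eq, Real.norm_eq_abs]
    rw [Real.coe_nnabs, abs_of_nonneg (by positivity), Real.dist_eq, ← mul_sub, abs_mul,
      mul_assoc, mul_assoc, ← hdist]
    exact mul_le_mul_of_nonneg_left (hφ.dist_le_mul _ _) (abs_nonneg _)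
  have hdiff : ∀ᵐ q ∂μ, HasDerivAt (fun t : ℝ => ρ q * φ (p + t • v - q))
      (ρ q * lineDeriv ℝ φ (p - q) v) 0 := by
    have h := (Measure.measurePreserving_sub_left μ p).quasiMeasurePreserving.ae
      (hφ.ae_lineDifferentiableAt (μ := μ) v)
    filter_upwards [h] with q hq
    refine (HasDerivAt.const_mul (ρ q) hq.hasLineDerivAt).congr_of_eventuallyEq
      (Eventually.of_forall fun t => ?_)
    simp only [add_sub_right_comm]
  have key := hasDerivAt_integral_of_dominated_loc_of_lip (μ := μ)
    (F := fun (t : ℝ) q => ρ q * φ (p + t • v - q)) (F' := fun q => ρ q * lineDeriv ℝ φ (p - q) v)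
    (x₀ := 0) (s := univ) (bound := fun q => |ρ q| * (K * ‖v‖)) univ_mem
    (Eventually.of_forall fun t => Continuous.aestronglyMeasurable (by fun_prop))
    (Continuous.integrable_of_hasCompactSupport (by fun_prop) hρc.mul_right)
    (hρ.measurable.mul hmeas).aestronglyMeasurable (Eventually.of_forall hlip)
    ((hρ.integrable_of_hasCompactSupport hρc).abs.mul_const _) hdiff
  exact key.2.deriv

lemma lipschitzWith_normed_convolution (b : ContDiffBump (0 : E)) (hφ : LipschitzWith K φ) :
    LipschitzWith K (b.normed μ ⋆[ContinuousLinearMap.lsmul ℝ ℝ, μ] φ) := by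
  have hint : ∀ x, Integrable (fun t => b.normed μ t * φ (x - t)) μ := fun x => by
    have hφc := hφ.continuous
    exact (b.continuous_normed.mul (by fun_prop)).integrable_of_hasCompactSupport
      b.hasCompactSupport_normed.mul_right
  have hb : Integrable (b.normed μ) μ :=
    b.continuous_normed.integrable_of_hasCompactSupport b.hasCompactSupport_normed
  refine LipschitzWith.of_dist_le_mul fun x y => ?_
  simp only [convolution_def, ContinuousLinearMap.lsmul_apply, smul_eq_mul]
  rw [dist_eq_norm, ← integral_sub (hint x) (hint y)]
  calc ‖∫ t, b.normed μ t * φ (x - t) - b.normed μ t * φ (y - t) ∂μ‖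
      ≤ ∫ t, b.normed μ t * (K * dist x y) ∂μ := by
        refine norm_integral_le_of_norm_le (hb.mul_const _) (Eventually.of_forall fun t => ?_)
        rw [← mul_sub, norm_mul, Real.norm_of_nonneg (b.nonneg_normed t), ← dist_eq_norm]
        refine mul_le_mul_of_nonneg_left ?_ (b.nonneg_normed t)
        exact (hφ.dist_le_mul _ _).trans_eq (by rw [dist_sub_right])
    _ = K * dist x y := by rw [integral_mul_const, b.integral_normed, one_mul]

lemma exists_contDiff_seq_tendsto_lineDeriv (μ : Measure E) [μ.IsAddHaarMeasure]
    (hφ : LipschitzWith K φ) (hc : HasCompactSupport φ)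
    (h0 : 0 ≤ φ) {O : Set E} (hO : IsOpen O) (hφO : tsupport φ ⊆ O) :
    ∃ (ψ : ℕ → E → ℝ) (S : Set E), IsCompact S ∧ S ⊆ O ∧
      (∀ n, ContDiff ℝ 1 (ψ n) ∧ LipschitzWith K (ψ n) ∧ 0 ≤ ψ n ∧ tsupport (ψ n) ⊆ S) ∧
      ∀ v, ∀ᵐ p ∂μ, Tendsto (fun n => lineDeriv ℝ (ψ n) p v) atTop (𝓝 (lineDeriv ℝ φ p v)) := by
  obtain ⟨δ, hδ, hδO⟩ := IsCompact.exists_cthickening_subset_open hc hO hφO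
  let b : ℕ → ContDiffBump (0 : E) := fun n =>
    ⟨δ / (n + 2) / 2, δ / (n + 2), by positivity, half_lt_self (by positivity)⟩
  have hδb : ∀ n, (b n).rOut ≤ δ := fun n =>
    div_le_self hδ.le (by linarith [n.cast_nonneg (α := ℝ)])
  refine ⟨fun n => (b n).normed μ ⋆[ContinuousLinearMap.lsmul ℝ ℝ, μ] φ,
    Metric.cthickening δ (tsupport φ), hc.cthickening, hδO, fun n => ⟨?_, ?_, ?_, ?_⟩, fun v => ?_⟩
  · exact (b n).hasCompactSupport_normed.contDiff_convolution_left _ (b n).contDiff_normed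
      hφ.continuous.locallyIntegrable
  · exact lipschitzWith_normed_convolution (b n) hφ
  · exact fun p => integral_nonneg fun t => mul_nonneg ((b n).nonneg_normed t) (h0 _)
  · refine closure_minimal ((support_convolution_subset _).trans ?_) Metric.isClosed_cthickening
    rintro _ ⟨x, hx, y, hy, rfl⟩
    rw [(b n).support_normed_eq, mem_ball_zero_iff] at hx
    refine Metric.mem_cthickening_of_dist_le _ y _ _ (subset_tsupport φ hy) ?_
    simpa only [dist_eq_norm, add_sub_cancel_right] using hx.le.trans (hδb n)
  · have hderiv : ∀ n p, lineDeriv ℝ ((b n).normed μ ⋆[ContinuousLinearMap.lsmul ℝ ℝ, μ] φ) p v =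
        ((b n).normed μ ⋆[ContinuousLinearMap.lsmul ℝ ℝ, μ] fun q => lineDeriv ℝ φ q v) p :=
      fun n p => lineDeriv_convolution hφ (b n).continuous_normed (b n).hasCompactSupport_normed v p
    have hrOut : Tendsto (fun n => (b n).rOut) atTop (𝓝 0) :=
      Tendsto.const_div_atTop
        (tendsto_atTop_add_const_right _ _ tendsto_natCast_atTop_atTop) _
    simp only [hderiv]
    exact ContDiffBump.ae_convolution_tendsto_right_of_locallyIntegrable (K := 2) hrOut
      (Eventually.of_forall fun n => (mul_div_cancel₀ _ two_ne_zero).ge)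
      (hφ.locallyIntegrable_lineDeriv v)

end Mollification

/-- `∂ₜa + ∂ₓb ≤ 0` on `O` in the sense of distributions, for points `p = (x, t)`. The test
functions are Lipschitz rather than `C¹`, so that they may be built from distances and ramps. -/
def HasNonposDivergenceOn (a b : ℝ × ℝ → ℝ) (O : Set (ℝ × ℝ)) : Prop :=
  ∀ (φ : ℝ × ℝ → ℝ) (K : ℝ≥0), LipschitzWith K φ → HasCompactSupport φ → tsupport φ ⊆ O → 0 ≤ φ →
    0 ≤ ∫ p, (a p * lineDeriv ℝ φ p (0, 1) + b p * lineDeriv ℝ φ p (1, 0))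

lemma hasNonposDivergenceOn_of_contDiff {a b : ℝ × ℝ → ℝ} {O : Set (ℝ × ℝ)} (hO : IsOpen O)
    (ha : Measurable a) (hb : Measurable b) {C : ℝ} (haC : ∀ p, |a p| ≤ C) (hbC : ∀ p, |b p| ≤ C)
    (h : ∀ φ : ℝ × ℝ → ℝ, ContDiff ℝ 1 φ → HasCompactSupport φ → tsupport φ ⊆ O → 0 ≤ φ →
      0 ≤ ∫ p, (a p * lineDeriv ℝ φ p (0, 1) + b p * lineDeriv ℝ φ p (1, 0))) :
    HasNonposDivergenceOn a b O := by
  intro φ K hφ hc hφO h0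
  obtain ⟨ψ, S, hS, hSO, hψ, hlim⟩ :=
    exists_contDiff_seq_tendsto_lineDeriv volume hφ hc h0 hO hφO
  have hψS : ∀ n v, ∀ p ∉ S, lineDeriv ℝ (ψ n) p v = 0 := fun n v p hp =>
    lineDeriv_eq_zero_of_nonneg (hψ n).2.2.1
      (image_eq_zero_of_notMem_tsupport fun hp' => hp ((hψ n).2.2.2 hp')) v
  have hbound : ∀ {f : ℝ × ℝ → ℝ} (_ : ∀ p, |f p| ≤ C) (n : ℕ) (v p : ℝ × ℝ),
      ‖f p * lineDeriv ℝ (ψ n) p v‖ ≤ C * (K * ‖v‖) := fun hf n v p => by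
    rw [norm_mul]
    exact mul_le_mul (hf p) (norm_lineDeriv_le_of_lipschitz ℝ (hψ n).2.1) (norm_nonneg _)
      ((abs_nonneg _).trans (hf p))
  have hmeas : ∀ n v, Measurable fun p => lineDeriv ℝ (ψ n) p v := fun n v =>
    measurable_lineDeriv (hψ n).2.1.continuous
  refine ge_of_tendsto' (tendsto_integral_of_dominated_convergence
    (S.indicator fun _ => C * (K * ‖((0, 1) : ℝ × ℝ)‖) + C * (K * ‖((1, 0) : ℝ × ℝ)‖))
    (fun n => ((ha.mul (hmeas n _)).add (hb.mul (hmeas n _))).aestronglyMeasurable)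
    ((integrable_indicator_iff hS.measurableSet).2 (integrableOn_const hS.measure_lt_top.ne))
    (fun n => Eventually.of_forall fun p => ?_) ?_) fun n =>
    h (ψ n) (hψ n).1 (hS.of_isClosed_subset (isClosed_tsupport _) (hψ n).2.2.2)
      ((hψ n).2.2.2.trans hSO) (hψ n).2.2.1
  · by_cases hp : p ∈ S
    · rw [indicator_of_mem hp]
      exact (norm_add_le _ _).trans (add_le_add (hbound haC n _ p) (hbound hbC n _ p))
    · simp [hψS n _ p hp, indicator_of_notMem hp]
  · filter_upwards [hlim (0, 1), hlim (1, 0)] with p ht hx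
    exact (ht.const_mul _).add (hx.const_mul _)

section SubtangentFunctions

variable {E : Type*} [PseudoMetricSpace E] {K K' : ℝ≥0} {U Φ : E → ℝ} {S S' : Set E} {p₀ : E}

/-- `Φ` touches `U` from below at `p₀` to first order, along points of `S`: the one-sided bound
in the definition of viscosity supersolutions, for test functions that need not be smooth. -/
def IsSubtangentWithin (U Φ : E → ℝ) (S : Set E) (p₀ : E) : Prop :=
  ∀ η > 0, ∀ᶠ p in 𝓝[S] p₀, U p₀ + (Φ p - Φ p₀) - η * dist p p₀ ≤ U p

lemma IsSubtangentWithin.union (h : IsSubtangentWithin U Φ S p₀)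
    (h' : IsSubtangentWithin U Φ S' p₀) : IsSubtangentWithin U Φ (S ∪ S') p₀ := fun η hη => by
  rw [nhdsWithin_union]
  exact eventually_sup.2 ⟨h η hη, h' η hη⟩

/-- Inside the ball of radius `ρ` the touching condition bounds the distance; outside it the steep
penalty beats the Lipschitz constants of `U` and `Φ`. -/
lemma dist_lt_of_pos_sub_penalty (hU : LipschitzWith K U) (hΦ : LipschitzWith K' Φ) {η ρ : ℝ}
    (hη : 0 < η) (hρ : 0 < ρ)
    (hball : ∀ p, dist p p₀ < ρ → U p₀ + (Φ p - Φ p₀) - η / 2 * dist p p₀ ≤ U p) {q : E}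
    (hq : 0 < η * ρ / 8 + U p₀ - Φ p₀ + Φ q - U q - η * dist q p₀ -
      2 * (K + K') * max (dist q p₀ - ρ / 2) 0) :
    dist q p₀ < ρ / 2 := by
  have hpen : 0 ≤ 2 * (K + K') * max (dist q p₀ - ρ / 2) 0 := by positivity
  rcases lt_or_ge (dist q p₀) ρ with hlt | hge
  · have := hball q hlt
    have : η * dist q p₀ < η * (ρ / 4) := by linarith
    linarith [lt_of_mul_lt_mul_left this hη.le]
  · have hUq := (abs_le.1 (Real.dist_eq (U q) _ ▸ hU.dist_le_mul q p₀)).1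
    have hΦq := (abs_le.1 (Real.dist_eq (Φ q) _ ▸ hΦ.dist_le_mul q p₀)).2
    have : 2 * (K + K') * (dist q p₀ / 2) ≤ 2 * (K + K') * max (dist q p₀ - ρ / 2) 0 :=
      mul_le_mul_of_nonneg_left (le_max_of_le_left (by linarith)) (by positivity)
    have : η * ρ ≤ η * dist q p₀ := mul_le_mul_of_nonneg_left hge hη.le
    have : 0 < η * ρ := mul_pos hη hρ
    linarith

/-- Subtracting `η * dist · p₀` makes `p₀` a strict local maximum of `Φ - U`; a steep penalty
beyond distance `ρ / 2` makes it global, and the test function is a superlevel truncation. -/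
lemma exists_lipschitzWith_truncation (hU : LipschitzWith K U) (hΦ : LipschitzWith K' Φ)
    (h : IsSubtangentWithin U Φ univ p₀) {η r : ℝ} (hη : 0 < η) (hr : 0 < r) :
    ∃ (χ : E → ℝ) (Kχ : ℝ≥0) (c : ℝ), LipschitzWith Kχ χ ∧ 0 ≤ χ ∧ 0 < χ p₀ ∧
      tsupport χ ⊆ Metric.closedBall p₀ r ∧
      ∀ p, 0 < χ p → χ =ᶠ[𝓝 p] fun q => c + Φ q - U q - η * dist q p₀ := by
  have hloc := h (η / 2) (half_pos hη)
  rw [nhdsWithin_univ] at hloc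
  obtain ⟨r', hr', hball⟩ := Metric.eventually_nhds_iff.1 hloc
  obtain ⟨ρ, hρ, hρr, hρr'⟩ : ∃ ρ > 0, ρ ≤ r ∧ ρ ≤ r' :=
    ⟨min r r', lt_min hr hr', min_le_left _ _, min_le_right _ _⟩
  set c := η * ρ / 8 + U p₀ - Φ p₀ with hc
  set g : E → ℝ := fun q => c + Φ q - U q - η * dist q p₀ with hg
  set Λ : ℝ := 2 * (K + K')
  set χ : E → ℝ := fun q => max (g q - Λ * max (dist q p₀ - ρ / 2) 0) 0 with hχ
  have hsmall : ∀ q, 0 < χ q → dist q p₀ < ρ / 2 ∧ 0 < g q := by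
    intro q hq
    have hpen : 0 ≤ Λ * max (dist q p₀ - ρ / 2) 0 := by positivity
    have hgq : 0 < g q - Λ * max (dist q p₀ - ρ / 2) 0 := by simpa [hχ] using hq
    exact ⟨dist_lt_of_pos_sub_penalty hU hΦ hη hρ (fun p hp => hball (hp.trans_le hρr')) hgq,
      by linarith⟩
  have hdist : LipschitzWith 1 fun q => dist q p₀ := LipschitzWith.dist_left p₀
  have hpen := ((hdist.sub (LipschitzWith.const (ρ / 2))).max_const 0)
  have hgL := (((LipschitzWith.const c).add hΦ).sub hU).sub ((lipschitzWith_smul η).comp hdist)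
  have hgcont : Continuous g := hgL.continuous
  refine ⟨χ, _, c, (hgL.sub ((lipschitzWith_smul Λ).comp hpen)).max_const 0,
    fun _ => le_max_right _ _, ?_, ?_, fun p hp => ?_⟩
  · have : max (-(ρ / 2)) 0 = 0 := max_eq_right (by linarith)
    simp only [hχ, hg, hc, dist_self, zero_sub, this]
    exact lt_max_of_lt_left (by linarith [mul_pos hη hρ])
  · refine closure_minimal (fun q hq => ?_) Metric.isClosed_closedBall
    have := (hsmall q (lt_of_le_of_ne (le_max_right _ _) (Ne.symm hq))).1
    exact Metric.mem_closedBall.2 (by linarith)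
  · filter_upwards [hdist.continuous.continuousAt.eventually_lt_const (hsmall p hp).1,
      hgcont.continuousAt.eventually_const_lt (hsmall p hp).2] with q hq hgq
    simp only [hχ, max_eq_right (sub_nonpos.2 hq.le), mul_zero, sub_zero, max_eq_left hgq.le]
    rfl

lemma isSubtangentWithin_of_isLocalMinOn {E : Type*} [NormedAddCommGroup E] [NormedSpace ℝ E]
    {W G : E → ℝ} {S : Set E} {p₀ : E} {D : E →L[ℝ] ℝ} (hmin : IsLocalMinOn (W + G) S p₀)
    (hG : HasFDerivAt G D p₀) : IsSubtangentWithin W (-D) S p₀ := by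
  intro η hη
  filter_upwards [hmin, nhdsWithin_le_nhds (hG.isLittleO.def hη)] with p hp hGp
  simp only [Pi.add_apply, Pi.neg_apply, map_sub, ← dist_eq_norm] at hp hGp ⊢
  linarith [(abs_le.1 hGp).2]

end SubtangentFunctions

section EntropySupersolution

lemma measurable_realSign : Measurable Real.sign :=
  Measurable.ite measurableSet_Iio measurable_const
    (Measurable.ite measurableSet_Ioi measurable_const measurable_const)

lemma realSign_mul_self (w : ℝ) : Real.sign w * w = |w| := by
  rcases lt_trichotomy w 0 with h | h | h
  · rw [Real.sign_of_neg h, abs_of_neg h, neg_one_mul]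
  · simp [h]
  · rw [Real.sign_of_pos h, abs_of_pos h, one_mul]

lemma abs_realSign_le_one (w : ℝ) : |Real.sign w| ≤ 1 := by
  rcases Real.sign_apply_eq w with h | h | h <;> simp [h]

/-- `dU = u dx - F dt` almost everywhere on `O`, for points `(x, t)`; such a `U` is a potential
of the divergence-free field `(F, u)`. -/
def IsStreamFunctionOn (U u F : ℝ × ℝ → ℝ) (O : Set (ℝ × ℝ)) : Prop :=
  ∀ᵐ p, p ∈ O → HasFDerivAt U
    (u p • ContinuousLinearMap.fst ℝ ℝ ℝ - F p • ContinuousLinearMap.snd ℝ ℝ ℝ) p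

lemma entropy_integrand_neg {w F F₀ α L η e₁ e₂ : ℝ} (hF : |F - F₀| ≤ L * |w|) (hL : 0 ≤ L)
    (he₁ : |e₁| ≤ η) (he₂ : |e₂| ≤ η) (hη : 0 < η) (hηL : η * (1 + L) ≤ -(α + F₀) / 2) :
    |w| * (α + F - e₁) + Real.sign w * (F - F₀) * (-w - e₂) + η * (α + F - e₁) < 0 := by
  have hw := abs_nonneg w
  have hsplit : |w| * (α + F - e₁) + Real.sign w * (F - F₀) * (-w - e₂) =
      |w| * (α + F₀ - e₁) - Real.sign w * (F - F₀) * e₂ := by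
    rw [← realSign_mul_self w]; ring
  have hsign : |Real.sign w * (F - F₀) * e₂| ≤ L * |w| * η := by
    rw [abs_mul, abs_mul]
    refine mul_le_mul ?_ he₂ (abs_nonneg _) (by positivity)
    exact (mul_le_of_le_one_left (abs_nonneg _) (abs_realSign_le_one w)).trans hF
  have hflux : |w| * (α + F₀ - e₁) ≤ |w| * (α + F₀ + η) :=
    mul_le_mul_of_nonneg_left (by linarith [(abs_le.1 he₁).1]) hw
  have htime : η * (α + F - e₁) ≤ η * (α + F₀ + η + L * |w|) :=
    mul_le_mul_of_nonneg_left (by linarith [(abs_le.1 he₁).1, (abs_le.1 hF).2]) hη.le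
  have hηL0 : 0 ≤ η * L := by positivity
  have hdissipation : |w| * (α + F₀ + η + 2 * (η * L)) ≤ 0 :=
    mul_nonpos_of_nonneg_of_nonpos hw (by linarith)
  have hdecay : η * (α + F₀ + η) < 0 := mul_neg_of_pos_of_neg hη (by linarith)
  linarith [(abs_le.1 hsign).1]

lemma ae_comp_fst {P : ℝ → Prop} (h : ∀ᵐ x, P x) : ∀ᵐ p : ℝ × ℝ, P p.1 :=
  (Measure.quasiMeasurePreserving_fst (μ := volume) (ν := volume)).ae h

variable {K KP : ℝ≥0} {U u F : ℝ × ℝ → ℝ} {c P : ℝ → ℝ} {O : Set (ℝ × ℝ)} {p₀ : ℝ × ℝ}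
  {α F₀ L C : ℝ}

lemma abs_fderiv_dist_le (p : ℝ × ℝ) {v : ℝ × ℝ} (hv : ‖v‖ = 1) :
    |fderiv ℝ (fun q => dist q p₀) p v| ≤ 1 := by
  simpa [hv] using (fderiv ℝ (fun q => dist q p₀) p).le_of_opNorm_le
    (norm_fderiv_le_of_lipschitz ℝ (LipschitzWith.dist_left p₀)) v

/-- Adding a constant `δ` to `a` does not change the pairing, as `∫ ∂ₜχ = 0`. -/
lemma HasNonposDivergenceOn.not_ae_neg {a b χ : ℝ × ℝ → ℝ} {S : Set (ℝ × ℝ)} {Ca Cb : ℝ}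
    (hdiv : HasNonposDivergenceOn a b O) (hχ : LipschitzWith K χ) (hχ0 : 0 ≤ χ)
    (hp₀ : 0 < χ p₀) (hS : IsCompact S) (hχS : tsupport χ ⊆ S) (hSO : S ⊆ O)
    (ha : Measurable a) (hb : Measurable b) (haC : ∀ p ∈ S, |a p| ≤ Ca)
    (hbC : ∀ p ∈ S, |b p| ≤ Cb) (δ : ℝ) :
    ¬ ∀ᵐ p, 0 < χ p →
      (a p + δ) * lineDeriv ℝ χ p (0, 1) + b p * lineDeriv ℝ χ p (1, 0) < 0 := by
  intro hneg
  have hχc : HasCompactSupport χ := hS.of_isClosed_subset (isClosed_tsupport _) hχS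
  set g : ℝ × ℝ → ℝ := fun p => a p * lineDeriv ℝ χ p (0, 1) + b p * lineDeriv ℝ χ p (1, 0)
  have hg : Integrable g := (integrable_mul_lineDeriv hχ hχ0 hS hχS ha haC _).add
    (integrable_mul_lineDeriv hχ hχ0 hS hχS hb hbC _)
  have hδ : Integrable fun p => δ * lineDeriv ℝ χ p (0, 1) :=
    integrable_mul_lineDeriv hχ hχ0 hS hχS measurable_const (fun _ _ => le_rfl) _
  have hsum : 0 ≤ ∫ p, (g p + δ * lineDeriv ℝ χ p (0, 1)) := by
    rw [integral_add hg hδ, integral_const_mul, integral_lineDeriv_eq_zero hχ hχc, mul_zero,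
      add_zero]
    exact hdiv χ K hχ hχc (hχS.trans hSO) hχ0
  have hnonpos : 0 ≤ᵐ[volume] fun p => -(g p + δ * lineDeriv ℝ χ p (0, 1)) := by
    filter_upwards [hneg] with p hp
    rcases (hχ0 p).lt_or_eq with hpos | hzero
    · exact neg_nonneg.2 (by linarith [hp hpos])
    · simp only [Pi.zero_apply, g, lineDeriv_eq_zero_of_nonneg hχ0 hzero.symm, mul_zero, add_zero,
        neg_zero, le_refl]
  have hvanish := (integral_eq_zero_iff_of_nonneg_ae hnonpos (hg.add hδ).neg).1
    (le_antisymm (by rw [integral_neg]; linarith) (integral_nonneg_of_ae hnonpos))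
  have hnull : volume {p | 0 < χ p} = 0 := by
    refine measure_eq_zero_iff_ae_notMem.2 ?_
    filter_upwards [hneg, hvanish] with p hp hp0 hpos
    simp only [Pi.zero_apply, g] at hp0
    linarith [hp hpos]
  exact ((isOpen_lt continuous_const hχ.continuous).measure_pos volume ⟨p₀, hp₀⟩).ne' hnull

/-- Entropy dissipation against the profile `c`, tested with a truncation of `P + α t - U`:
if `α + F₀` were negative the integrand would be negative on the support of the truncation. -/
theorem nonneg_of_isSubtangentWithin_of_hasNonposDivergenceOn (hO : IsOpen O) (hp₀ : p₀ ∈ O)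
    (hU : LipschitzWith K U) (hUF : IsStreamFunctionOn U u F O)
    (hP : LipschitzWith KP P) (hPc : ∀ᵐ x, HasDerivAt P (c x) x)
    (hu : Measurable u) (hFm : Measurable F) (hc : Measurable c)
    (hC : ∀ p ∈ O, |u p - c p.1| ≤ C) (hL : 0 ≤ L) (hF : ∀ p ∈ O, |F p - F₀| ≤ L * |u p - c p.1|)
    (hdiv : HasNonposDivergenceOn (fun p => |u p - c p.1|)
      (fun p => Real.sign (u p - c p.1) * (F p - F₀)) O)
    (hsub : IsSubtangentWithin U (fun p => P p.1 + α * p.2) univ p₀) : 0 ≤ α + F₀ := by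
  by_contra! hneg
  obtain ⟨δ, hδ, hδL⟩ : ∃ δ > 0, δ * (1 + L) ≤ -(α + F₀) / 2 :=
    ⟨-(α + F₀) / 2 / (1 + L), div_pos (by linarith) (by positivity),
      (div_mul_cancel₀ _ (by positivity)).le⟩
  obtain ⟨r, hr, hrO⟩ := Metric.nhds_basis_closedBall.mem_iff.1 (hO.mem_nhds hp₀)
  have hΦ : LipschitzWith (KP * 1 + ‖α‖₊ * 1) fun p : ℝ × ℝ => P p.1 + α * p.2 :=
    (hP.comp LipschitzWith.prod_fst).add ((lipschitzWith_smul α).comp LipschitzWith.prod_snd)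
  obtain ⟨χ, Kχ, k, hχ, hχ0, hχp₀, hχr, hχeq⟩ := exists_lipschitzWith_truncation hU hΦ hsub hδ hr
  have hw : Measurable fun p => u p - c p.1 := hu.sub (hc.comp measurable_fst)
  refine hdiv.not_ae_neg (Ca := C) (Cb := L * C) hχ hχ0 hχp₀ (isCompact_closedBall _ _) hχr hrO
    hw.abs ((measurable_realSign.comp hw).mul (hFm.sub_const _))
    (fun p hp => by simpa only [abs_abs] using hC p (hrO hp)) (fun p hp => ?_) δ ?_
  · rw [abs_mul]
    exact (mul_le_of_le_one_left (abs_nonneg _) (abs_realSign_le_one _)).trans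
      ((hF p (hrO hp)).trans (mul_le_mul_of_nonneg_left (hC p (hrO hp)) hL))
  filter_upwards [hUF, ae_comp_fst hPc, (LipschitzWith.dist_left p₀).ae_differentiableAt]
    with p hUp hPp hNp hχp
  have hpO : p ∈ O := hrO (hχr (subset_tsupport χ hχp.ne'))
  have hΦp : HasFDerivAt (fun p : ℝ × ℝ => P p.1 + α * p.2) (c p.1 •
      ContinuousLinearMap.fst ℝ ℝ ℝ + α • ContinuousLinearMap.snd ℝ ℝ ℝ) p :=
    (hPp.comp_hasFDerivAt p hasFDerivAt_fst).add (hasFDerivAt_snd.const_mul α)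
  have hχp := (((hΦp.const_add k).sub (hUp hpO)).sub
    (hNp.hasFDerivAt.const_mul δ)).congr_of_eventuallyEq (hχeq p hχp)
  have hN : ∀ v : ℝ × ℝ, ‖v‖ = 1 → |δ * fderiv ℝ (fun q => dist q p₀) p v| ≤ δ := fun v hv => by
    rw [abs_mul, abs_of_pos hδ]
    exact mul_le_of_le_one_right hδ.le (abs_fderiv_dist_le p hv)
  rw [(hχp.hasLineDerivAt _).lineDeriv, (hχp.hasLineDerivAt _).lineDeriv, add_mul, add_right_comm]
  convert entropy_integrand_neg (hF p hpO) hL (hN (0, 1) (by simp)) (hN (1, 0) (by simp)) hδ hδL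
    using 4
  · simp
  · simp
  · simp

end EntropySupersolution

section Trapezoid

variable {c d h C : ℝ} {g : ℝ → ℝ}

/-- The piecewise linear ramp rising from `0` at `c` to `1` at `c + h`. -/
def ramp (c h z : ℝ) : ℝ := max 0 (min 1 ((z - c) / h))

lemma ramp_nonneg (c h z : ℝ) : 0 ≤ ramp c h z := le_max_left _ _

lemma ramp_le_one (c h z : ℝ) : ramp c h z ≤ 1 := max_le zero_le_one (min_le_left _ _)

lemma ramp_eq_zero {z : ℝ} (hh : 0 < h) (hz : z ≤ c) : ramp c h z = 0 :=
  max_eq_left ((min_le_right _ _).trans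
    (div_nonpos_of_nonpos_of_nonneg (sub_nonpos.2 hz) hh.le))

lemma ramp_eq_one {z : ℝ} (hh : 0 < h) (hz : c + h ≤ z) : ramp c h z = 1 := by
  have h1 : 1 ≤ (z - c) / h := by rw [le_div_iff₀ hh]; linarith
  rw [ramp, min_eq_left h1, max_eq_right zero_le_one]

lemma exists_lipschitzWith_ramp (c h : ℝ) : ∃ K, LipschitzWith K (ramp c h) := by
  have hsub : LipschitzWith 1 fun z : ℝ => z - c := by
    simpa using LipschitzWith.id.sub (LipschitzWith.const c)
  have hdiv : LipschitzWith (‖h⁻¹‖₊ * 1) fun z : ℝ => (z - c) / h := by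
    simpa only [Function.comp_def, smul_eq_mul, ← div_eq_inv_mul] using
      (lipschitzWith_smul h⁻¹).comp hsub
  exact ⟨_, (hdiv.const_min 1).const_max 0⟩

lemma ae_hasDerivAt_ramp (c : ℝ) (hh : 0 < h) :
    ∀ᵐ z, HasDerivAt (ramp c h) ((Ioc c (c + h)).indicator (fun _ => h⁻¹) z) z := by
  filter_upwards [Measure.ae_ne volume c, Measure.ae_ne volume (c + h)] with z hzc hzh
  rcases hzc.lt_or_gt with hzc | hzc
  · rw [indicator_of_notMem fun hz => hzc.not_gt hz.1]
    refine (hasDerivAt_const z (0 : ℝ)).congr_of_eventuallyEq ?_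
    filter_upwards [Iio_mem_nhds hzc] with y hy using ramp_eq_zero hh (le_of_lt hy)
  rcases hzh.lt_or_gt with hzh | hzh
  · rw [indicator_of_mem (show z ∈ Ioc c (c + h) from ⟨hzc, hzh.le⟩), ← one_div]
    refine (((hasDerivAt_id z).sub_const c).div_const h).congr_of_eventuallyEq ?_
    filter_upwards [Ioo_mem_nhds hzc hzh] with y hy
    have hy0 : 0 ≤ (y - c) / h := div_nonneg (sub_nonneg.2 hy.1.le) hh.le
    have hy1 : (y - c) / h ≤ 1 := by rw [div_le_one hh]; linarith [hy.2]
    rw [ramp, min_eq_right hy1, max_eq_right hy0, id]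
  · rw [indicator_of_notMem fun hz => hzh.not_ge hz.2]
    refine (hasDerivAt_const z (1 : ℝ)).congr_of_eventuallyEq ?_
    filter_upwards [Ioi_mem_nhds hzh] with y hy using ramp_eq_one hh (le_of_lt hy)

/-- The trapezoidal cut-off equal to `1` on `[c, d]`, to `0` outside `[c - h, d + h]`, and affine
in between. -/
def trapezoid (c d h z : ℝ) : ℝ := ramp (c - h) h z - ramp d h z

lemma trapezoid_nonneg (hh : 0 < h) (hcd : c ≤ d) : 0 ≤ trapezoid c d h := fun z => by
  have : (z - d) / h ≤ (z - (c - h)) / h := by gcongr; linarith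
  exact sub_nonneg.2 (max_le_max le_rfl (min_le_min le_rfl this))

lemma trapezoid_le_one (c d h z : ℝ) : trapezoid c d h z ≤ 1 := by
  unfold trapezoid
  linarith [ramp_le_one (c - h) h z, ramp_nonneg d h z]

lemma abs_trapezoid_le_one (hh : 0 < h) (hcd : c ≤ d) (z : ℝ) : |trapezoid c d h z| ≤ 1 := by
  rw [abs_of_nonneg (trapezoid_nonneg hh hcd z)]
  exact trapezoid_le_one c d h z

lemma trapezoid_eq_zero {z : ℝ} (hh : 0 < h) (hcd : c ≤ d) (hz : z ∉ Icc (c - h) (d + h)) :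
    trapezoid c d h z = 0 := by
  rcases lt_or_ge z (c - h) with hzc | hzc
  · rw [trapezoid, ramp_eq_zero hh hzc.le, ramp_eq_zero hh (by linarith), sub_zero]
  · have hzd : d + h < z := lt_of_not_ge fun hzd => hz ⟨hzc, hzd⟩
    rw [trapezoid, ramp_eq_one hh (by linarith), ramp_eq_one hh hzd.le, sub_self]

lemma trapezoid_eq_one {z : ℝ} (hh : 0 < h) (hz : z ∈ Icc c d) : trapezoid c d h z = 1 := by
  rw [trapezoid, ramp_eq_one hh (by linarith [hz.1]), ramp_eq_zero hh hz.2, sub_zero]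

lemma tsupport_trapezoid_subset (hh : 0 < h) (hcd : c ≤ d) :
    tsupport (trapezoid c d h) ⊆ Icc (c - h) (d + h) :=
  closure_minimal (fun _ hz => by_contra fun hz' => hz (trapezoid_eq_zero hh hcd hz'))
    isClosed_Icc

lemma exists_lipschitzWith_trapezoid (c d h : ℝ) : ∃ K, LipschitzWith K (trapezoid c d h) := by
  obtain ⟨K₁, h₁⟩ := exists_lipschitzWith_ramp (c - h) h
  obtain ⟨K₂, h₂⟩ := exists_lipschitzWith_ramp d h
  exact ⟨_, h₁.sub h₂⟩

lemma integral_deriv_trapezoid_mul (c d : ℝ) (hh : 0 < h) (hg : Measurable g)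
    (hC : ∀ z, |g z| ≤ C) :
    ∫ z, deriv (trapezoid c d h) z * g z =
      ∫ θ in (0 : ℝ)..1, (g (c - h * θ) - g (d + h * θ)) := by
  have hderiv : (fun z => deriv (trapezoid c d h) z * g z) =ᵐ[volume] fun z =>
      (Ioc (c - h) c).indicator (fun z => h⁻¹ * g z) z -
        (Ioc d (d + h)).indicator (fun z => h⁻¹ * g z) z := by
    filter_upwards [ae_hasDerivAt_ramp (c - h) hh, ae_hasDerivAt_ramp d hh] with z h₁ h₂
    have hsub : deriv (trapezoid c d h) z = _ := (h₁.sub h₂).deriv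
    rw [hsub, sub_add_cancel]
    by_cases m₁ : z ∈ Ioc (c - h) c <;> by_cases m₂ : z ∈ Ioc d (d + h) <;> simp [m₁, m₂]
  have hint : ∀ x y, IntegrableOn (fun z => h⁻¹ * g z) (Ioc x y) := fun x y =>
    (Measure.integrableOn_of_bounded (M := C) (by simp) hg.aestronglyMeasurable
      (Eventually.of_forall hC)).const_mul _
  have hscale : ∀ k x, IntervalIntegrable (fun θ => g (x + k * θ)) volume 0 1 := fun k x =>
    intervalIntegrable_iff.2 (Measure.integrableOn_of_bounded (M := C) (by simp [uIoc])
      (hg.comp (by fun_prop)).aestronglyMeasurable (Eventually.of_forall fun _ => hC _))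
  have hc : IntervalIntegrable (fun θ => g (c - h * θ)) volume 0 1 := by
    simpa only [neg_mul, ← sub_eq_add_neg] using hscale (-h) c
  rw [integral_congr_ae hderiv,
    integral_sub ((integrable_indicator_iff measurableSet_Ioc).2 (hint _ _))
      ((integrable_indicator_iff measurableSet_Ioc).2 (hint _ _)),
    integral_indicator measurableSet_Ioc, integral_indicator measurableSet_Ioc,
    ← intervalIntegral.integral_of_le (by linarith),
    ← intervalIntegral.integral_of_le (by linarith),
    intervalIntegral.integral_sub hc (hscale h d),
    intervalIntegral.integral_comp_sub_mul g hh.ne' c,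
    intervalIntegral.integral_comp_add_mul g hh.ne' d]
  simp

lemma abs_integral_deriv_trapezoid_mul_le (c d : ℝ) (hh : 0 < h) (hg : Measurable g)
    (hC : ∀ z, |g z| ≤ C) : |∫ z, deriv (trapezoid c d h) z * g z| ≤ C + C := by
  rw [integral_deriv_trapezoid_mul c d hh hg hC]
  have hbound : ∀ θ : ℝ, ‖g (c - h * θ) - g (d + h * θ)‖ ≤ C + C := fun θ =>
    (norm_sub_le _ _).trans (add_le_add (hC _) (hC _))
  simpa using intervalIntegral.norm_integral_le_of_norm_le_const (a := (0 : ℝ)) (b := 1)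
    fun θ _ => hbound θ

lemma tendsto_integral_deriv_trapezoid_mul {gl gr : ℝ} (hg : Measurable g) (hC : ∀ z, |g z| ≤ C)
    (hl : Tendsto g (𝓝[<] c) (𝓝 gl)) (hr : Tendsto g (𝓝[>] d) (𝓝 gr)) :
    Tendsto (fun h => ∫ z, deriv (trapezoid c d h) z * g z) (𝓝[>] 0) (𝓝 (gl - gr)) := by
  have hlim : Tendsto (fun h => ∫ θ in (0 : ℝ)..1, (g (c - h * θ) - g (d + h * θ))) (𝓝[>] 0)
      (𝓝 (∫ _ in (0 : ℝ)..1, (gl - gr))) := by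
    refine intervalIntegral.tendsto_integral_filter_of_dominated_convergence (fun _ => C + C)
      (Eventually.of_forall fun h =>
        ((hg.comp (by fun_prop)).sub (hg.comp (by fun_prop))).aestronglyMeasurable)
      (Eventually.of_forall fun h => Eventually.of_forall fun θ _ =>
        (norm_sub_le _ _).trans (add_le_add (hC _) (hC _)))
      intervalIntegrable_const (Eventually.of_forall fun θ hθ => ?_)
    rw [uIoc_of_le zero_le_one] at hθ
    have hmem : ∀ᶠ h : ℝ in 𝓝[>] 0, 0 < h * θ :=
      eventually_mem_nhdsWithin.mono fun h hh => mul_pos hh hθ.1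
    have hto : ∀ s : ℝ → ℝ, Continuous s → Tendsto s (𝓝[>] 0) (𝓝 (s 0)) := fun s hs =>
      (hs.tendsto 0).mono_left nhdsWithin_le_nhds
    refine (hl.comp (tendsto_nhdsWithin_iff.2 ⟨?_, ?_⟩)).sub
      (hr.comp (tendsto_nhdsWithin_iff.2 ⟨?_, ?_⟩))
    · simpa using hto (fun h => c - h * θ) (by fun_prop)
    · exact hmem.mono fun h hh => sub_lt_self c hh
    · simpa using hto (fun h => d + h * θ) (by fun_prop)
    · exact hmem.mono fun h hh => lt_add_of_pos_right d hh
  simp only [intervalIntegral.integral_const, sub_zero, one_smul] at hlim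
  refine hlim.congr' (eventually_mem_nhdsWithin.mono fun h hh => ?_)
  exact (integral_deriv_trapezoid_mul c d hh hg hC).symm

lemma tendsto_trapezoid (hcd : c ≤ d) {z : ℝ} (hz : z ≠ c) :
    Tendsto (fun h => trapezoid c d h z) (𝓝[>] 0) (𝓝 ((Ioc c d).indicator 1 z)) := by
  have hpos : ∀ᶠ h : ℝ in 𝓝[>] 0, 0 < h := eventually_mem_nhdsWithin
  by_cases hzcd : z ∈ Ioc c d
  · rw [indicator_of_mem hzcd]
    exact tendsto_const_nhds.congr' (hpos.mono fun h hh =>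
      (trapezoid_eq_one hh (Ioc_subset_Icc_self hzcd)).symm)
  · rw [indicator_of_notMem hzcd]
    have hnot : z ∉ Icc c d := fun hz' => hzcd ⟨hz'.1.lt_of_ne' hz, hz'.2⟩
    have hev : ∀ᶠ h in 𝓝 (0 : ℝ), z ∉ Icc (c - h) (d + h) := by
      simp only [mem_Icc, not_and_or, not_le] at hnot ⊢
      rcases hnot with hlt | hlt
      · exact (eventually_lt_nhds (sub_pos.2 hlt)).mono fun h hh => .inl (by linarith)
      · exact (eventually_lt_nhds (sub_pos.2 hlt)).mono fun h hh => .inr (by linarith)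
    refine tendsto_const_nhds.congr' ?_
    filter_upwards [hpos, hev.filter_mono nhdsWithin_le_nhds] with h hh hz'
      using (trapezoid_eq_zero hh hcd hz').symm

lemma tendsto_integral_trapezoid_mul (hcd : c ≤ d) (hg : AEStronglyMeasurable g)
    (hC : ∀ z, |g z| ≤ C) :
    Tendsto (fun h => ∫ z, trapezoid c d h z * g z) (𝓝[>] 0) (𝓝 (∫ z in c..d, g z)) := by
  rw [intervalIntegral.integral_of_le hcd, ← integral_indicator measurableSet_Ioc]
  have hsmall : ∀ᶠ h : ℝ in 𝓝[>] 0, h ∈ Ioo 0 1 := Ioo_mem_nhdsGT one_pos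
  refine tendsto_integral_filter_of_dominated_convergence
    ((Icc (c - 1) (d + 1)).indicator fun _ => C) (Eventually.of_forall fun h => ?_)
    (hsmall.mono fun h hh => Eventually.of_forall fun z => ?_)
    ((integrable_indicator_iff measurableSet_Icc).2 (integrableOn_const (by simp))) ?_
  · obtain ⟨K, hK⟩ := exists_lipschitzWith_trapezoid c d h
    exact hK.continuous.aestronglyMeasurable.mul hg
  · by_cases hz : z ∈ Icc (c - 1) (d + 1)
    · rw [indicator_of_mem hz, norm_mul]
      simpa using mul_le_mul (abs_trapezoid_le_one hh.1 hcd z) (hC z) (abs_nonneg _) zero_le_one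
    · rw [trapezoid_eq_zero hh.1 hcd fun hz' =>
        hz (Icc_subset_Icc (by linarith [hh.2]) (by linarith [hh.2]) hz')]
      simp [hz]
  · filter_upwards [Measure.ae_ne volume c] with z hz
    simpa [← indicator_mul_left] using (tendsto_trapezoid hcd hz).mul_const (g z)

lemma abs_integral_trapezoid_mul_le (hh : 0 < h) (hcd : c ≤ d) (hC : ∀ z, |g z| ≤ C) :
    |∫ z, trapezoid c d h z * g z| ≤ C * (d + h - (c - h)) := by
  have hoff : ∀ z, z ∉ Icc (c - h) (d + h) → trapezoid c d h z * g z = 0 := fun z hz => by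
    rw [trapezoid_eq_zero hh hcd hz, zero_mul]
  rw [← setIntegral_eq_integral_of_forall_compl_eq_zero hoff,
    ← Real.volume_real_Icc_of_le (show c - h ≤ d + h by linarith), ← Real.norm_eq_abs]
  refine norm_setIntegral_le_of_norm_le_const measure_Icc_lt_top fun z _ => ?_
  simpa using mul_le_mul (abs_trapezoid_le_one hh hcd z) (hC z) (abs_nonneg _) zero_le_one

end Trapezoid

section Trace

variable {C : ℝ} {a b : ℝ × ℝ → ℝ}

lemma lipschitzWith_fst_mul_snd {f g : ℝ → ℝ} {Kf Kg : ℝ≥0} (hf : LipschitzWith Kf f)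
    (hg : LipschitzWith Kg g) (hf1 : ∀ z, |f z| ≤ 1) (hg1 : ∀ z, |g z| ≤ 1) :
    LipschitzWith (Kf + Kg) fun p : ℝ × ℝ => f p.1 * g p.2 := by
  refine LipschitzWith.of_dist_le_mul fun p q => ?_
  have hfpq : |f p.1 - f q.1| ≤ Kf * dist p q :=
    (hf.dist_le_mul p.1 q.1).trans (mul_le_mul_of_nonneg_left (le_max_left _ _) Kf.2)
  have hgpq : |g p.2 - g q.2| ≤ Kg * dist p q :=
    (hg.dist_le_mul p.2 q.2).trans (mul_le_mul_of_nonneg_left (le_max_right _ _) Kg.2)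
  calc dist (f p.1 * g p.2) (f q.1 * g q.2)
      = |(f p.1 - f q.1) * g p.2 + f q.1 * (g p.2 - g q.2)| := by rw [Real.dist_eq]; ring_nf
    _ ≤ |f p.1 - f q.1| * |g p.2| + |f q.1| * |g p.2 - g q.2| := by
        simpa only [abs_mul] using abs_add_le ((f p.1 - f q.1) * g p.2) (f q.1 * (g p.2 - g q.2))
    _ ≤ |f p.1 - f q.1| * 1 + 1 * |g p.2 - g q.2| := by gcongr <;> simp only [hf1, hg1]
    _ ≤ (Kf + Kg : ℝ≥0) * dist p q := by push_cast; linarith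

lemma HasNonposDivergenceOn.integral_test_mul_nonneg
    (hdiv : HasNonposDivergenceOn a b {p | 0 < p.2}) (ha : Measurable a) (hb : Measurable b)
    (haC : ∀ p, |a p| ≤ C) (hbC : ∀ p, |b p| ≤ C) {χ τ : ℝ → ℝ} {Kχ Kτ : ℝ≥0}
    (hχ : LipschitzWith Kχ χ) (hχ0 : 0 ≤ χ) (hχ1 : ∀ z, |χ z| ≤ 1) (hχc : HasCompactSupport χ)
    (hτ : LipschitzWith Kτ τ) (hτ0 : 0 ≤ τ) (hτ1 : ∀ z, |τ z| ≤ 1) (hτc : HasCompactSupport τ)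
    (hτpos : tsupport τ ⊆ Ioi 0) :
    0 ≤ (∫ t, deriv τ t * ∫ x, χ x * a (x, t)) + ∫ t, τ t * ∫ x, deriv χ x * b (x, t) := by
  set φ : ℝ × ℝ → ℝ := fun p => χ p.1 * τ p.2
  have hφ : LipschitzWith (Kχ + Kτ) φ := lipschitzWith_fst_mul_snd hχ hτ hχ1 hτ1
  have hφ0 : 0 ≤ φ := fun p => mul_nonneg (hχ0 _) (hτ0 _)
  have hS : IsCompact (tsupport χ ×ˢ tsupport τ) := hχc.prod hτc
  have hsub : tsupport φ ⊆ tsupport χ ×ˢ tsupport τ :=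
    closure_minimal (fun p hp => ⟨subset_tsupport _ (left_ne_zero_of_mul hp),
      subset_tsupport _ (right_ne_zero_of_mul hp)⟩) hS.isClosed
  have hint : ∀ {g : ℝ × ℝ → ℝ}, Measurable g → (∀ p, |g p| ≤ C) → ∀ v : ℝ × ℝ,
      Integrable fun p => g p * lineDeriv ℝ φ p v := fun hg hgC v =>
    integrable_mul_lineDeriv hφ hφ0 hS hsub hg (fun p _ => hgC p) v
  have hdt : ∀ p, lineDeriv ℝ φ p (0, 1) = χ p.1 * deriv τ p.2 := fun p => by
    simp only [φ, lineDeriv_zero_one, deriv_const_mul_field]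
  have hdx : ∀ p, lineDeriv ℝ φ p (1, 0) = deriv χ p.1 * τ p.2 := fun p => by
    simp only [φ, lineDeriv_one_zero, deriv_mul_const_field]
  have key := hdiv φ _ hφ (hS.of_isClosed_subset (isClosed_tsupport φ) hsub)
    (fun p hp => hτpos (hsub hp).2) hφ0
  rw [integral_add (hint ha haC _) (hint hb hbC _), Measure.volume_eq_prod,
    integral_prod_symm _ (hint ha haC _), integral_prod_symm _ (hint hb hbC _)] at key
  have hswap : ∀ q r s : ℝ, q * (r * s) = s * (r * q) := fun q r s => by ring
  simpa only [hdt, hdx, ← integral_const_mul, hswap _ (χ _), hswap _ (deriv χ _)] using key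

lemma measurable_integral_mul_left (ha : Measurable a) {χ : ℝ → ℝ} (hχ : Measurable χ) :
    Measurable fun t => ∫ x, χ x * a (x, t) :=
  ((hχ.comp measurable_fst).mul ha).stronglyMeasurable.integral_prod_left'.measurable

lemma integrable_deriv_of_lipschitzWith {τ : ℝ → ℝ} {K : ℝ≥0} (hτ : LipschitzWith K τ)
    (hτc : HasCompactSupport τ) : Integrable (deriv τ) := by
  rw [← integrableOn_iff_integrable_of_support_subset (support_deriv_subset (f := τ))]
  exact Measure.integrableOn_of_bounded (M := K) hτc.measure_lt_top.ne
    (measurable_deriv τ).aestronglyMeasurable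
    (Eventually.of_forall fun _ => norm_deriv_le_of_lipschitz hτ)

lemma tendsto_integral_deriv_mul_integral_trapezoid_mul (ha : Measurable a)
    (haC : ∀ p, |a p| ≤ C) {x₁ x₂ : ℝ} (hx : x₁ ≤ x₂) {τ : ℝ → ℝ} {Kτ : ℝ≥0}
    (hτ : LipschitzWith Kτ τ) (hτc : HasCompactSupport τ) :
    Tendsto (fun h => ∫ t, deriv τ t * ∫ x, trapezoid x₁ x₂ h x * a (x, t)) (𝓝[>] 0)
      (𝓝 (∫ t, deriv τ t * ∫ x in x₁..x₂, a (x, t))) := by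
  refine tendsto_integral_filter_of_dominated_convergence
    (fun t => |deriv τ t| * (C * (x₂ + 1 - (x₁ - 1)))) (Eventually.of_forall fun h => ?_)
    (Eventually.mono (Ioo_mem_nhdsGT one_pos) fun h hh => Eventually.of_forall fun t => ?_)
    ((integrable_deriv_of_lipschitzWith hτ hτc).abs.mul_const _)
    (Eventually.of_forall fun t => ?_)
  · obtain ⟨K, hK⟩ := exists_lipschitzWith_trapezoid x₁ x₂ h
    exact ((measurable_deriv τ).mul
      (measurable_integral_mul_left ha hK.continuous.measurable)).aestronglyMeasurable
  · rw [norm_mul]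
    refine mul_le_mul_of_nonneg_left ?_ (abs_nonneg _)
    refine (abs_integral_trapezoid_mul_le hh.1 hx fun x => haC (x, t)).trans ?_
    exact mul_le_mul_of_nonneg_left (by linarith [hh.2]) ((abs_nonneg _).trans (haC 0))
  · exact (tendsto_integral_trapezoid_mul hx (ha.comp (by fun_prop)).aestronglyMeasurable
      fun x => haC (x, t)).const_mul _

lemma tendsto_integral_mul_integral_deriv_trapezoid_mul (hb : Measurable b)
    (hbC : ∀ p, |b p| ≤ C) {x₁ x₂ : ℝ} {bl br : ℝ → ℝ}
    (hbl : ∀ t, 0 < t → Tendsto (fun x => b (x, t)) (𝓝[<] x₁) (𝓝 (bl t)))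
    (hbr : ∀ t, 0 < t → Tendsto (fun x => b (x, t)) (𝓝[>] x₂) (𝓝 (br t)))
    {τ : ℝ → ℝ} (hτ : Continuous τ) (hτc : HasCompactSupport τ) (hτpos : tsupport τ ⊆ Ioi 0) :
    Tendsto (fun h => ∫ t, τ t * ∫ x, deriv (trapezoid x₁ x₂ h) x * b (x, t)) (𝓝[>] 0)
      (𝓝 (∫ t, τ t * (bl t - br t))) := by
  have hslice : ∀ t, Measurable fun x => b (x, t) := fun t => hb.comp (by fun_prop)
  refine tendsto_integral_filter_of_dominated_convergence
    (fun t => |τ t| * (C + C)) (Eventually.of_forall fun h => ?_)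
    (Eventually.mono self_mem_nhdsWithin fun h hh => Eventually.of_forall fun t => ?_)
    ((hτ.integrable_of_hasCompactSupport hτc).abs.mul_const _)
    (Eventually.of_forall fun t => ?_)
  · exact (hτ.measurable.mul
      (measurable_integral_mul_left hb (measurable_deriv _))).aestronglyMeasurable
  · rw [norm_mul]
    exact mul_le_mul_of_nonneg_left
      (abs_integral_deriv_trapezoid_mul_le x₁ x₂ hh (hslice t) fun x => hbC (x, t))
      (abs_nonneg _)
  · rcases le_or_gt t 0 with ht | ht
    · have hτt : τ t = 0 := image_eq_zero_of_notMem_tsupport fun h => (hτpos h).not_ge ht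
      simp [hτt]
    · exact (tendsto_integral_deriv_trapezoid_mul (hslice t) (fun x => hbC (x, t))
        (hbl t ht) (hbr t ht)).const_mul _

lemma HasNonposDivergenceOn.integral_strip_nonneg
    (hdiv : HasNonposDivergenceOn a b {p | 0 < p.2}) (ha : Measurable a) (hb : Measurable b)
    (haC : ∀ p, |a p| ≤ C) (hbC : ∀ p, |b p| ≤ C) {x₁ x₂ : ℝ} (hx : x₁ ≤ x₂) {bl br : ℝ → ℝ}
    (hbl : ∀ t, 0 < t → Tendsto (fun x => b (x, t)) (𝓝[<] x₁) (𝓝 (bl t)))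
    (hbr : ∀ t, 0 < t → Tendsto (fun x => b (x, t)) (𝓝[>] x₂) (𝓝 (br t)))
    {τ : ℝ → ℝ} {Kτ : ℝ≥0} (hτ : LipschitzWith Kτ τ) (hτ0 : 0 ≤ τ) (hτ1 : ∀ z, |τ z| ≤ 1)
    (hτc : HasCompactSupport τ) (hτpos : tsupport τ ⊆ Ioi 0) :
    0 ≤ (∫ t, deriv τ t * ∫ x in x₁..x₂, a (x, t)) + ∫ t, τ t * (bl t - br t) := by
  refine ge_of_tendsto ((tendsto_integral_deriv_mul_integral_trapezoid_mul ha haC hx hτ hτc).add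
    (tendsto_integral_mul_integral_deriv_trapezoid_mul hb hbC hbl hbr hτ.continuous hτc hτpos))
    (Eventually.mono self_mem_nhdsWithin fun h hh => ?_)
  obtain ⟨K, hK⟩ := exists_lipschitzWith_trapezoid x₁ x₂ h
  exact hdiv.integral_test_mul_nonneg ha hb haC hbC hK (trapezoid_nonneg hh hx)
    (abs_trapezoid_le_one hh hx) (isCompact_Icc.of_isClosed_subset (isClosed_tsupport _)
      (tsupport_trapezoid_subset hh hx)) hτ hτ0 hτ1 hτc hτpos

lemma aestronglyMeasurable_of_tendsto_slice (hb : Measurable b) {l : Filter ℝ} [l.NeBot]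
    [l.IsCountablyGenerated] {g : ℝ → ℝ}
    (h : ∀ t, 0 < t → Tendsto (fun x => b (x, t)) l (𝓝 (g t))) :
    AEStronglyMeasurable g (volume.restrict (Ioi 0)) :=
  aestronglyMeasurable_of_tendsto_ae l (f := fun x t => b (x, t))
    (fun _ => (hb.comp (by fun_prop)).aestronglyMeasurable)
    ((ae_restrict_iff' measurableSet_Ioi).2 (Eventually.of_forall h))

lemma abs_indicator_Ioi_le {l : Filter ℝ} [l.NeBot] (hbC : ∀ p, |b p| ≤ C) {g : ℝ → ℝ}
    (h : ∀ t, 0 < t → Tendsto (fun x => b (x, t)) l (𝓝 (g t))) (t : ℝ) :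
    |(Ioi 0).indicator g t| ≤ C := by
  by_cases ht : t ∈ Ioi (0 : ℝ)
  · rw [indicator_of_mem ht]
    exact le_of_tendsto (h t ht).abs (Eventually.of_forall fun x => hbC (x, t))
  · simpa [ht] using (abs_nonneg _).trans (hbC 0)

theorem HasNonposDivergenceOn.rectangle_nonneg
    (hdiv : HasNonposDivergenceOn a b {p | 0 < p.2}) (ha : Measurable a) (hb : Measurable b)
    (haC : ∀ p, |a p| ≤ C) (hbC : ∀ p, |b p| ≤ C) {x₁ x₂ : ℝ} (hx : x₁ ≤ x₂) {bl br : ℝ → ℝ}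
    (hbl : ∀ t, 0 < t → Tendsto (fun x => b (x, t)) (𝓝[<] x₁) (𝓝 (bl t)))
    (hbr : ∀ t, 0 < t → Tendsto (fun x => b (x, t)) (𝓝[>] x₂) (𝓝 (br t)))
    (hcont : ∀ t, 0 < t → ContinuousAt (fun t => ∫ x in x₁..x₂, a (x, t)) t)
    {t₁ t₂ : ℝ} (ht₁ : 0 < t₁) (ht : t₁ ≤ t₂) :
    0 ≤ ((∫ x in x₁..x₂, a (x, t₁)) - ∫ x in x₁..x₂, a (x, t₂)) +
      ∫ t in t₁..t₂, (bl t - br t) := by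
  set A : ℝ → ℝ := fun t => ∫ x in x₁..x₂, a (x, t)
  set G : ℝ → ℝ := fun t => (Ioi 0).indicator bl t - (Ioi 0).indicator br t
  have hA : Measurable A := by
    simp only [A, intervalIntegral.integral_of_le hx]
    exact ha.stronglyMeasurable.integral_prod_left'.measurable
  have hAC : ∀ t, |A t| ≤ C * |x₂ - x₁| := fun t =>
    intervalIntegral.norm_integral_le_of_norm_le_const (f := fun x => a (x, t))
      fun x _ => haC (x, t)
  have hG : AEStronglyMeasurable G :=
    ((aestronglyMeasurable_indicator_iff measurableSet_Ioi).2
      (aestronglyMeasurable_of_tendsto_slice hb hbl)).sub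
    ((aestronglyMeasurable_indicator_iff measurableSet_Ioi).2
      (aestronglyMeasurable_of_tendsto_slice hb hbr))
  have hGC : ∀ t, |G t| ≤ C + C := fun t => (abs_sub _ _).trans
    (add_le_add (abs_indicator_Ioi_le hbC hbl t) (abs_indicator_Ioi_le hbC hbr t))
  have hGint : ∫ t in t₁..t₂, G t = ∫ t in t₁..t₂, (bl t - br t) := by
    refine intervalIntegral.integral_congr fun t h => ?_
    have ht0 : t ∈ Ioi (0 : ℝ) := ht₁.trans_le (uIcc_of_le ht ▸ h).1
    simp only [G, indicator_of_mem ht0]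
  have hlim := (tendsto_integral_deriv_trapezoid_mul hA hAC
    ((hcont t₁ ht₁).mono_left nhdsWithin_le_nhds)
    ((hcont t₂ (ht₁.trans_le ht)).mono_left nhdsWithin_le_nhds)).add
    (tendsto_integral_trapezoid_mul ht hG hGC)
  rw [hGint] at hlim
  refine ge_of_tendsto hlim (Eventually.mono (Ioo_mem_nhdsGT ht₁) fun h hh => ?_)
  obtain ⟨K, hK⟩ := exists_lipschitzWith_trapezoid t₁ t₂ h
  have hsupp := tsupport_trapezoid_subset hh.1 ht
  refine hdiv.integral_strip_nonneg ha hb haC hbC hx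
    (fun t h => by rw [indicator_of_mem (mem_Ioi.2 h)]; exact hbl t h)
    (fun t h => by rw [indicator_of_mem (mem_Ioi.2 h)]; exact hbr t h)
    hK (trapezoid_nonneg hh.1 ht) (abs_trapezoid_le_one hh.1 ht)
    (isCompact_Icc.of_isClosed_subset (isClosed_tsupport _) hsupp) fun t h => ?_
  exact (sub_pos.2 hh.2).trans_le (hsupp h).1

lemma ae_nonneg_of_forall_intervalIntegral_nonneg {g : ℝ → ℝ} (hg : LocallyIntegrable g)
    (h : ∀ t₁ t₂, 0 < t₁ → t₁ ≤ t₂ → 0 ≤ ∫ t in t₁..t₂, g t) : ∀ᵐ t, 0 < t → 0 ≤ g t := by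
  filter_upwards [LocallyIntegrable.ae_hasDerivAt_integral hg] with t ht ht0
  have hslope : Tendsto (slope (fun x => ∫ s in t..x, g s) t) (𝓝[>] t) (𝓝 (g t)) :=
    (ht t).tendsto_slope.mono_left (nhdsWithin_mono _ fun _ hz => ne_of_gt hz)
  refine ge_of_tendsto hslope (eventually_mem_nhdsWithin.mono fun x hx => ?_)
  rw [slope_def_field, intervalIntegral.integral_same, sub_zero]
  exact div_nonneg (h t x ht0 (le_of_lt hx)) (sub_nonneg.2 (le_of_lt hx))

theorem HasNonposDivergenceOn.ae_right_le_left
    (hdiv : HasNonposDivergenceOn a b {p | 0 < p.2}) (ha : Measurable a) (hb : Measurable b)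
    (haC : ∀ p, |a p| ≤ C) (hbC : ∀ p, |b p| ≤ C) {x : ℝ} {bl br : ℝ → ℝ}
    (hbl : ∀ t, 0 < t → Tendsto (fun x => b (x, t)) (𝓝[<] x) (𝓝 (bl t)))
    (hbr : ∀ t, 0 < t → Tendsto (fun x => b (x, t)) (𝓝[>] x) (𝓝 (br t))) :
    ∀ᵐ t, 0 < t → br t ≤ bl t := by
  have hind : ∀ {l : Filter ℝ} [l.NeBot] [l.IsCountablyGenerated] {g : ℝ → ℝ},
      (∀ t, 0 < t → Tendsto (fun x => b (x, t)) l (𝓝 (g t))) →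
        LocallyIntegrable ((Ioi 0).indicator g) := fun h =>
    ((locallyIntegrable_const (C : ℝ)).mono
      ((aestronglyMeasurable_indicator_iff measurableSet_Ioi).2
        (aestronglyMeasurable_of_tendsto_slice hb h))
      (Eventually.of_forall fun t => (abs_indicator_Ioi_le hbC h t).trans (le_abs_self C)))
  have hpos := ae_nonneg_of_forall_intervalIntegral_nonneg ((hind hbl).sub (hind hbr))
    fun t₁ t₂ ht₁ ht => ?_
  · filter_upwards [hpos] with t ht ht0
    simpa [ht0] using ht ht0
  · have hrect := hdiv.rectangle_nonneg ha hb haC hbC le_rfl hbl hbr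
      (fun t _ => by simp only [intervalIntegral.integral_same]; exact continuousAt_const) ht₁ ht
    simp only [intervalIntegral.integral_same, sub_zero, zero_add] at hrect
    refine hrect.trans_eq (intervalIntegral.integral_congr fun t h => ?_)
    have ht0 : t ∈ Ioi (0 : ℝ) := ht₁.trans_le (uIcc_of_le ht ▸ h).1
    simp only [Pi.sub_apply, indicator_of_mem ht0]

end Trace

section BoundedMeasurable

/-- Measurable functions bounded everywhere (not just almost everywhere): these are integrable on
intervals and stable under the operations from which entropy pairs are built. -/
structure IsBddMeasurable {α : Type*} [MeasurableSpace α] (g : α → ℝ) : Prop where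
  measurable : Measurable g
  bdd : ∃ C, ∀ p, |g p| ≤ C

namespace IsBddMeasurable

variable {α β : Type*} [MeasurableSpace α] [MeasurableSpace β] {g h : α → ℝ}

lemma exists_common_bound {h : β → ℝ} (hg : IsBddMeasurable g) (hh : IsBddMeasurable h) :
    ∃ C, (∀ p, |g p| ≤ C) ∧ ∀ p, |h p| ≤ C := by
  obtain ⟨Cg, hCg⟩ := hg.bdd
  obtain ⟨Ch, hCh⟩ := hh.bdd
  exact ⟨max Cg Ch, fun p => (hCg p).trans (le_max_left _ _),
    fun p => (hCh p).trans (le_max_right _ _)⟩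

lemma const (c : ℝ) : IsBddMeasurable fun _ : α => c :=
  ⟨measurable_const, |c|, fun _ => le_rfl⟩

lemma comp (hg : IsBddMeasurable g) {k : β → α} (hk : Measurable k) :
    IsBddMeasurable fun q => g (k q) :=
  ⟨hg.measurable.comp hk, hg.bdd.imp fun _ hC q => hC (k q)⟩

lemma continuous_comp {f : ℝ → ℝ} (hf : Continuous f) (hg : IsBddMeasurable g) :
    IsBddMeasurable fun p => f (g p) := by
  obtain ⟨M, hM⟩ := hg.bdd
  obtain ⟨C, hC⟩ := isCompact_Icc.exists_bound_of_continuousOn (hf.continuousOn (s := Icc (-M) M))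
  exact ⟨hf.measurable.comp hg.measurable, C, fun p => hC _ (abs_le.1 (hM p))⟩

lemma sub (hg : IsBddMeasurable g) (hh : IsBddMeasurable h) :
    IsBddMeasurable fun p => g p - h p := by
  obtain ⟨C, hCg, hCh⟩ := hg.exists_common_bound hh
  exact ⟨hg.measurable.sub hh.measurable, C + C,
    fun p => (abs_sub _ _).trans (add_le_add (hCg p) (hCh p))⟩

lemma sign_mul (hg : Measurable g) (hh : IsBddMeasurable h) :
    IsBddMeasurable fun p => Real.sign (g p) * h p := by
  obtain ⟨C, hC⟩ := hh.bdd
  refine ⟨(measurable_realSign.comp hg).mul hh.measurable, C, fun p => ?_⟩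
  rw [abs_mul]
  exact (mul_le_of_le_one_left (abs_nonneg _) (abs_realSign_le_one _)).trans (hC p)

lemma ite {P : α → Prop} [DecidablePred P] (hP : MeasurableSet {p | P p})
    (hg : IsBddMeasurable g) (hh : IsBddMeasurable h) :
    IsBddMeasurable fun p => if P p then g p else h p := by
  obtain ⟨C, hCg, hCh⟩ := hg.exists_common_bound hh
  refine ⟨hg.measurable.ite hP hh.measurable, C, fun p => ?_⟩
  split_ifs
  · exact hCg p
  · exact hCh p

lemma locallyIntegrable {g : ℝ → ℝ} (hg : IsBddMeasurable g) : LocallyIntegrable g := by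
  obtain ⟨C, hC⟩ := hg.bdd
  exact (locallyIntegrable_const C).mono hg.measurable.aestronglyMeasurable
    (Eventually.of_forall fun x => (hC x).trans (le_abs_self C))

lemma intervalIntegrable {g : ℝ → ℝ} (hg : IsBddMeasurable g) (x₁ x₂ : ℝ) :
    IntervalIntegrable g volume x₁ x₂ :=
  (hg.locallyIntegrable.integrableOn_isCompact isCompact_uIcc).intervalIntegrable

lemma hasNonposDivergenceOn {a b : ℝ × ℝ → ℝ} {O : Set (ℝ × ℝ)} (ha : IsBddMeasurable a)
    (hb : IsBddMeasurable b) (hO : IsOpen O)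
    (h : ∀ φ : ℝ × ℝ → ℝ, ContDiff ℝ 1 φ → HasCompactSupport φ → 0 ≤ φ → (∀ p ∉ O, φ p = 0) →
      0 ≤ ∫ p : ℝ × ℝ, (a p * deriv (fun s => φ (p.1, s)) p.2 +
        b p * deriv (fun y => φ (y, p.2)) p.1)) : HasNonposDivergenceOn a b O := by
  obtain ⟨C, haC, hbC⟩ := ha.exists_common_bound hb
  refine hasNonposDivergenceOn_of_contDiff hO ha.measurable hb.measurable haC hbC
    fun φ hφ hc hsupp hφ0 => ?_
  simp only [lineDeriv_zero_one, lineDeriv_one_zero]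
  exact h φ hφ hc hφ0 fun p hp => image_eq_zero_of_notMem_tsupport fun hps => hp (hsupp hps)

lemma hasNonposDivergenceOn_entropy {v : ℝ × ℝ → ℝ} {f : ℝ → ℝ} {k : ℝ} {O : Set (ℝ × ℝ)}
    (hv : IsBddMeasurable v) (hf : Continuous f) (hO : IsOpen O)
    (h : ∀ φ : ℝ × ℝ → ℝ, ContDiff ℝ 1 φ → HasCompactSupport φ → 0 ≤ φ → (∀ p ∉ O, φ p = 0) →
      0 ≤ ∫ p : ℝ × ℝ, (|v p - k| * deriv (fun s => φ (p.1, s)) p.2 +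
        Real.sign (v p - k) * (f (v p) - f k) * deriv (fun y => φ (y, p.2)) p.1)) :
    HasNonposDivergenceOn (fun p => |v p - k|) (fun p => Real.sign (v p - k) * (f (v p) - f k)) O :=
  have hw := hv.sub (.const k)
  (hw.continuous_comp continuous_abs).hasNonposDivergenceOn
    (.sign_mul hw.measurable ((hv.continuous_comp hf).sub (.const _))) hO h

end IsBddMeasurable

lemma isBddMeasurable_cAB (A B : ℝ) : IsBddMeasurable (cAB A B) :=
  (IsBddMeasurable.const A).ite measurableSet_Iic (.const B)

lemma IsBddMeasurable.dflux {fl fr : ℝ → ℝ} (hfl : Continuous fl) (hfr : Continuous fr)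
    {w : ℝ × ℝ → ℝ} (hw : IsBddMeasurable w) : IsBddMeasurable fun p => dflux fl fr p.1 (w p) :=
  (hw.continuous_comp hfl).ite (measurableSet_lt measurable_fst measurable_const)
    (hw.continuous_comp hfr)

lemma dflux_of_neg {fl fr : ℝ → ℝ} {x : ℝ} (hx : x < 0) : dflux fl fr x = fl :=
  funext fun _ => if_pos hx

lemma dflux_of_nonneg {fl fr : ℝ → ℝ} {x : ℝ} (hx : 0 ≤ x) : dflux fl fr x = fr :=
  funext fun _ => if_neg hx.not_gt

lemma continuous_sign_sub_mul {f : ℝ → ℝ} (hf : Continuous f) (k : ℝ) :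
    Continuous fun w => Real.sign (w - k) * (f w - f k) := by
  have hpiecewise : (fun w => Real.sign (w - k) * (f w - f k)) =
      fun w => if k ≤ w then f w - f k else -(f w - f k) := by
    funext w
    rcases lt_trichotomy w k with h | rfl | h
    · rw [if_neg h.not_ge, Real.sign_of_neg (by linarith), neg_one_mul]
    · simp only [sub_self, mul_zero, le_refl, if_true]
    · rw [if_pos h.le, Real.sign_of_pos (by linarith), one_mul]
  rw [hpiecewise]
  refine Continuous.if_le (by fun_prop) (by fun_prop) continuous_const continuous_id ?_
  rintro w rfl
  simp only [sub_self, neg_zero]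

end BoundedMeasurable

namespace ABSol

section Traces

variable {A B : ℝ} {fl fr u0 : ℝ → ℝ} (sol : ABSol fl fr A B u0)

lemma isBddMeasurable : IsBddMeasurable fun p : ℝ × ℝ => sol.u p.1 p.2 :=
  ⟨sol.meas, sol.bdd.imp fun _ hM p => hM p.1 p.2⟩

lemma isBddMeasurable_slice (t : ℝ) : IsBddMeasurable fun x => sol.u x t :=
  sol.isBddMeasurable.comp measurable_prodMk_right

lemma tendsto_intervalIntegral (x₁ x₂ : ℝ) {t₀ : ℝ} (ht₀ : 0 ≤ t₀) :
    Tendsto (fun t => ∫ x in x₁..x₂, sol.u x t) (𝓝[Ici 0] t₀)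
      (𝓝 (∫ x in x₁..x₂, sol.u x t₀)) := by
  set r := max |x₁| |x₂|
  have hsub : uIoc x₁ x₂ ⊆ Icc (-r) r := uIoc_subset_uIcc.trans
    (uIcc_subset_Icc (abs_le.1 (le_max_left _ _)) (abs_le.1 (le_max_right _ _)))
  rw [tendsto_iff_norm_sub_tendsto_zero]
  refine squeeze_zero (fun t => norm_nonneg _) (fun t => ?_) (sol.timeCont r t₀ ht₀)
  have hdiff : LocallyIntegrable fun x => sol.u x t - sol.u x t₀ :=
    ((sol.isBddMeasurable_slice t).sub (sol.isBddMeasurable_slice t₀)).locallyIntegrable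
  calc ‖(∫ x in x₁..x₂, sol.u x t) - ∫ x in x₁..x₂, sol.u x t₀‖
      = ‖∫ x in x₁..x₂, (sol.u x t - sol.u x t₀)‖ := by
        rw [intervalIntegral.integral_sub ((sol.isBddMeasurable_slice t).intervalIntegrable _ _)
          ((sol.isBddMeasurable_slice t₀).intervalIntegrable _ _)]
    _ ≤ ∫ x in uIoc x₁ x₂, ‖sol.u x t - sol.u x t₀‖ :=
        intervalIntegral.norm_integral_le_integral_norm_uIoc
    _ ≤ ∫ x in Icc (-r) r, |sol.u x t - sol.u x t₀| :=
        setIntegral_mono_set (hdiff.integrableOn_isCompact isCompact_Icc).norm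
          (Eventually.of_forall fun x => norm_nonneg _) hsub.eventuallyLE

/-- The factor `σ` makes the equation usable as a pair of inequalities. -/
lemma hasNonposDivergenceOn_const_mul (hfl : Continuous fl) (hfr : Continuous fr) (σ : ℝ) :
    HasNonposDivergenceOn (fun p => σ * sol.u p.1 p.2)
      (fun p => σ * dflux fl fr p.1 (sol.u p.1 p.2)) {p | 0 < p.2} := by
  refine (sol.isBddMeasurable.continuous_comp (continuous_const_mul σ)).hasNonposDivergenceOn
    ((sol.isBddMeasurable.dflux hfl hfr).continuous_comp (continuous_const_mul σ))
    (isOpen_lt continuous_const continuous_snd) fun φ hφ hc _ hφO => ?_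
  have hweak := sol.weak (fun x t => φ (x, t)) hφ hc fun x t ht => hφO (x, t) ht.not_gt
  simp only [mul_assoc, ← mul_add, integral_const_mul]
  rw [hweak, mul_zero]

lemma hasNonposDivergenceOn_entropy_right (hfr : Continuous fr) (k : ℝ) :
    HasNonposDivergenceOn (fun p => |sol.u p.1 p.2 - k|)
      (fun p => Real.sign (sol.u p.1 p.2 - k) * (fr (sol.u p.1 p.2) - fr k))
      {p | 0 < p.1 ∧ 0 < p.2} :=
  sol.isBddMeasurable.hasNonposDivergenceOn_entropy hfr
    ((isOpen_lt continuous_const continuous_fst).inter (isOpen_lt continuous_const continuous_snd))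
    fun φ hφ hc hφ0 hφO => sol.kruzkov_r k (fun x t => φ (x, t)) hφ hc (fun _ _ => hφ0 _)
      fun x t hxt => hφO (x, t) fun hp => hxt.elim hp.1.not_ge hp.2.not_ge

lemma hasNonposDivergenceOn_entropy_left (hfl : Continuous fl) (k : ℝ) :
    HasNonposDivergenceOn (fun p => |sol.u p.1 p.2 - k|)
      (fun p => Real.sign (sol.u p.1 p.2 - k) * (fl (sol.u p.1 p.2) - fl k))
      {p | p.1 < 0 ∧ 0 < p.2} :=
  sol.isBddMeasurable.hasNonposDivergenceOn_entropy hfl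
    ((isOpen_lt continuous_fst continuous_const).inter (isOpen_lt continuous_const continuous_snd))
    fun φ hφ hc hφ0 hφO => sol.kruzkov_l k (fun x t => φ (x, t)) hφ hc (fun _ _ => hφ0 _)
      fun x t hxt => hφO (x, t) fun hp => hxt.elim hp.1.not_ge hp.2.not_ge

lemma isBddMeasurable_interfaceEntropyFlux (hfl : Continuous fl) (hfr : Continuous fr) :
    IsBddMeasurable fun p : ℝ × ℝ => Real.sign (sol.u p.1 p.2 - cAB A B p.1) *
      (dflux fl fr p.1 (sol.u p.1 p.2) - dflux fl fr p.1 (cAB A B p.1)) :=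
  have hc : IsBddMeasurable fun p : ℝ × ℝ => cAB A B p.1 :=
    (isBddMeasurable_cAB A B).comp measurable_fst
  .sign_mul (sol.isBddMeasurable.sub hc).measurable
    ((sol.isBddMeasurable.dflux hfl hfr).sub (hc.dflux hfl hfr))

lemma hasNonposDivergenceOn_interfaceEntropy (hfl : Continuous fl) (hfr : Continuous fr) :
    HasNonposDivergenceOn (fun p => |sol.u p.1 p.2 - cAB A B p.1|)
      (fun p => Real.sign (sol.u p.1 p.2 - cAB A B p.1) *
        (dflux fl fr p.1 (sol.u p.1 p.2) - dflux fl fr p.1 (cAB A B p.1))) {p | 0 < p.2} :=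
  ((sol.isBddMeasurable.sub ((isBddMeasurable_cAB A B).comp measurable_fst)).continuous_comp
    continuous_abs).hasNonposDivergenceOn (sol.isBddMeasurable_interfaceEntropyFlux hfl hfr)
    (isOpen_lt continuous_const continuous_snd) fun φ hφ hc hφ0 hφO =>
      sol.interfaceEntropy (fun x t => φ (x, t)) hφ hc (fun _ _ => hφ0 _)
        fun x t ht => hφO (x, t) ht.not_gt

/-- The limit `f(x-, u(x-,t))` of the flux; at the interface it is computed with `fl`. -/
def leftFlux (x t : ℝ) : ℝ := if x ≤ 0 then fl (sol.um x t) else fr (sol.um x t)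

/-- The limit `u(x+,t)` as a function of the point `(x,t)`, extended by `0` to `t ≤ 0`, where
`sol.up` is unspecified, so that it is measurable on the whole plane. -/
def rightTrace (p : ℝ × ℝ) : ℝ := if 0 < p.2 then sol.up p.1 p.2 else 0

/-- The limit `f(x+, u(x+,t))` of the flux; at the interface it is computed with `fr`. -/
def rightFlux (p : ℝ × ℝ) : ℝ := dflux fl fr p.1 (sol.rightTrace p)

lemma tendsto_leftFlux (hfl : Continuous fl) (hfr : Continuous fr) (x : ℝ) {t : ℝ} (ht : 0 < t) :
    Tendsto (fun y => dflux fl fr y (sol.u y t)) (𝓝[<] x) (𝓝 (sol.leftFlux x t)) := by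
  unfold leftFlux
  split_ifs with hx
  · refine ((hfl.tendsto _).comp (sol.um_spec x t ht)).congr' ?_
    filter_upwards [self_mem_nhdsWithin] with y hy
    rw [dflux_of_neg (hy.trans_le hx), Function.comp_apply]
  · refine ((hfr.tendsto _).comp (sol.um_spec x t ht)).congr' ?_
    filter_upwards [nhdsWithin_le_nhds (Ioi_mem_nhds (not_le.1 hx))] with y hy
    rw [dflux_of_nonneg (le_of_lt hy), Function.comp_apply]

lemma tendsto_rightFlux (hfl : Continuous fl) (hfr : Continuous fr) (x : ℝ) {t : ℝ} (ht : 0 < t) :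
    Tendsto (fun y => dflux fl fr y (sol.u y t)) (𝓝[>] x) (𝓝 (sol.rightFlux (x, t))) := by
  unfold rightFlux rightTrace
  rw [if_pos ht]
  rcases lt_or_ge x 0 with hx | hx
  · rw [dflux_of_neg hx]
    refine ((hfl.tendsto _).comp (sol.up_spec x t ht)).congr' ?_
    filter_upwards [nhdsWithin_le_nhds (Iio_mem_nhds hx)] with y hy
    rw [dflux_of_neg hy, Function.comp_apply]
  · rw [dflux_of_nonneg hx]
    refine ((hfr.tendsto _).comp (sol.up_spec x t ht)).congr' ?_
    filter_upwards [self_mem_nhdsWithin] with y hy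
    rw [dflux_of_nonneg (hx.trans (le_of_lt hy)), Function.comp_apply]

lemma isBddMeasurable_rightTrace : IsBddMeasurable sol.rightTrace := by
  obtain ⟨M, hM⟩ := sol.bdd
  have hM0 : 0 ≤ M := (abs_nonneg _).trans (hM 0 0)
  have hpos : MeasurableSet {p : ℝ × ℝ | 0 < p.2} :=
    measurableSet_lt measurable_const measurable_snd
  obtain ⟨h, -, hh0, hh⟩ := exists_seq_strictAnti_tendsto (0 : ℝ)
  refine ⟨measurable_of_tendsto_metrizable
    (f := fun n (p : ℝ × ℝ) => if 0 < p.2 then sol.u (p.1 + h n) p.2 else 0) (fun n => ?_)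
    (tendsto_pi_nhds.2 fun p => ?_), M, fun p => ?_⟩
  · exact (sol.meas.comp ((measurable_fst.add_const (h n)).prodMk measurable_snd)).ite hpos
      measurable_const
  · by_cases ht : 0 < p.2
    · simp only [rightTrace, ht, if_true]
      refine (sol.up_spec p.1 p.2 ht).comp (tendsto_nhdsWithin_iff.2 ⟨?_, ?_⟩)
      · simpa only [add_zero] using hh.const_add p.1
      · exact Eventually.of_forall fun n => lt_add_of_pos_right _ (hh0 n)
    · simp only [rightTrace, ht, if_false, tendsto_const_nhds]
  · unfold rightTrace
    split_ifs with ht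
    · exact le_of_tendsto (sol.up_spec p.1 p.2 ht).abs (Eventually.of_forall fun y => hM y p.2)
    · rwa [abs_zero]

lemma isBddMeasurable_rightFlux (hfl : Continuous fl) (hfr : Continuous fr) :
    IsBddMeasurable sol.rightFlux :=
  sol.isBddMeasurable_rightTrace.dflux hfl hfr

lemma isBddMeasurable_rightFlux_slice (hfl : Continuous fl) (hfr : Continuous fr) (x : ℝ) :
    IsBddMeasurable fun t => sol.rightFlux (x, t) :=
  (sol.isBddMeasurable_rightFlux hfl hfr).comp measurable_prodMk_left

lemma ae_leftFlux_eq_rightFlux (hfl : Continuous fl) (hfr : Continuous fr) (x : ℝ) :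
    ∀ᵐ t, 0 < t → sol.leftFlux x t = sol.rightFlux (x, t) := by
  have hle (σ : ℝ) : ∀ᵐ t, 0 < t → σ * sol.rightFlux (x, t) ≤ σ * sol.leftFlux x t := by
    obtain ⟨C, haC, hbC⟩ := (sol.isBddMeasurable.continuous_comp
      (continuous_const_mul σ)).exists_common_bound
      ((sol.isBddMeasurable.dflux hfl hfr).continuous_comp (continuous_const_mul σ))
    exact (sol.hasNonposDivergenceOn_const_mul hfl hfr σ).ae_right_le_left
      (sol.isBddMeasurable.measurable.const_mul σ)
      ((sol.isBddMeasurable.dflux hfl hfr).measurable.const_mul σ) haC hbC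
      (fun t ht => (sol.tendsto_leftFlux hfl hfr x ht).const_mul σ)
      fun t ht => (sol.tendsto_rightFlux hfl hfr x ht).const_mul σ
  filter_upwards [hle 1, hle (-1)] with t h₁ h₂ ht
  linarith [h₁ ht, h₂ ht]

lemma integral_sub_integral_eq_of_pos (hfl : Continuous fl) (hfr : Continuous fr)
    {x₁ x₂ t₁ t₂ : ℝ} (hx : x₁ ≤ x₂) (ht₁ : 0 < t₁) (ht : t₁ ≤ t₂) :
    (∫ x in x₁..x₂, sol.u x t₂) - ∫ x in x₁..x₂, sol.u x t₁ =
      (∫ t in t₁..t₂, sol.rightFlux (x₁, t)) - ∫ t in t₁..t₂, sol.rightFlux (x₂, t) := by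
  have hflux : ∫ t in t₁..t₂, (sol.leftFlux x₁ t - sol.rightFlux (x₂, t)) =
      (∫ t in t₁..t₂, sol.rightFlux (x₁, t)) - ∫ t in t₁..t₂, sol.rightFlux (x₂, t) := by
    rw [← intervalIntegral.integral_sub
      ((sol.isBddMeasurable_rightFlux_slice hfl hfr x₁).intervalIntegrable _ _)
      ((sol.isBddMeasurable_rightFlux_slice hfl hfr x₂).intervalIntegrable _ _)]
    refine intervalIntegral.integral_congr_ae ?_
    filter_upwards [sol.ae_leftFlux_eq_rightFlux hfl hfr x₁] with t hflux ht'
    rw [hflux (ht₁.trans_le ((uIoc_of_le ht ▸ ht').1.le))]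
  have hineq (σ : ℝ) : 0 ≤ σ * ((∫ x in x₁..x₂, sol.u x t₁) - ∫ x in x₁..x₂, sol.u x t₂) +
      σ * ∫ t in t₁..t₂, (sol.leftFlux x₁ t - sol.rightFlux (x₂, t)) := by
    obtain ⟨C, haC, hbC⟩ := (sol.isBddMeasurable.continuous_comp
      (continuous_const_mul σ)).exists_common_bound
      ((sol.isBddMeasurable.dflux hfl hfr).continuous_comp (continuous_const_mul σ))
    have hrect := (sol.hasNonposDivergenceOn_const_mul hfl hfr σ).rectangle_nonneg
      (sol.isBddMeasurable.measurable.const_mul σ)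
      ((sol.isBddMeasurable.dflux hfl hfr).measurable.const_mul σ) haC hbC hx
      (fun t ht => (sol.tendsto_leftFlux hfl hfr x₁ ht).const_mul σ)
      (fun t ht => (sol.tendsto_rightFlux hfl hfr x₂ ht).const_mul σ)
      (fun t ht => by
        simp only [intervalIntegral.integral_const_mul]
        refine (((sol.tendsto_intervalIntegral x₁ x₂ ht.le).mono_left ?_).const_mul σ)
        exact (nhdsWithin_eq_nhds.2 (Ici_mem_nhds ht)).ge) ht₁ ht
    simpa only [← mul_sub, intervalIntegral.integral_const_mul] using hrect
  linarith [hineq 1, hineq (-1)]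

end Traces

end ABSol

section StreamFunction

variable {K : ℝ≥0} {U u F : ℝ × ℝ → ℝ} {O : Set (ℝ × ℝ)}

lemma ae_prod_of_ae_ae_snd {P : ℝ × ℝ → Prop} (hP : MeasurableSet {p | P p})
    (h : ∀ᵐ t, ∀ᵐ x, P (x, t)) : ∀ᵐ p, P p :=
  (Measure.ae_prod_iff_ae_ae hP).2 ((Measure.ae_ae_comm (p := fun x t => P (x, t)) hP).2 h)

lemma isStreamFunctionOn_of_ae_hasDerivAt (hU : LipschitzWith K U) (hu : Measurable u)
    (hF : Measurable F) (hO : MeasurableSet O)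
    (hUx : ∀ᵐ t, ∀ᵐ x, (x, t) ∈ O → HasDerivAt (fun y => U (y, t)) (u (x, t)) x)
    (hUt : ∀ᵐ x, ∀ᵐ t, (x, t) ∈ O → HasDerivAt (fun s => U (x, s)) (-F (x, t)) t) :
    IsStreamFunctionOn U u F O := by
  have hx : ∀ᵐ p, p ∈ O → lineDeriv ℝ U p (1, 0) = u p := by
    refine ae_prod_of_ae_ae_snd (hO.imp (measurableSet_eq_fun
      (measurable_lineDeriv hU.continuous) hu)) ?_
    filter_upwards [hUx] with t ht
    filter_upwards [ht] with x hx hmem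
    exact (lineDeriv_one_zero U (x, t)).trans (hx hmem).deriv
  have ht : ∀ᵐ p, p ∈ O → lineDeriv ℝ U p (0, 1) = -F p := by
    refine (Measure.ae_prod_iff_ae_ae (hO.imp (measurableSet_eq_fun
      (measurable_lineDeriv hU.continuous) hF.neg))).2 ?_
    filter_upwards [hUt] with x hx
    filter_upwards [hx] with t ht hmem
    exact (lineDeriv_zero_one U (x, t)).trans (ht hmem).deriv
  filter_upwards [hU.ae_differentiableAt, hx, ht] with p hp hpx hpt hmem
  refine hp.hasFDerivAt.congr_fderiv ?_
  rw [hp.lineDeriv_eq_fderiv] at hpx hpt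
  ext <;> simp [hpx hmem, hpt hmem]

end StreamFunction

namespace ABSol

section Interface

variable {A B : ℝ} {fl fr u0 : ℝ → ℝ} (sol : ABSol fl fr A B u0)

lemma ae_sign_mul_le_at_interface (hfl : Continuous fl) (hfr : Continuous fr) :
    ∀ᵐ t, 0 < t → Real.sign (sol.up 0 t - B) * (fr (sol.up 0 t) - fr B) ≤
      Real.sign (sol.um 0 t - A) * (fl (sol.um 0 t) - fl A) := by
  have ha : IsBddMeasurable fun p : ℝ × ℝ => |sol.u p.1 p.2 - cAB A B p.1| :=
    (sol.isBddMeasurable.sub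
      ((isBddMeasurable_cAB A B).comp measurable_fst)).continuous_comp continuous_abs
  have hb := sol.isBddMeasurable_interfaceEntropyFlux hfl hfr
  obtain ⟨C, haC, hbC⟩ := ha.exists_common_bound hb
  refine (sol.hasNonposDivergenceOn_interfaceEntropy hfl hfr).ae_right_le_left ha.measurable
    hb.measurable haC hbC (x := 0) (fun t ht => ?_) fun t ht => ?_
  · refine (((continuous_sign_sub_mul hfl A).tendsto _).comp (sol.um_spec 0 t ht)).congr' ?_
    filter_upwards [self_mem_nhdsWithin] with y (hy : y < 0)
    simp only [dflux_of_neg hy, cAB, if_pos hy.le, Function.comp_apply]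
  · refine (((continuous_sign_sub_mul hfr B).tendsto _).comp (sol.up_spec 0 t ht)).congr' ?_
    filter_upwards [self_mem_nhdsWithin] with y (hy : 0 < y)
    simp only [dflux_of_nonneg hy.le, cAB, if_neg hy.not_ge, Function.comp_apply]

/-- If the common flux were below `fl A = fr B`, then `A < u(0-,t)` and `u(0+,t) < B` by
monotonicity, contradicting the interface entropy inequality. -/
lemma ae_interface_flux (hfl : Continuous fl) (hfr : Continuous fr) (hflA : AntitoneOn fl (Iic A))
    (hfrB : MonotoneOn fr (Ici B)) (hAB : fl A = fr B) :
    ∀ᵐ t, 0 < t → fl (sol.um 0 t) = sol.rightFlux (0, t) ∧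
      fr (sol.up 0 t) = sol.rightFlux (0, t) ∧ fl A ≤ sol.rightFlux (0, t) := by
  filter_upwards [sol.ae_sign_mul_le_at_interface hfl hfr, sol.ae_leftFlux_eq_rightFlux hfl hfr 0]
    with t hentropy hflux ht
  have hright : sol.rightFlux (0, t) = fr (sol.up 0 t) := by
    simp only [rightFlux, rightTrace, dflux_of_nonneg le_rfl, ht, if_true]
  have hleft : fl (sol.um 0 t) = sol.rightFlux (0, t) := by
    rw [← hflux ht, leftFlux, if_pos le_rfl]
  refine ⟨hleft, hright.symm, ?_⟩
  by_contra! hlt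
  have hum : A < sol.um 0 t := by
    by_contra! h
    exact (hflA h self_mem_Iic h).not_gt (hleft ▸ hlt)
  have hup : sol.up 0 t < B := by
    by_contra! h
    exact (hfrB self_mem_Ici h h).not_gt (hAB ▸ hright ▸ hlt)
  have hineq := hentropy ht
  rw [Real.sign_of_pos (sub_pos.2 hum), Real.sign_of_neg (sub_neg.2 hup), hleft, ← hright]
    at hineq
  linarith

end Interface

section Potential

variable {A B : ℝ} {fl fr u0 : ℝ → ℝ} (sol : ABSol fl fr A B u0)

/-- The potential `U` of the solution, `U_x = u` and `U_t = -f(x,u)`, normalised by `U(0,0) = 0`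
and constant in `t` for `t ≤ 0`. -/
def potential (p : ℝ × ℝ) : ℝ :=
  (∫ y in (0 : ℝ)..p.1, sol.u y (max p.2 0)) - ∫ s in (0 : ℝ)..max p.2 0, sol.rightFlux (0, s)

lemma integral_sub_integral_eq (hfl : Continuous fl) (hfr : Continuous fr) {x₁ x₂ t₁ t₂ : ℝ}
    (hx : x₁ ≤ x₂) (ht₁ : 0 ≤ t₁) (ht : t₁ ≤ t₂) :
    (∫ x in x₁..x₂, sol.u x t₂) - ∫ x in x₁..x₂, sol.u x t₁ =
      (∫ t in t₁..t₂, sol.rightFlux (x₁, t)) - ∫ t in t₁..t₂, sol.rightFlux (x₂, t) := by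
  rcases ht.eq_or_lt with rfl | ht
  · simp only [sub_self, intervalIntegral.integral_same]
  have hflux (x : ℝ) : Tendsto (fun s => ∫ t in s..t₂, sol.rightFlux (x, t)) (𝓝[>] t₁)
      (𝓝 (∫ t in t₁..t₂, sol.rightFlux (x, t))) := by
    have hcont := (intervalIntegral.continuous_primitive
      (sol.isBddMeasurable_rightFlux_slice hfl hfr x).intervalIntegrable t₂).neg
    simp only [intervalIntegral.integral_symm t₂]
    exact hcont.continuousWithinAt
  have hmass := (sol.tendsto_intervalIntegral x₁ x₂ ht₁).mono_left
    (nhdsWithin_mono _ (Ioi_subset_Ici_self.trans (Ici_subset_Ici.2 ht₁)))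
  refine tendsto_nhds_unique_of_eventuallyEq (hmass.const_sub _) ((hflux x₁).sub (hflux x₂)) ?_
  filter_upwards [Ioo_mem_nhdsGT ht] with s hs
  exact sol.integral_sub_integral_eq_of_pos hfl hfr hx (ht₁.trans_lt hs.1) hs.2.le

lemma potential_sub_potential_fst (x₁ x₂ t : ℝ) :
    sol.potential (x₂, t) - sol.potential (x₁, t) = ∫ x in x₁..x₂, sol.u x (max t 0) := by
  have hint := (sol.isBddMeasurable_slice (max t 0)).intervalIntegrable
  simp only [potential, sub_sub_sub_cancel_right]
  exact intervalIntegral.integral_interval_sub_left (hint _ _) (hint _ _)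

lemma potential_sub_potential_snd (hfl : Continuous fl) (hfr : Continuous fr) (x : ℝ) {t₁ t₂ : ℝ}
    (ht₁ : 0 ≤ t₁) (ht : t₁ ≤ t₂) :
    sol.potential (x, t₂) - sol.potential (x, t₁) = -∫ s in t₁..t₂, sol.rightFlux (x, s) := by
  have hflux := intervalIntegral.integral_interval_sub_left
    ((sol.isBddMeasurable_rightFlux_slice hfl hfr 0).intervalIntegrable 0 t₂)
    ((sol.isBddMeasurable_rightFlux_slice hfl hfr 0).intervalIntegrable 0 t₁)
  simp only [potential, max_eq_left ht₁, max_eq_left (ht₁.trans ht)]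
  rcases le_total 0 x with hx | hx
  · linarith [sol.integral_sub_integral_eq hfl hfr hx ht₁ ht]
  · rw [intervalIntegral.integral_symm x 0, intervalIntegral.integral_symm x 0]
    linarith [sol.integral_sub_integral_eq hfl hfr hx ht₁ ht]

lemma potential_max (x t : ℝ) : sol.potential (x, max t 0) = sol.potential (x, t) := by
  simp only [potential, max_assoc, max_self]

lemma exists_lipschitzWith_potential (hfl : Continuous fl) (hfr : Continuous fr) :
    ∃ K, LipschitzWith K sol.potential := by
  obtain ⟨C, huC, hfC⟩ :=
    sol.isBddMeasurable.exists_common_bound (sol.isBddMeasurable_rightFlux hfl hfr)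
  have hC : 0 ≤ C := (abs_nonneg _).trans (huC 0)
  have hspace (x y t : ℝ) : |sol.potential (x, t) - sol.potential (y, t)| ≤ C * |x - y| := by
    rw [potential_sub_potential_fst]
    exact intervalIntegral.norm_integral_le_of_norm_le_const
      (f := fun z => sol.u z (max t 0)) fun z _ => huC (z, max t 0)
  have htime (x s t : ℝ) : |sol.potential (x, s) - sol.potential (x, t)| ≤ C * |s - t| := by
    rw [← sol.potential_max x s, ← sol.potential_max x t]
    refine le_trans ?_ (mul_le_mul_of_nonneg_left (abs_max_sub_max_le_abs s t 0) hC)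
    wlog hts : max t 0 ≤ max s 0 generalizing s t
    · rw [abs_sub_comm, abs_sub_comm (max s 0)]
      exact this t s (le_of_not_ge hts)
    rw [sol.potential_sub_potential_snd hfl hfr x (le_max_right _ _) hts, abs_neg]
    exact intervalIntegral.norm_integral_le_of_norm_le_const
      (f := fun r => sol.rightFlux (x, r)) fun r _ => hfC (x, r)
  refine ⟨⟨C + C, add_nonneg hC hC⟩, LipschitzWith.of_dist_le_mul fun ⟨x, s⟩ ⟨y, t⟩ => ?_⟩
  calc |sol.potential (x, s) - sol.potential (y, t)|
      ≤ |sol.potential (x, s) - sol.potential (y, s)|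
        + |sol.potential (y, s) - sol.potential (y, t)| := abs_sub_le _ _ _
    _ ≤ C * dist (x, s) (y, t) + C * dist (x, s) (y, t) :=
        add_le_add ((hspace x y s).trans (mul_le_mul_of_nonneg_left (le_max_left _ _) hC))
          ((htime y s t).trans (mul_le_mul_of_nonneg_left (le_max_right _ _) hC))
    _ = (C + C) * dist (x, s) (y, t) := (add_mul _ _ _).symm

lemma hasDerivWithinAt_potential_Ici (x : ℝ) {t : ℝ} (ht : 0 < t) :
    HasDerivWithinAt (fun y => sol.potential (y, t)) (sol.up x t) (Ici x) x := by
  simp only [potential, max_eq_left ht.le]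
  exact (intervalIntegral.integral_hasDerivWithinAt_of_tendsto_ae_right
    ((sol.isBddMeasurable_slice t).intervalIntegrable 0 x) (t := Ioi x)
    ((sol.isBddMeasurable_slice t).measurable.stronglyMeasurable.stronglyMeasurableAtFilter)
    ((sol.up_spec x t ht).mono_left inf_le_left)).sub_const _

lemma hasDerivWithinAt_potential_Iic (x : ℝ) {t : ℝ} (ht : 0 < t) :
    HasDerivWithinAt (fun y => sol.potential (y, t)) (sol.um x t) (Iic x) x := by
  have hae : 𝓝[≤] x ⊓ ae volume ≤ 𝓝[<] x := by
    rw [← Iic_sdiff_right, sdiff_eq, nhdsWithin_inter']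
    exact inf_le_inf_left _ (le_principal_iff.2 (Measure.ae_ne volume x))
  simp only [potential, max_eq_left ht.le]
  exact (intervalIntegral.integral_hasDerivWithinAt_of_tendsto_ae_right
    ((sol.isBddMeasurable_slice t).intervalIntegrable 0 x) (t := Iic x)
    ((sol.isBddMeasurable_slice t).measurable.stronglyMeasurable.stronglyMeasurableAtFilter)
    ((sol.um_spec x t ht).mono_left hae)).sub_const _

lemma um_eq_and_up_eq_of_hasDerivAt {x t d : ℝ} (ht : 0 < t)
    (h : HasDerivAt (fun y => sol.potential (y, t)) d x) : sol.um x t = d ∧ sol.up x t = d :=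
  ⟨(uniqueDiffWithinAt_Iic x).eq_deriv _ (sol.hasDerivWithinAt_potential_Iic x ht)
    h.hasDerivWithinAt, (uniqueDiffWithinAt_Ici x).eq_deriv _
    (sol.hasDerivWithinAt_potential_Ici x ht) h.hasDerivWithinAt⟩

lemma ae_hasDerivAt_potential_fst {t : ℝ} (ht : 0 < t) :
    ∀ᵐ x, HasDerivAt (fun y => sol.potential (y, t)) (sol.u x t) x := by
  filter_upwards [LocallyIntegrable.ae_hasDerivAt_integral
    (sol.isBddMeasurable_slice t).locallyIntegrable] with x hx
  simp only [potential, max_eq_left ht.le]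
  exact (hx 0).sub_const _

lemma ae_hasDerivAt_potential_snd (hfl : Continuous fl) (hfr : Continuous fr) (x : ℝ) :
    ∀ᵐ t, 0 < t → HasDerivAt (fun s => sol.potential (x, s)) (-sol.rightFlux (x, t)) t := by
  filter_upwards [LocallyIntegrable.ae_hasDerivAt_integral
    (sol.isBddMeasurable_rightFlux_slice hfl hfr x).locallyIntegrable] with t ht ht0
  refine ((ht 0).const_sub (sol.potential (x, 0))).congr_of_eventuallyEq ?_
  filter_upwards [Ioi_mem_nhds ht0] with s hs
  linarith [sol.potential_sub_potential_snd hfl hfr x le_rfl (le_of_lt hs)]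

lemma ae_rightTrace_eq : ∀ᵐ p : ℝ × ℝ, 0 < p.2 → sol.rightTrace p = sol.u p.1 p.2 := by
  refine ae_prod_of_ae_ae_snd ((measurableSet_lt measurable_const measurable_snd).imp
    (measurableSet_eq_fun sol.isBddMeasurable_rightTrace.measurable
      sol.isBddMeasurable.measurable)) (Eventually.of_forall fun t => ?_)
  by_cases ht : 0 < t
  · filter_upwards [sol.ae_hasDerivAt_potential_fst ht] with x hx _
    rw [rightTrace, if_pos ht, (sol.um_eq_and_up_eq_of_hasDerivAt ht hx).2]
  · exact Eventually.of_forall fun x h => absurd h ht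

theorem isStreamFunctionOn_potential (hfl : Continuous fl) (hfr : Continuous fr) :
    IsStreamFunctionOn sol.potential (fun p => sol.u p.1 p.2)
      (fun p => dflux fl fr p.1 (sol.u p.1 p.2)) {p | 0 < p.2} := by
  obtain ⟨K, hK⟩ := sol.exists_lipschitzWith_potential hfl hfr
  have hright : IsStreamFunctionOn sol.potential (fun p => sol.u p.1 p.2) sol.rightFlux
      {p | 0 < p.2} := by
    refine isStreamFunctionOn_of_ae_hasDerivAt hK sol.isBddMeasurable.measurable
      (sol.isBddMeasurable_rightFlux hfl hfr).measurable
      (measurableSet_lt measurable_const measurable_snd) (Eventually.of_forall fun t => ?_)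
      (Eventually.of_forall (sol.ae_hasDerivAt_potential_snd hfl hfr))
    by_cases ht : 0 < t
    · filter_upwards [sol.ae_hasDerivAt_potential_fst ht] with x hx _ using hx
    · exact Eventually.of_forall fun x h => absurd h ht
  filter_upwards [hright, sol.ae_rightTrace_eq] with p hp htrace ht
  simpa only [rightFlux, htrace ht] using hp ht

end Potential

end ABSol

section Legendre

/-- `L` is the Legendre transform of the differentiable function `f` on the whole line, and the
slope `g v` is the point at which the supremum defining `L v` is attained. -/
structure IsLegendreTransform (f L g : ℝ → ℝ) : Prop where
  deriv_apply : ∀ v, deriv f (g v) = v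
  hasDerivAt : ∀ v, HasDerivAt L (g v) v
  apply_eq : ∀ v, L v = v * g v - f (g v)
  mul_sub_le : ∀ w v, v * w - f w ≤ L v

variable {f L g : ℝ → ℝ}

lemma isMinOn_sub_mul_of_deriv_eq (hf : Differentiable ℝ f) (hmono : Monotone (deriv f))
    {w v : ℝ} (hw : deriv f w = v) : IsMinOn (fun z => f z - v * z) univ w := by
  have hderiv (z : ℝ) : HasDerivAt (fun z => f z - v * z) (deriv f z - v) z :=
    (hf z).hasDerivAt.sub ((hasDerivAt_id z).const_mul v |>.congr_deriv (mul_one v))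
  have hconv : ConvexOn ℝ univ fun z => f z - v * z := by
    refine Monotone.convexOn_univ_of_deriv (fun z => (hderiv z).differentiableAt) ?_
    rw [funext fun z => (hderiv z).deriv]
    exact fun y z hyz => sub_le_sub_right (hmono hyz) v
  refine hconv.isMinOn_of_rightDeriv_eq_zero (by simp) ?_
  rw [(hderiv w).hasDerivWithinAt.derivWithin (uniqueDiffWithinAt_Ioi w), hw, sub_self]

lemma exists_isLegendreTransform (hf : Differentiable ℝ f) (hmono : StrictMono (deriv f))
    (hsurj : Function.Surjective (deriv f)) : ∃ L g, IsLegendreTransform f L g := by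
  let g : ℝ → ℝ := ⇑(hmono.orderIsoOfSurjective _ hsurj).symm
  have hg (v : ℝ) : deriv f (g v) = v := (hmono.orderIsoOfSurjective _ hsurj).apply_symm_apply v
  have hgc : Continuous g := (hmono.orderIsoOfSurjective _ hsurj).symm.continuous
  have hle (w v : ℝ) : v * w - f w ≤ v * g v - f (g v) := by
    have h : f (g v) - v * g v ≤ f w - v * w :=
      isMinOn_sub_mul_of_deriv_eq hf hmono.monotone (hg v) (mem_univ w)
    linarith
  refine ⟨fun v => v * g v - f (g v), g, hg, fun v => ?_, fun v => rfl, hle⟩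
  rw [hasDerivAt_iff_isLittleO]
  have hlittle : (fun v' => (v' - v) * (g v' - g v)) =o[𝓝 v] fun v' => v' - v := by
    have hcont : Tendsto (fun v' => g v' - g v) (𝓝 v) (𝓝 0) := by
      simpa only [sub_self] using (hgc.tendsto v).sub_const (g v)
    simpa only [mul_one] using
      (Asymptotics.isBigO_refl (fun v' => v' - v) (𝓝 v)).mul_isLittleO
        ((Asymptotics.isLittleO_one_iff ℝ).2 hcont)
  refine Asymptotics.IsBigO.trans_isLittleO (.of_bound' (.of_forall fun v' => ?_)) hlittle
  rw [Real.norm_eq_abs, Real.norm_eq_abs, smul_eq_mul]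
  have hlower := hle (g v) v'
  have hupper := hle (g v') v
  rw [abs_of_nonneg (by linarith)]
  exact le_trans (by linarith) (le_abs_self _)

lemma surjective_deriv_of_le_deriv_deriv {a : ℝ} (ha : 0 < a) (hf : Differentiable ℝ (deriv f))
    (hf₂ : ∀ w, a ≤ deriv (deriv f) w) : Function.Surjective (deriv f) := by
  have hle {x y : ℝ} (hxy : x ≤ y) : a * (y - x) ≤ deriv f y - deriv f x :=
    mul_sub_le_image_sub_of_le_deriv hf hf₂ hxy
  refine hf.continuous.surjective ?_ ?_
  · refine tendsto_atTop_mono' _ ?_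
      (tendsto_atTop_add_const_right _ (deriv f 0) (tendsto_id.const_mul_atTop ha))
    filter_upwards [eventually_ge_atTop 0] with w hw
    simp only [id_eq]
    linarith [hle hw]
  · refine tendsto_atBot_mono' _ ?_
      (tendsto_atBot_add_const_right _ (deriv f 0) (tendsto_id.const_mul_atBot ha))
    filter_upwards [eventually_le_atBot 0] with w hw
    simp only [id_eq]
    linarith [hle hw]

namespace IsLegendreTransform

variable (hL : IsLegendreTransform f L g)
include hL

lemma continuous : Continuous L :=
  continuous_iff_continuousAt.2 fun v => (hL.hasDerivAt v).continuousAt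

lemma comp_neg : IsLegendreTransform (fun w => f (-w)) (fun v => L (-v)) (fun v => -g (-v)) where
  deriv_apply v := by rw [deriv_comp_neg, neg_neg, hL.deriv_apply, neg_neg]
  hasDerivAt v :=
    ((hL.hasDerivAt (-v)).comp (h₂ := L) v (hasDerivAt_neg v)).congr_deriv (mul_neg_one _)
  apply_eq v := by rw [hL.apply_eq, neg_neg, neg_mul_comm]
  mul_sub_le w v := by simpa using hL.mul_sub_le (-w) (-v)

end IsLegendreTransform

end Legendre

section AbsolutelyContinuous

lemma sub_le_mul_sub_of_ae_deriv_le {w : ℝ → ℝ} {K : ℝ≥0} {a b c : ℝ} (hab : a ≤ b)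
    (hw : LipschitzWith K w) (h : ∀ᵐ t, t ∈ Ioo a b → deriv w t ≤ c) : w b - w a ≤ c * (b - a) := by
  have hac := (hw.lipschitzOnWith (s := uIcc a b)).absolutelyContinuousOnInterval
  rw [← hac.integral_deriv_eq_sub]
  refine (intervalIntegral.integral_mono_ae_restrict hab hac.intervalIntegrable_deriv
    (intervalIntegrable_const (c := c)) ?_).trans_eq ?_
  · rw [EventuallyLE, ← restrict_Ioo_eq_restrict_Icc, ae_restrict_iff' measurableSet_Ioo]
    exact h
  · rw [intervalIntegral.integral_const, smul_eq_mul, mul_comm]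

lemma ae_ae_shear {P : ℝ × ℝ → Prop} (h : ∀ᵐ p, P p) (v : ℝ) :
    ∀ᵐ ξ : ℝ, ∀ᵐ t : ℝ, P (ξ + v * t, t) := by
  have hshear : MeasurePreserving (fun q : ℝ × ℝ => (q.1, q.2 + v * q.1))
      (volume.prod volume) (volume.prod volume) :=
    (MeasurePreserving.id volume).skew_product (g := fun t ξ => ξ + v * t)
      (by unfold Function.uncurry; fun_prop)
      (Eventually.of_forall fun t => map_add_right_eq_self volume (v * t))
  exact Measure.ae_ae_of_ae_prod ((Measure.measurePreserving_swap.comp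
    (hshear.comp Measure.measurePreserving_swap)).quasiMeasurePreserving.ae h)

lemma le_of_ae_lt_imp_le {F G : ℝ → ℝ} (hF : Continuous F) (hG : Continuous G) {ξ₀ : ℝ}
    (h : ∀ᵐ ξ, ξ₀ < ξ → F ξ ≤ G ξ) : F ξ₀ ≤ G ξ₀ := by
  refine le_on_closure (s := Ioi ξ₀ ∩ {ξ | ξ₀ < ξ → F ξ ≤ G ξ}) (fun ξ hξ => hξ.2 hξ.1)
    hF.continuousOn hG.continuousOn ?_
  refine closure_minimal ((Measure.dense_of_ae h).open_subset_closure_inter isOpen_Ioi)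
    isClosed_closure ?_
  rw [closure_Ioi]
  exact self_mem_Ici

/-- Only almost every line of slope `v` meets the null set in good position, so the estimate is
obtained on nearby parallel segments and passes to the limit by continuity. -/
lemma sub_le_mul_of_ae_hasFDerivAt {W : ℝ × ℝ → ℝ} {K : ℝ≥0} (hW : LipschitzWith K W)
    {p q : ℝ × ℝ} {v c : ℝ} (hpq : p.2 ≤ q.2) (hv : v * (q.2 - p.2) = q.1 - p.1)
    (h : ∀ᵐ z : ℝ × ℝ, z.2 ∈ Ioo p.2 q.2 → p.1 + v * (z.2 - p.2) < z.1 →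
      fderiv ℝ W z (v, 1) ≤ c) :
    W q - W p ≤ c * (q.2 - p.2) := by
  set W' : ℝ → ℝ → ℝ := fun ξ t => W (ξ + v * t, t) with hW'
  have hcont (t : ℝ) : Continuous fun ξ => W' ξ t := hW.continuous.comp (by fun_prop)
  have hline : ∃ K', ∀ ξ, LipschitzWith K' (W' ξ) := by
    refine ⟨K * max ‖v‖₊ 1, fun ξ => hW.comp (LipschitzWith.prodMk ?_ LipschitzWith.id)⟩
    exact LipschitzWith.of_dist_le_mul fun s t => by
      rw [dist_add_left, coe_nnnorm, dist_eq_norm, dist_eq_norm, ← mul_sub, norm_mul]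
  obtain ⟨K', hK'⟩ := hline
  have hae : ∀ᵐ ξ, p.1 - v * p.2 < ξ → W' ξ q.2 - W' ξ p.2 ≤ c * (q.2 - p.2) := by
    filter_upwards [ae_ae_shear (hW.ae_differentiableAt.and h) v] with ξ hξ hpξ
    refine sub_le_mul_sub_of_ae_deriv_le hpq (hK' ξ) (hξ.mono fun t ⟨hdiff, hle⟩ ht => ?_)
    have hderiv : HasDerivAt (W' ξ) (fderiv ℝ W (ξ + v * t, t) (v, 1)) t :=
      hdiff.hasFDerivAt.comp_hasDerivAt (f := fun t => (ξ + v * t, t)) t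
        ((((hasDerivAt_id t).const_mul v).const_add ξ |>.congr_deriv (mul_one v)).prodMk
          (hasDerivAt_id t))
    rw [hderiv.deriv]
    exact hle ht (by linarith)
  have hlim := le_of_ae_lt_imp_le ((hcont q.2).sub (hcont p.2)) continuous_const hae
  have hq : p.1 - v * p.2 + v * q.2 = q.1 := by linarith
  simpa only [hW', Pi.sub_apply, sub_add_cancel, hq] using hlim

end AbsolutelyContinuous

section Segment

/-- The velocity of the straight path joining two points `(position, time)` of the plane. -/
def segmentVelocity (p q : ℝ × ℝ) : ℝ := (q.1 - p.1) / (q.2 - p.2)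

/-- The position at time `t` of the straight path joining `p` to `q`. -/
def segmentPos (p q : ℝ × ℝ) (t : ℝ) : ℝ := p.1 + segmentVelocity p q * (t - p.2)

/-- The action, for the Lagrangian `L`, of the straight path joining `p` to `q`. -/
def segmentAction (L : ℝ → ℝ) (p q : ℝ × ℝ) : ℝ := (q.2 - p.2) * L (segmentVelocity p q)

variable {p q : ℝ × ℝ} {t : ℝ}

lemma segmentVelocity_mul (hpq : p.2 < q.2) : segmentVelocity p q * (q.2 - p.2) = q.1 - p.1 :=
  div_mul_cancel₀ _ (sub_pos.2 hpq).ne'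

lemma segmentPos_mul (hpq : p.2 < q.2) (t : ℝ) :
    segmentPos p q t * (q.2 - p.2) = (q.2 - t) * p.1 + (t - p.2) * q.1 := by
  rw [segmentPos]
  linear_combination (t - p.2) * segmentVelocity_mul hpq

lemma segmentPos_right (hpq : p.2 < q.2) : segmentPos p q q.2 = q.1 := by
  rw [segmentPos, segmentVelocity_mul hpq, add_sub_cancel]

lemma segmentPos_nonneg (hp : 0 ≤ p.1) (hq : 0 ≤ q.1) (ht : t ∈ Ioo p.2 q.2) :
    0 ≤ segmentPos p q t := by
  refine nonneg_of_mul_nonneg_left ?_ (sub_pos.2 (ht.1.trans ht.2))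
  rw [segmentPos_mul (ht.1.trans ht.2)]
  exact add_nonneg (mul_nonneg (sub_pos.2 ht.2).le hp) (mul_nonneg (sub_pos.2 ht.1).le hq)

lemma segmentPos_pos (hp : 0 ≤ p.1) (hq : 0 ≤ q.1) (hpq : 0 < p.1 + q.1) (ht : t ∈ Ioo p.2 q.2) :
    0 < segmentPos p q t := by
  refine pos_of_mul_pos_left ?_ (sub_pos.2 (ht.1.trans ht.2)).le
  rw [segmentPos_mul (ht.1.trans ht.2)]
  have hp' := mul_nonneg (sub_pos.2 ht.2).le hp
  have hq' := mul_nonneg (sub_pos.2 ht.1).le hq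
  rcases hp.lt_or_eq with hp0 | hp0
  · exact add_pos_of_pos_of_nonneg (mul_pos (sub_pos.2 ht.2) hp0) hq'
  · exact add_pos_of_nonneg_of_pos hp' (mul_pos (sub_pos.2 ht.1) (by linarith))

lemma segmentVelocity_left (ht : p.2 < t) :
    segmentVelocity p (segmentPos p q t, t) = segmentVelocity p q := by
  rw [segmentVelocity, segmentPos, add_sub_cancel_left, mul_div_cancel_right₀ _ (sub_pos.2 ht).ne']

lemma segmentVelocity_right (ht : t ∈ Ioo p.2 q.2) :
    segmentVelocity (segmentPos p q t, t) q = segmentVelocity p q := by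
  rw [segmentVelocity, div_eq_iff (sub_pos.2 ht.2).ne', segmentPos]
  linear_combination -segmentVelocity_mul (ht.1.trans ht.2)

variable {f L g : ℝ → ℝ}

namespace IsLegendreTransform

variable (hL : IsLegendreTransform f L g)
include hL

lemma mul_sub_le_segmentAction (w : ℝ) (hpq : p.2 < q.2) :
    w * (q.1 - p.1) - f w * (q.2 - p.2) ≤ segmentAction L p q := by
  rw [← segmentVelocity_mul hpq, segmentAction]
  linarith [mul_le_mul_of_nonneg_left (hL.mul_sub_le w (segmentVelocity p q)) (sub_pos.2 hpq).le]

lemma hasFDerivAt_segmentAction_left (hpq : p.2 < q.2) :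
    HasFDerivAt (fun p => segmentAction L p q)
      (-g (segmentVelocity p q) • ContinuousLinearMap.fst ℝ ℝ ℝ
        + f (g (segmentVelocity p q)) • ContinuousLinearMap.snd ℝ ℝ ℝ) p := by
  have hfst : HasFDerivAt (fun p : ℝ × ℝ => q.1 - p.1) (-ContinuousLinearMap.fst ℝ ℝ ℝ) p :=
    hasFDerivAt_fst.const_sub q.1
  have hsnd : HasFDerivAt (fun p : ℝ × ℝ => q.2 - p.2) (-ContinuousLinearMap.snd ℝ ℝ ℝ) p :=
    hasFDerivAt_snd.const_sub q.2
  have hne := (sub_pos.2 hpq).ne'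
  have hvel := hfst.mul ((hasDerivAt_inv hne).comp_hasFDerivAt p hsnd)
  refine (hsnd.mul ((hL.hasDerivAt (segmentVelocity p q)).comp_hasFDerivAt p hvel)).congr_fderiv
    (ContinuousLinearMap.ext fun z => ?_)
  simp only [smul_neg, neg_smul, neg_neg, Function.comp_apply, smul_add, Pi.mul_apply, add_apply,
    smul_apply, ContinuousLinearMap.coe_snd', smul_eq_mul, neg_apply, ContinuousLinearMap.coe_fst',
    neg_mul]
  change _ + _ + -(L (segmentVelocity p q) * z.2) = _
  rw [hL.apply_eq, ← segmentVelocity_mul hpq]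
  field_simp
  ring

lemma hasDerivAt_segmentAction_right (hpq : p.2 < q.2) :
    HasDerivAt (fun y => segmentAction L p (y, q.2)) (g (segmentVelocity p q)) q.1 := by
  have hvel : HasDerivAt (fun y => segmentVelocity p (y, q.2)) (1 / (q.2 - p.2)) q.1 :=
    ((hasDerivAt_id' q.1).sub_const p.1).div_const (q.2 - p.2)
  refine (((hL.hasDerivAt (segmentVelocity p q)).comp (h₂ := L) q.1 hvel).const_mul
    (q.2 - p.2)).congr_deriv ?_
  field_simp [(sub_pos.2 hpq).ne']

lemma continuousOn_segmentAction :
    ContinuousOn (fun z : (ℝ × ℝ) × (ℝ × ℝ) => segmentAction L z.1 z.2) {z | z.1.2 < z.2.2} := by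
  refine ContinuousOn.mul (by fun_prop) (hL.continuous.comp_continuousOn ?_)
  exact ContinuousOn.div (by fun_prop) (by fun_prop) fun z hz => (sub_pos.2 hz).ne'

/-- Testing the Legendre transform with the slopes `±(K + 1)` beats the Lipschitz constant `K`. -/
lemma exists_add_abs_sub_le_add_segmentAction {W : ℝ × ℝ → ℝ} {K : ℝ≥0} (hW : LipschitzWith K W) :
    ∃ C ≥ 0, ∀ p q : ℝ × ℝ, p.2 < q.2 →
      W q + |q.1 - p.1| - C * (q.2 - p.2) ≤ W p + segmentAction L p q := by
  refine ⟨K + max |f (K + 1)| |f (-(K + 1))|, by positivity, fun p q hpq => ?_⟩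
  have ht : 0 < q.2 - p.2 := sub_pos.2 hpq
  have hWpq : W q - W p ≤ K * (|q.1 - p.1| + (q.2 - p.2)) := by
    refine (le_abs_self _).trans ((hW.dist_le_mul q p).trans ?_)
    rw [Prod.dist_eq, Real.dist_eq, Real.dist_eq, abs_of_pos ht]
    exact mul_le_mul_of_nonneg_left
      (max_le (by linarith) (by linarith [abs_nonneg (q.1 - p.1)])) K.2
  have hslope (w : ℝ) (hw : |f w| ≤ max |f (K + 1)| |f (-(K + 1))|) :
      w * (q.1 - p.1) - max |f (K + 1)| |f (-(K + 1))| * (q.2 - p.2) ≤ segmentAction L p q := by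
    have := mul_le_mul_of_nonneg_right ((le_abs_self _).trans hw) ht.le
    linarith [hL.mul_sub_le_segmentAction w hpq]
  have hplus := hslope (K + 1) (le_max_left _ _)
  have hminus := hslope (-(K + 1)) (le_max_right _ _)
  rcases abs_cases (q.1 - p.1) with ⟨habs, _⟩ | ⟨habs, _⟩ <;> rw [habs] at hWpq ⊢ <;> linarith

end IsLegendreTransform

end Segment

section QuarterPlane

/-- A Lipschitz function on the plane which solves the Hamilton–Jacobi equation
`W_t + f (W_x) = 0` in the open quarter plane, both almost everywhere and as a viscosity
supersolution (tested with affine functions, which is all that is needed). -/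
structure IsQuarterPlaneSolution (f : ℝ → ℝ) (W : ℝ × ℝ → ℝ) : Prop where
  exists_lipschitzWith : ∃ K, LipschitzWith K W
  exists_isStreamFunctionOn : ∃ v : ℝ × ℝ → ℝ,
    IsStreamFunctionOn W v (fun p => f (v p)) {p | 0 < p.1 ∧ 0 < p.2}
  nonneg_of_isSubtangentWithin : ∀ p₀ : ℝ × ℝ, 0 < p₀.1 → 0 < p₀.2 → ∀ k α,
    IsSubtangentWithin W (fun p => k * p.1 + α * p.2) univ p₀ → 0 ≤ α + f k

variable {f L g : ℝ → ℝ} {W : ℝ × ℝ → ℝ} {p q r : ℝ × ℝ}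

namespace IsQuarterPlaneSolution

variable (hW : IsQuarterPlaneSolution f W)
include hW

lemma continuous : Continuous W :=
  hW.exists_lipschitzWith.choose_spec.continuous

variable (hL : IsLegendreTransform f L g)
include hL

lemma le_add_segmentAction (hp₁ : 0 ≤ p.1) (hp₂ : 0 ≤ p.2) (hq₁ : 0 ≤ q.1) (hpq : p.2 < q.2) :
    W q ≤ W p + segmentAction L p q := by
  obtain ⟨K, hK⟩ := hW.exists_lipschitzWith
  obtain ⟨v, hv⟩ := hW.exists_isStreamFunctionOn
  have hle : W q - W p ≤ L (segmentVelocity p q) * (q.2 - p.2) := by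
    refine sub_le_mul_of_ae_hasFDerivAt hK hpq.le (segmentVelocity_mul hpq) ?_
    filter_upwards [hv] with z hz ht hzx
    have hz₁ : 0 < z.1 := (segmentPos_nonneg hp₁ hq₁ ht).trans_lt hzx
    rw [(hz ⟨hz₁, hp₂.trans_lt ht.1⟩).fderiv]
    have := hL.mul_sub_le (v z) (segmentVelocity p q)
    simpa [mul_comm] using this
  rw [segmentAction]
  linarith

/-- The penalty `δ / (q.2 - p.2)` adds a strictly negative term to the time derivative of the
test function, which the supersolution property forbids. -/
lemma not_isLocalMin_add_div (hp₁ : 0 < p.1) (hp₂ : 0 < p.2) (hpq : p.2 < q.2) {δ : ℝ}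
    (hδ : 0 < δ) : ¬ IsLocalMin (fun p => W p + (segmentAction L p q + δ / (q.2 - p.2))) p := by
  intro hmin
  have hpen : HasDerivAt (fun t => δ / (q.2 - t)) (δ / (q.2 - p.2) ^ 2) p.2 :=
    ((hasDerivAt_const p.2 δ).div ((hasDerivAt_id' p.2).const_sub q.2)
      (sub_pos.2 hpq).ne').congr_deriv (by ring)
  have hsub := isSubtangentWithin_of_isLocalMinOn (hmin.on univ)
    ((hL.hasFDerivAt_segmentAction_left hpq).add (hpen.comp_hasFDerivAt p hasFDerivAt_snd))
  have hsuper := hW.nonneg_of_isSubtangentWithin p hp₁ hp₂ (g (segmentVelocity p q))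
    (-f (g (segmentVelocity p q)) - δ / (q.2 - p.2) ^ 2) ?_
  · have : 0 < δ / (q.2 - p.2) ^ 2 := div_pos hδ (pow_pos (sub_pos.2 hpq) 2)
    linarith
  · refine (congrArg (IsSubtangentWithin W · univ p) (funext fun z => ?_)).mp hsub
    simp only [FunLike.coe_add, FunLike.coe_smul, ContinuousLinearMap.coe_fst', neg_smul,
      ContinuousLinearMap.coe_snd', Pi.neg_apply, Pi.add_apply, Pi.smul_apply, smul_eq_mul,
      neg_add_rev, neg_neg]
    ring

lemma continuousOn_add_segmentAction (q : ℝ × ℝ) :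
    ContinuousOn (fun p => W p + segmentAction L p q) {p | p.2 < q.2} :=
  hW.continuous.continuousOn.add
    (hL.continuousOn_segmentAction.comp (f := fun p => (p, q))
      (by fun_prop : Continuous fun p : ℝ × ℝ => (p, q)).continuousOn fun _ hp => hp)

lemma exists_isMinOn_add_div (hr : r ∈ Ici (0 : ℝ) ×ˢ Ico (0 : ℝ) q.2) {δ : ℝ} (hδ : 0 < δ) :
    ∃ p ∈ Ici (0 : ℝ) ×ˢ Ico (0 : ℝ) q.2,
      IsMinOn (fun p => W p + (segmentAction L p q + δ / (q.2 - p.2))) (Ici 0 ×ˢ Ico 0 q.2) p := by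
  obtain ⟨K, hK⟩ := hW.exists_lipschitzWith
  obtain ⟨C, hC, hcoer⟩ := hL.exists_add_abs_sub_le_add_segmentAction hK
  set Ψ : ℝ × ℝ → ℝ := fun p => W p + (segmentAction L p q + δ / (q.2 - p.2))
  have hΨc : ContinuousOn Ψ {p | p.2 < q.2} := by
    simp only [Ψ, ← add_assoc]
    exact (hW.continuousOn_add_segmentAction hL q).add
      (ContinuousOn.div (by fun_prop) (by fun_prop) fun p hp => (sub_pos.2 hp).ne')
  set M := Ψ r - W q + C * q.2
  have hsub (p : ℝ × ℝ) (hp : p ∈ Ici (0 : ℝ) ×ˢ Ico (0 : ℝ) q.2) (hpr : Ψ p ≤ Ψ r) :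
      |q.1 - p.1| + δ / (q.2 - p.2) ≤ M := by
    have hCp := mul_nonneg hC hp.2.1
    have := hcoer p q hp.2.2
    linarith
  have hM : 0 < M :=
    (add_pos_of_nonneg_of_pos (abs_nonneg _) (div_pos hδ (sub_pos.2 hr.2.2))).trans_le
      (hsub r hr le_rfl)
  set D : Set (ℝ × ℝ) := Icc 0 (q.1 + M) ×ˢ Icc 0 (q.2 - δ / M)
  have hmem (p : ℝ × ℝ) (hp : p ∈ Ici (0 : ℝ) ×ˢ Ico (0 : ℝ) q.2) (hpr : Ψ p ≤ Ψ r) : p ∈ D := by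
    have hpos := div_pos hδ (sub_pos.2 hp.2.2)
    have hpM := hsub p hp hpr
    have htime : δ / M ≤ q.2 - p.2 :=
      (div_le_comm₀ (sub_pos.2 hp.2.2) hM).1 (by linarith [abs_nonneg (q.1 - p.1)])
    exact ⟨⟨hp.1, by linarith [neg_le_abs (q.1 - p.1)]⟩, hp.2.1, by linarith⟩
  have hDq : ∀ p ∈ D, p.2 < q.2 := fun p hp => by linarith [hp.2.2, div_pos hδ hM]
  obtain ⟨p, hp, hmin⟩ := (isCompact_Icc.prod isCompact_Icc).exists_isMinOn
    ⟨r, hmem r hr le_rfl⟩ (hΨc.mono hDq)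
  refine ⟨p, ⟨hp.1.1, hp.2.1, hDq p hp⟩, fun z hz => ?_⟩
  rcases le_total (Ψ z) (Ψ r) with hzr | hzr
  · exact hmin (hmem z hz hzr)
  · exact (hmin (hmem r hr le_rfl)).trans hzr

lemma exists_boundary_le_add (hr : r ∈ Ici (0 : ℝ) ×ˢ Ico (0 : ℝ) q.2) {ε : ℝ} (hε : 0 < ε) :
    ∃ p ∈ Ici (0 : ℝ) ×ˢ Ico (0 : ℝ) q.2, (p.1 = 0 ∨ p.2 = 0) ∧
      W p + segmentAction L p q ≤ W r + segmentAction L r q + ε := by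
  have hδ : 0 < ε * (q.2 - r.2) := mul_pos hε (sub_pos.2 hr.2.2)
  obtain ⟨p, hp, hmin⟩ := hW.exists_isMinOn_add_div hL hr hδ
  refine ⟨p, hp, ?_, ?_⟩
  · by_contra! hne
    have hp₁ : 0 < p.1 := lt_of_le_of_ne hp.1 hne.1.symm
    have hp₂ : 0 < p.2 := lt_of_le_of_ne hp.2.1 hne.2.symm
    exact hW.not_isLocalMin_add_div hL hp₁ hp₂ hp.2.2 hδ
      (hmin.isLocalMin (prod_mem_nhds (Ici_mem_nhds hp₁) (Ico_mem_nhds hp₂ hp.2.2)))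
  · have hpr : W p + (segmentAction L p q + _) ≤ W r + (segmentAction L r q + _) := hmin hr
    rw [mul_div_cancel_right₀ _ (sub_pos.2 hr.2.2).ne'] at hpr
    linarith [div_pos hδ (sub_pos.2 hp.2.2)]

/-- The estimate at `r = q` is obtained from the points `(q.1, t)` with `t` close to `q.2`. -/
lemma exists_boundary_le_add_self (hq₁ : 0 ≤ q.1) (hq₂ : 0 < q.2) {ε : ℝ} (hε : 0 < ε) :
    ∃ p ∈ Ici (0 : ℝ) ×ˢ Ico (0 : ℝ) q.2, (p.1 = 0 ∨ p.2 = 0) ∧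
      W p + segmentAction L p q ≤ W q + ε := by
  have hlim : Tendsto (fun t => W (q.1, t) + (q.2 - t) * L 0) (𝓝[<] q.2) (𝓝 (W q)) := by
    have hcont : Continuous fun t => W (q.1, t) + (q.2 - t) * L 0 :=
      (hW.continuous.comp (by fun_prop)).add (by fun_prop)
    simpa using (hcont.tendsto q.2).mono_left nhdsWithin_le_nhds
  obtain ⟨t, hlt, ht⟩ := ((hlim.eventually_lt_const (by linarith : W q < W q + ε / 2)).and
    (Ico_mem_nhdsLT hq₂)).exists
  obtain ⟨p, hp, hbdry, hle⟩ := hW.exists_boundary_le_add hL (r := (q.1, t)) ⟨hq₁, ht⟩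
    (half_pos hε)
  refine ⟨p, hp, hbdry, ?_⟩
  simp only [segmentAction, segmentVelocity, sub_self, zero_div] at hle ⊢
  linarith

lemma exists_boundary_minimizer (hq₁ : 0 < q.1) (hq₂ : 0 < q.2) :
    ∃ p ∈ Ici (0 : ℝ) ×ˢ Ico (0 : ℝ) q.2, (p.1 = 0 ∨ p.2 = 0) ∧
      W p + segmentAction L p q ≤ W q := by
  obtain ⟨K, hK⟩ := hW.exists_lipschitzWith
  obtain ⟨C, hC, hcoer⟩ := hL.exists_add_abs_sub_le_add_segmentAction hK
  set τ := min q.2 (q.1 / (2 * (C + 1)))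
  have hτ : 0 < τ := lt_min hq₂ (by positivity)
  have hCτ : C * τ < q.1 / 2 := by
    have : τ * (2 * (C + 1)) ≤ q.1 := (le_div_iff₀ (by positivity)).1 (min_le_right _ _)
    linarith
  set D : Set (ℝ × ℝ) := {p | p.1 = 0 ∨ p.2 = 0} ∩
    Icc 0 (q.1 + (q.1 / 2 + C * q.2)) ×ˢ Icc 0 (q.2 - τ)
  have hD : IsCompact D := (isCompact_Icc.prod isCompact_Icc).inter_left
    ((isClosed_eq continuous_fst continuous_const).union
      (isClosed_eq continuous_snd continuous_const))
  have hDq : ∀ p ∈ D, p.2 < q.2 := fun p hp => by linarith [hp.2.2.2]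
  have hmem (p : ℝ × ℝ) (hp : p ∈ Ici (0 : ℝ) ×ˢ Ico (0 : ℝ) q.2) (hbdry : p.1 = 0 ∨ p.2 = 0)
      (hle : W p + segmentAction L p q ≤ W q + q.1 / 2) : p ∈ D := by
    have hdist : |q.1 - p.1| ≤ q.1 / 2 + C * (q.2 - p.2) := by linarith [hcoer p q hp.2.2]
    have hCp := mul_nonneg hC hp.2.1
    refine ⟨hbdry, ⟨hp.1, by linarith [neg_le_abs (q.1 - p.1)]⟩, hp.2.1, ?_⟩
    rcases hbdry with h | h
    · rw [h, sub_zero, abs_of_pos hq₁] at hdist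
      by_contra! hlt
      linarith [mul_le_mul_of_nonneg_left (by linarith : q.2 - p.2 ≤ τ) hC]
    · linarith [min_le_left q.2 (q.1 / (2 * (C + 1)))]
  have hnear (ε : ℝ) (hε : 0 < ε) : ∃ p ∈ D, W p + segmentAction L p q ≤ W q + ε := by
    obtain ⟨p, hp, hbdry, hle⟩ := hW.exists_boundary_le_add_self hL hq₁.le hq₂
      (lt_min hε (half_pos hq₁))
    exact ⟨p, hmem p hp hbdry (hle.trans (by gcongr; exact min_le_right _ _)),
      hle.trans (by gcongr; exact min_le_left _ _)⟩
  obtain ⟨p, hp, hmin⟩ := hD.exists_isMinOn ((hnear 1 one_pos).imp fun _ h => h.1)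
    ((hW.continuousOn_add_segmentAction hL q).mono hDq)
  refine ⟨p, ⟨hp.2.1.1, hp.2.2.1, hDq p hp⟩, hp.1, le_of_forall_pos_le_add fun ε hε => ?_⟩
  obtain ⟨z, hz, hle⟩ := hnear ε hε
  exact (hmin hz).trans hle

end IsQuarterPlaneSolution

end QuarterPlane

section Squeeze

lemma hasDerivAt_of_le_of_le {lo w hi : ℝ → ℝ} {z d : ℝ} (hlo : HasDerivAt lo d z)
    (hhi : HasDerivAt hi d z) (hlow : ∀ᶠ y in 𝓝 z, lo y ≤ w y) (hwhi : ∀ᶠ y in 𝓝 z, w y ≤ hi y)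
    (hz : hi z ≤ lo z) : HasDerivAt w d z := by
  have hloz := hlow.self_of_nhds
  have hhiz := hwhi.self_of_nhds
  rw [hasDerivAt_iff_isLittleO] at hlo hhi ⊢
  refine Asymptotics.isLittleO_iff.2 fun c hc => ?_
  filter_upwards [hlo.def hc, hhi.def hc, hlow, hwhi] with y hly hhy hlw hwh
  rw [Real.norm_eq_abs, abs_le] at hly hhy ⊢
  constructor <;> linarith [hly.1, hhy.2]

end Squeeze

namespace IsQuarterPlaneSolution

variable {f L g : ℝ → ℝ} {W : ℝ × ℝ → ℝ} {p q : ℝ × ℝ} {s t c : ℝ}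
  (hW : IsQuarterPlaneSolution f W) (hL : IsLegendreTransform f L g)
include hW hL

/-- Along a minimising segment, `W` is squeezed between the actions from `p` and towards `q`. -/
lemma hasDerivAt_of_add_segmentAction_le (hp₁ : 0 ≤ p.1) (hp₂ : 0 ≤ p.2) (hq₁ : 0 ≤ q.1)
    (hle : W p + segmentAction L p q ≤ W q) (ht : t ∈ Ioo p.2 q.2) (hpos : 0 < segmentPos p q t) :
    HasDerivAt (fun y => W (y, t)) (g (segmentVelocity p q)) (segmentPos p q t) := by
  set z := segmentPos p q t
  have hvl : segmentVelocity p (z, t) = segmentVelocity p q := segmentVelocity_left ht.1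
  have hvr : segmentVelocity (z, t) q = segmentVelocity p q := segmentVelocity_right ht
  have hpt : HasDerivAt (fun y => W p + segmentAction L p (y, t)) (g (segmentVelocity p q)) z := by
    rw [← hvl]
    exact (hL.hasDerivAt_segmentAction_right (q := (z, t)) ht.1).const_add (W p)
  have htq : HasDerivAt (fun y => W q - segmentAction L (y, t) q) (g (segmentVelocity p q)) z := by
    rw [← hvr]
    refine (((hL.hasFDerivAt_segmentAction_left (p := (z, t)) ht.2).comp_hasDerivAt z
      ((hasDerivAt_id z).prodMk (hasDerivAt_const z t))).const_sub (W q)).congr_deriv ?_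
    simp
  refine hasDerivAt_of_le_of_le htq hpt ?_ ?_ ?_
  · filter_upwards [lt_mem_nhds hpos] with y hy
    linarith [hW.le_add_segmentAction hL (p := (y, t)) hy.le (hp₂.trans ht.1.le) hq₁ ht.2]
  · filter_upwards [lt_mem_nhds hpos] with y hy
    exact hW.le_add_segmentAction hL hp₁ hp₂ (q := (y, t)) hy.le ht.1
  · have hsplit : segmentAction L p (z, t) + segmentAction L (z, t) q = segmentAction L p q := by
      simp only [segmentAction, hvl, hvr]
      ring
    linarith

lemma eventually_forall_lt_add_segmentAction (hs : 0 < s)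
    (hlt : ∀ y ≥ 0, W (0, s) < W (y, 0) + segmentAction L (y, 0) (0, s)) :
    ∀ᶠ p in 𝓝 ((0 : ℝ), s), ∀ y ≥ 0, W p < W (y, 0) + segmentAction L (y, 0) p := by
  obtain ⟨K, hK⟩ := hW.exists_lipschitzWith
  obtain ⟨C, hC, hcoer⟩ := hL.exists_add_abs_sub_le_add_segmentAction hK
  have hbdd : ∀ᶠ p in 𝓝 ((0 : ℝ), s), ∀ y ∈ Icc 0 (1 + C * (s + 1)),
      W p < W (y, 0) + segmentAction L (y, 0) p := by
    refine isCompact_Icc.eventually_forall_of_forall_eventually fun y hy => ?_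
    have hopen : IsOpen {z : (ℝ × ℝ) × (ℝ × ℝ) | z.1.2 < z.2.2} :=
      isOpen_lt (by fun_prop) (by fun_prop)
    have hmem : ((y, (0 : ℝ)), ((0 : ℝ), s)) ∈ {z : (ℝ × ℝ) × (ℝ × ℝ) | z.1.2 < z.2.2} := hs
    have hact : ContinuousAt (fun z : (ℝ × ℝ) × ℝ => segmentAction L (z.2, 0) z.1) ((0, s), y) :=
      ContinuousAt.comp (f := fun z : (ℝ × ℝ) × ℝ => ((z.2, (0 : ℝ)), z.1))
        (hL.continuousOn_segmentAction.continuousAt (hopen.mem_nhds hmem)) (by fun_prop)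
    exact (hW.continuous.comp continuous_fst).continuousAt.eventually_lt
      ((hW.continuous.comp (by fun_prop)).continuousAt.add hact) (hlt y hy.1)
  have hnear : ∀ᶠ p in 𝓝 ((0 : ℝ), s), p.1 < 1 ∧ 0 < p.2 ∧ p.2 < s + 1 :=
    ((continuous_fst.tendsto ((0 : ℝ), s)).eventually_lt_const one_pos).and
      (((continuous_snd.tendsto ((0 : ℝ), s)).eventually_const_lt hs).and
        ((continuous_snd.tendsto ((0 : ℝ), s)).eventually_lt_const (lt_add_one s)))
  filter_upwards [hbdd, hnear] with p hp hnear y hy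
  rcases le_or_gt y (1 + C * (s + 1)) with hyR | hyR
  · exact hp y ⟨hy, hyR⟩
  · have hcp : C * p.2 ≤ C * (s + 1) := mul_le_mul_of_nonneg_left hnear.2.2.le hC
    have := hcoer (y, 0) p hnear.2.1
    simp only [sub_zero] at this
    linarith [neg_le_abs (p.1 - y)]

/-- Near `(0, s)` every backward minimiser starts on the interface, and on the interface the trace
decreases at rate at least `f c`. -/
lemma eventually_trace_add_mul_le (hs : 0 < s)
    (hanti : AntitoneOn (fun t => W (0, t) + f c * t) (Ici 0))
    (hlt₀ : W (0, s) + f c * s < W (0, 0))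
    (hlt : ∀ y > 0, W (0, s) < W (y, 0) + segmentAction L (y, 0) (0, s)) :
    ∀ᶠ t in 𝓝 s, ∀ᶠ p in 𝓝[{p : ℝ × ℝ | 0 ≤ p.1}] (0, t), W (0, p.2) + c * p.1 ≤ W p := by
  have hlt' : ∀ y ≥ 0, W (0, s) < W (y, 0) + segmentAction L (y, 0) (0, s) := fun y hy => by
    rcases (hy : 0 ≤ y).eq_or_lt with rfl | hy
    · have := hL.mul_sub_le_segmentAction (p := (0, 0)) (q := (0, s)) c hs
      simp only [sub_zero, mul_zero, zero_sub] at this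
      linarith
    · exact hlt y hy
  have hnear : ∀ᶠ p in 𝓝[{p : ℝ × ℝ | 0 ≤ p.1}] (0, s), W (0, p.2) + c * p.1 ≤ W p := by
    filter_upwards [nhdsWithin_le_nhds (hW.eventually_forall_lt_add_segmentAction hL hs hlt'),
      nhdsWithin_le_nhds ((continuous_snd.tendsto ((0 : ℝ), s)).eventually_const_lt hs),
      self_mem_nhdsWithin] with p hp hp₂ hp₁
    rcases (show 0 ≤ p.1 from hp₁).eq_or_lt with h | hp₁
    · rw [← h, mul_zero, add_zero, h]
    obtain ⟨⟨z₁, z₂⟩, hz, hbdry, hle⟩ := hW.exists_boundary_minimizer hL hp₁ hp₂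
    rcases hbdry with rfl | rfl
    · have htrace : W (0, p.2) + f c * p.2 ≤ W (0, z₂) + f c * z₂ :=
        hanti hz.2.1 hp₂.le hz.2.2.le
      have := hL.mul_sub_le_segmentAction (p := (0, z₂)) c hz.2.2
      simp only [sub_zero] at this
      linarith
    · exact absurd hle (hp z₁ hz.1).not_ge
  have htend : Tendsto (fun t : ℝ => ((0 : ℝ), t)) (𝓝 s) (𝓝[{p : ℝ × ℝ | 0 ≤ p.1}] (0, s)) :=
    tendsto_nhdsWithin_iff.2
      ⟨Continuous.tendsto (by fun_prop) s, .of_forall fun _ => le_refl (0 : ℝ)⟩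
  exact htend.eventually (eventually_eventually_nhdsWithin.2 hnear)

end IsQuarterPlaneSolution

section Interface

lemma isSubtangentWithin_of_hasDerivAt_trace {W : ℝ × ℝ → ℝ} {t c α : ℝ}
    (hW : ∀ᶠ p in 𝓝[{p : ℝ × ℝ | 0 ≤ p.1}] (0, t), W (0, p.2) + c * p.1 ≤ W p)
    (hα : HasDerivAt (fun t => W (0, t)) α t) :
    IsSubtangentWithin W (fun p => c * p.1 + α * p.2) {p : ℝ × ℝ | 0 ≤ p.1} (0, t) := by
  intro η hη
  have hlittle := (hasDerivAt_iff_isLittleO.1 hα).def hη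
  have hsnd : Tendsto Prod.snd (𝓝[{p : ℝ × ℝ | 0 ≤ p.1}] (0, t)) (𝓝 t) :=
    (continuous_snd.tendsto ((0 : ℝ), t)).mono_left nhdsWithin_le_nhds
  filter_upwards [hW, hsnd.eventually hlittle] with p hp hlip
  have hdist : |p.2 - t| ≤ dist p (0, t) := by
    rw [Prod.dist_eq, ← Real.dist_eq]
    exact le_max_right _ _
  rw [Real.norm_eq_abs, Real.norm_eq_abs, smul_eq_mul] at hlip
  linarith [neg_le_of_abs_le (hlip.trans (mul_le_mul_of_nonneg_left hdist hη.le))]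

lemma exists_first_eq_of_antitoneOn {h : ℝ → ℝ} (hc : Continuous h) (hanti : AntitoneOn h (Ici 0))
    {T : ℝ} (hT : 0 ≤ T) : ∃ s ∈ Icc 0 T, h s = h T ∧ ∀ t ∈ Ico 0 s, h s < h t := by
  obtain ⟨s, ⟨hs, hsT⟩, hmin⟩ := (isCompact_Icc.inter_right
    (isClosed_singleton.preimage hc : IsClosed (h ⁻¹' {h T}))).exists_isMinOn
    ⟨T, ⟨hT, le_rfl⟩, rfl⟩ continuous_id.continuousOn
  refine ⟨s, hs, hsT, fun t ht => (hanti ht.1 hs.1 ht.2.le).lt_of_ne fun heq => ?_⟩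
  exact ht.2.not_ge (hmin ⟨⟨ht.1, ht.2.le.trans hs.2⟩, heq.symm.trans hsT⟩)

lemma exists_deriv_neg_of_forall_lt {h : ℝ → ℝ} {K : ℝ≥0} (hh : LipschitzWith K h) {s : ℝ}
    (hs : 0 < s) (hlt : ∀ t ∈ Ico 0 s, h s < h t) {P : ℝ → Prop} (hP : ∀ᶠ t in 𝓝 s, P t) :
    ∃ t > 0, P t ∧ deriv h t < 0 := by
  obtain ⟨r, hr, hsub⟩ := exists_Ioc_subset_of_mem_nhds' hP hs
  by_contra! hcon
  have hnonpos (t : ℝ) (ht : t ∈ Ioo r s) : deriv (fun t => -h t) t ≤ 0 := by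
    rw [deriv.fun_neg, neg_nonpos]
    exact hcon t (hr.1.trans_lt ht.1) (hsub ⟨ht.1, ht.2.le⟩)
  have := sub_le_mul_sub_of_ae_deriv_le hr.2.le hh.neg (.of_forall hnonpos)
  simp only [Pi.neg_apply] at this
  linarith [hlt r hr]

/-- Follow the interface backwards from time `T` as long as `W (0, t) + γ * t` stays constant, up
to a time `s`. If `s > 0` and no minimising segment arrives at `(0, s)` from either side, the trace
has slope `α < -γ` at some nearby time, against the supersolution property of the interface. -/
lemma exists_trace_eq_and_minimizer {f₁ L₁ g₁ f₂ L₂ g₂ : ℝ → ℝ} {W₁ W₂ : ℝ × ℝ → ℝ}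
    {c₁ c₂ γ T : ℝ} (hW₁ : IsQuarterPlaneSolution f₁ W₁) (hL₁ : IsLegendreTransform f₁ L₁ g₁)
    (hW₂ : IsQuarterPlaneSolution f₂ W₂) (hL₂ : IsLegendreTransform f₂ L₂ g₂)
    (hc₁ : f₁ c₁ = γ) (hc₂ : f₂ c₂ = γ) (htrace : ∀ t, W₂ (0, t) = W₁ (0, t))
    (hanti : AntitoneOn (fun t => W₁ (0, t) + γ * t) (Ici 0))
    (hsuper : ∀ t > 0, ∀ α,
      IsSubtangentWithin W₁ (fun p => c₁ * p.1 + α * p.2) {p : ℝ × ℝ | 0 ≤ p.1} (0, t) →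
      IsSubtangentWithin W₂ (fun p => c₂ * p.1 + α * p.2) {p : ℝ × ℝ | 0 ≤ p.1} (0, t) →
      0 ≤ α + γ)
    (hT : 0 ≤ T) :
    ∃ s ∈ Icc 0 T, W₁ (0, s) + γ * s = W₁ (0, T) + γ * T ∧
      (0 < s → (∃ y > 0, W₁ (y, 0) + segmentAction L₁ (y, 0) (0, s) ≤ W₁ (0, s)) ∨
        ∃ y > 0, W₂ (y, 0) + segmentAction L₂ (y, 0) (0, s) ≤ W₂ (0, s)) := by
  obtain ⟨K, hK⟩ := hW₁.exists_lipschitzWith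
  have hlip : LipschitzWith (K * max 0 1 + ‖γ‖₊) fun t => W₁ (0, t) + γ * t :=
    (hK.comp ((LipschitzWith.const 0).prodMk LipschitzWith.id)).add (lipschitzWith_smul γ)
  obtain ⟨s, hs, hsT, hfirst⟩ := exists_first_eq_of_antitoneOn hlip.continuous hanti hT
  refine ⟨s, hs, hsT, fun hs₀ => ?_⟩
  by_contra! hcon
  have hlt₀ : W₁ (0, s) + γ * s < W₁ (0, 0) := by
    simpa only [mul_zero, add_zero] using hfirst 0 ⟨le_rfl, hs₀⟩
  have hnear₁ := hW₁.eventually_trace_add_mul_le hL₁ (c := c₁) hs₀ (by rwa [hc₁])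
    (by rwa [hc₁]) hcon.1
  have hnear₂ := hW₂.eventually_trace_add_mul_le hL₂ (c := c₂) hs₀
    (by simpa only [hc₂, htrace] using hanti) (by simpa only [hc₂, htrace] using hlt₀) hcon.2
  obtain ⟨t, ht, ⟨hsub₁, hsub₂⟩, hneg⟩ :=
    exists_deriv_neg_of_forall_lt hlip hs₀ hfirst (hnear₁.and hnear₂)
  set β := deriv (fun t => W₁ (0, t) + γ * t) t
  have hderiv : HasDerivAt (fun t => W₁ (0, t)) (β - γ) t := by
    refine (((differentiableAt_of_deriv_ne_zero hneg.ne).hasDerivAt.sub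
      ((hasDerivAt_id t).const_mul γ)).congr_deriv (by rw [mul_one])).congr_of_eventuallyEq
      (.of_forall fun t => ?_)
    simp only [Pi.sub_apply, id_eq, add_sub_cancel_right]
  have := hsuper t ht (β - γ) (isSubtangentWithin_of_hasDerivAt_trace hsub₁ hderiv)
    (isSubtangentWithin_of_hasDerivAt_trace hsub₂ (by simpa only [htrace] using hderiv))
  linarith

end Interface

section Reflection

/-- The reflection of space which exchanges the two sides of the interface. -/
def reflectFst : ℝ × ℝ ≃ᵢ ℝ × ℝ where
  toFun p := (-p.1, p.2)
  invFun p := (-p.1, p.2)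
  left_inv p := by simp
  right_inv p := by simp
  isometry_toFun := (isometry_neg).prodMap isometry_id

lemma reflectFst_apply (p : ℝ × ℝ) : reflectFst p = (-p.1, p.2) := rfl

variable {U u F : ℝ × ℝ → ℝ} {O : Set (ℝ × ℝ)}

lemma IsStreamFunctionOn.reflect (h : IsStreamFunctionOn U u F O) :
    IsStreamFunctionOn (fun p => U (reflectFst p)) (fun p => -u (reflectFst p))
      (fun p => F (reflectFst p)) (reflectFst ⁻¹' O) := by
  have hmp : MeasurePreserving (fun p : ℝ × ℝ => (-p.1, p.2)) (volume.prod volume)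
      (volume.prod volume) := (Measure.measurePreserving_neg volume).prod (.id volume)
  filter_upwards [hmp.quasiMeasurePreserving.ae h] with p hp hpO
  refine (HasFDerivAt.comp (f := fun q : ℝ × ℝ => (-q.1, q.2)) p (hp hpO)
    (hasFDerivAt_fst.neg.prodMk hasFDerivAt_snd)).congr_fderiv ?_
  ext <;> simp [reflectFst_apply]

lemma IsSubtangentWithin.of_comp_isometryEquiv {E E' : Type*} [PseudoMetricSpace E]
    [PseudoMetricSpace E'] (e : E ≃ᵢ E') {U Φ : E' → ℝ} {S : Set E'} {p₀ : E}
    (h : IsSubtangentWithin (fun p => U (e p)) (fun p => Φ (e p)) (e ⁻¹' S) p₀) :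
    IsSubtangentWithin U Φ S (e p₀) := fun η hη => by
  have hmap : map e (𝓝[e ⁻¹' S] p₀) = 𝓝[S] (e p₀) :=
    e.toHomeomorph.isOpenEmbedding.map_nhdsWithin_preimage_eq S p₀
  rw [← hmap, eventually_map]
  filter_upwards [h η hη] with p hp
  rwa [e.dist_eq]

lemma IsSubtangentWithin.congr {E : Type*} [PseudoMetricSpace E] {U Φ Φ' : E → ℝ} {S : Set E}
    {p₀ : E} (h : IsSubtangentWithin U Φ S p₀) (hΦ : EqOn Φ Φ' S) (hp₀ : p₀ ∈ S) :
    IsSubtangentWithin U Φ' S p₀ := fun η hη => by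
  filter_upwards [h η hη, self_mem_nhdsWithin] with p hp hpS
  rwa [← hΦ hpS, ← hΦ hp₀]

end Reflection

section LipschitzFlux

lemma exists_abs_sub_le_of_locallyLipschitz {f : ℝ → ℝ} (hf : LocallyLipschitz f) (M : ℝ) :
    ∃ L ≥ 0, ∀ v w, |v| ≤ M → |w| ≤ M → |f v - f w| ≤ L * |v - w| := by
  obtain ⟨K, hK⟩ := LocallyLipschitzOn.exists_lipschitzOnWith_of_compact
    (isCompact_Icc (a := -M) (b := M)) hf.locallyLipschitzOn
  exact ⟨K, K.2, fun v w hv hw => hK.dist_le_mul v (abs_le.1 hv) w (abs_le.1 hw)⟩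

lemma exists_abs_dflux_sub_le {fl fr : ℝ → ℝ} (hfl : LocallyLipschitz fl)
    (hfr : LocallyLipschitz fr) (M : ℝ) :
    ∃ L ≥ 0, ∀ x v w, |v| ≤ M → |w| ≤ M → |dflux fl fr x v - dflux fl fr x w| ≤ L * |v - w| := by
  obtain ⟨L₁, hL₁, hl⟩ := exists_abs_sub_le_of_locallyLipschitz hfl M
  obtain ⟨L₂, -, hr⟩ := exists_abs_sub_le_of_locallyLipschitz hfr M
  refine ⟨max L₁ L₂, hL₁.trans (le_max_left _ _), fun x v w hv hw => ?_⟩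
  unfold dflux
  split_ifs
  · exact (hl v w hv hw).trans (mul_le_mul_of_nonneg_right (le_max_left _ _) (abs_nonneg _))
  · exact (hr v w hv hw).trans (mul_le_mul_of_nonneg_right (le_max_right _ _) (abs_nonneg _))

end LipschitzFlux

section InterfaceProfile

lemma lipschitzWith_mul_min_add_mul_max (A B : ℝ) :
    LipschitzWith (‖A‖₊ * 1 + ‖B‖₊ * 1) fun x : ℝ => A * min x 0 + B * max x 0 :=
  ((lipschitzWith_smul A).comp (LipschitzWith.id.min_const 0)).add
    ((lipschitzWith_smul B).comp (LipschitzWith.id.max_const 0))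

lemma hasDerivAt_mul_min_add_mul_max (A B : ℝ) {x : ℝ} (hx : x ≠ 0) :
    HasDerivAt (fun x => A * min x 0 + B * max x 0) (cAB A B x) x := by
  rcases hx.lt_or_gt with hx | hx
  · rw [cAB, if_pos hx.le]
    refine (((hasDerivAt_id x).const_mul A).congr_deriv (mul_one A)).congr_of_eventuallyEq ?_
    filter_upwards [gt_mem_nhds hx] with y hy
    rw [min_eq_left hy.le, max_eq_right hy.le, mul_zero, add_zero, id_eq]
  · rw [cAB, if_neg hx.not_ge]
    refine (((hasDerivAt_id x).const_mul B).congr_deriv (mul_one B)).congr_of_eventuallyEq ?_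
    filter_upwards [lt_mem_nhds hx] with y hy
    rw [min_eq_right hy.le, max_eq_left hy.le, mul_zero, zero_add, id_eq]

lemma dflux_cAB {fl fr : ℝ → ℝ} {A B : ℝ} (hAB : fl A = fr B) {x : ℝ} (hx : x ≠ 0) :
    dflux fl fr x (cAB A B x) = fl A := by
  rcases hx.lt_or_gt with hx | hx
  · rw [dflux_of_neg hx, cAB, if_pos hx.le]
  · rw [dflux_of_nonneg hx.le, cAB, if_neg hx.not_ge, hAB]

end InterfaceProfile

namespace ABSol

variable {fl fr u0 : ℝ → ℝ} {A B : ℝ} (sol : ABSol fl fr A B u0)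

lemma nonneg_of_isSubtangentWithin_potential (hfl : Continuous fl) (hfr : Continuous fr)
    {O : Set (ℝ × ℝ)} (hO : IsOpen O) (hOt : O ⊆ {p | 0 < p.2}) {F : ℝ × ℝ → ℝ} {c P : ℝ → ℝ}
    {KP : ℝ≥0} {L F₀ α : ℝ} {p₀ : ℝ × ℝ} (hp₀ : p₀ ∈ O) (hP : LipschitzWith KP P)
    (hPc : ∀ᵐ x, HasDerivAt P (c x) x) (hc : IsBddMeasurable c) (hF : Measurable F)
    (hFu : ∀ᵐ p, p ∈ O → F p = dflux fl fr p.1 (sol.u p.1 p.2)) (hL : 0 ≤ L)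
    (hFL : ∀ p, |F p - F₀| ≤ L * |sol.u p.1 p.2 - c p.1|)
    (hdiv : HasNonposDivergenceOn (fun p => |sol.u p.1 p.2 - c p.1|)
      (fun p => Real.sign (sol.u p.1 p.2 - c p.1) * (F p - F₀)) O)
    (hsub : IsSubtangentWithin sol.potential (fun p => P p.1 + α * p.2) univ p₀) :
    0 ≤ α + F₀ := by
  obtain ⟨K, hK⟩ := sol.exists_lipschitzWith_potential hfl hfr
  obtain ⟨C, hC⟩ := (sol.isBddMeasurable.sub (hc.comp measurable_fst)).bdd
  refine nonneg_of_isSubtangentWithin_of_hasNonposDivergenceOn hO hp₀ hK ?_ hP hPc sol.meas hF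
    hc.measurable (fun p _ => hC p) hL (fun p _ => hFL p) hdiv hsub
  filter_upwards [sol.isStreamFunctionOn_potential hfl hfr, hFu] with p hp hFp hpO
  rw [hFp hpO]
  exact hp (hOt hpO)

lemma nonneg_of_isSubtangentWithin_potential_affine (hfl : Continuous fl) (hfr : Continuous fr)
    {f : ℝ → ℝ} (hf : LocallyLipschitz f) {O : Set (ℝ × ℝ)} (hO : IsOpen O)
    (hOt : O ⊆ {p | 0 < p.2}) (hOf : ∀ p ∈ O, dflux fl fr p.1 = f) {k α : ℝ} {p₀ : ℝ × ℝ}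
    (hdiv : HasNonposDivergenceOn (fun p => |sol.u p.1 p.2 - k|)
      (fun p => Real.sign (sol.u p.1 p.2 - k) * (f (sol.u p.1 p.2) - f k)) O)
    (hp₀ : p₀ ∈ O)
    (hsub : IsSubtangentWithin sol.potential (fun p => k * p.1 + α * p.2) univ p₀) :
    0 ≤ α + f k := by
  obtain ⟨M, huM, hkM⟩ := sol.isBddMeasurable.exists_common_bound (.const (α := ℝ) k)
  obtain ⟨L, hL, hfL⟩ := exists_abs_sub_le_of_locallyLipschitz hf M
  exact sol.nonneg_of_isSubtangentWithin_potential hfl hfr hO hOt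
    (F := fun p => f (sol.u p.1 p.2)) hp₀ (lipschitzWith_smul k)
    (.of_forall fun x => ((hasDerivAt_id x).const_mul k).congr_deriv (mul_one k)) (.const k)
    (hf.continuous.measurable.comp sol.meas) (.of_forall fun p hpO => by rw [hOf p hpO]) hL
    (fun p => hfL _ _ (huM p) (hkM 0)) hdiv hsub

theorem isQuarterPlaneSolution_potential (hfl : Continuous fl) (hfr : LocallyLipschitz fr) :
    IsQuarterPlaneSolution fr sol.potential where
  exists_lipschitzWith := sol.exists_lipschitzWith_potential hfl hfr.continuous
  exists_isStreamFunctionOn := by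
    refine ⟨fun p => sol.u p.1 p.2, ?_⟩
    filter_upwards [sol.isStreamFunctionOn_potential hfl hfr.continuous] with p hp hpO
    have h := hp hpO.2
    rwa [dflux_of_nonneg (le_of_lt hpO.1)] at h
  nonneg_of_isSubtangentWithin _ hx ht k _ :=
    sol.nonneg_of_isSubtangentWithin_potential_affine hfl hfr.continuous hfr
      ((isOpen_lt continuous_const continuous_fst).inter
        (isOpen_lt continuous_const continuous_snd)) (fun _ hp => hp.2)
      (fun _ hp => dflux_of_nonneg (le_of_lt hp.1))
      (sol.hasNonposDivergenceOn_entropy_right hfr.continuous k) ⟨hx, ht⟩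

theorem isQuarterPlaneSolution_potential_reflect (hfl : LocallyLipschitz fl)
    (hfr : Continuous fr) :
    IsQuarterPlaneSolution (fun w => fl (-w)) fun p => sol.potential (reflectFst p) where
  exists_lipschitzWith := by
    obtain ⟨K, hK⟩ := sol.exists_lipschitzWith_potential hfl.continuous hfr
    exact ⟨K * 1, hK.comp reflectFst.isometry.lipschitz⟩
  exists_isStreamFunctionOn := by
    refine ⟨fun p => -sol.u (-p.1) p.2, ?_⟩
    filter_upwards [(sol.isStreamFunctionOn_potential hfl.continuous hfr).reflect] with p hp hpO
    have h := hp hpO.2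
    rw [reflectFst_apply, dflux_of_neg (neg_neg_of_pos hpO.1)] at h
    rwa [neg_neg]
  nonneg_of_isSubtangentWithin p₀ hx ht k α hsub := by
    refine sol.nonneg_of_isSubtangentWithin_potential_affine hfl.continuous hfr hfl
      ((isOpen_lt continuous_fst continuous_const).inter
        (isOpen_lt continuous_const continuous_snd)) (fun _ hp => hp.2)
      (fun _ hp => dflux_of_neg hp.1)
      (sol.hasNonposDivergenceOn_entropy_left hfl.continuous (-k))
      (p₀ := reflectFst p₀) ⟨neg_neg_of_pos hx, ht⟩ (.of_comp_isometryEquiv reflectFst ?_)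
    simpa only [reflectFst_apply, neg_mul_neg, preimage_univ] using hsub

/-- The two one-sided test functions glue to a test function whose slope in space is `cAB A B`,
and this one is admissible for the interface entropy inequality. -/
theorem nonneg_of_isSubtangentWithin_interface (hfl : LocallyLipschitz fl)
    (hfr : LocallyLipschitz fr) (hAB : fl A = fr B) {t α : ℝ} (ht : 0 < t)
    (hright : IsSubtangentWithin sol.potential (fun p => B * p.1 + α * p.2)
      {p : ℝ × ℝ | 0 ≤ p.1} (0, t))
    (hleft : IsSubtangentWithin (fun p => sol.potential (reflectFst p))
      (fun p => -A * p.1 + α * p.2) {p : ℝ × ℝ | 0 ≤ p.1} (0, t)) : 0 ≤ α + fl A := by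
  have hc := isBddMeasurable_cAB A B
  have hcfst : IsBddMeasurable fun p : ℝ × ℝ => cAB A B p.1 := hc.comp measurable_fst
  obtain ⟨M, huM, hcM⟩ := sol.isBddMeasurable.exists_common_bound hc
  obtain ⟨L, hL, hfL⟩ := exists_abs_dflux_sub_le hfl hfr M
  refine sol.nonneg_of_isSubtangentWithin_potential hfl.continuous hfr.continuous
    (isOpen_lt continuous_const continuous_snd) subset_rfl (p₀ := (0, t))
    (F := fun p => dflux fl fr p.1 (sol.u p.1 p.2) - dflux fl fr p.1 (cAB A B p.1) + fl A) ht
    (lipschitzWith_mul_min_add_mul_max A B)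
    ((Measure.ae_ne volume 0).mono fun _ => hasDerivAt_mul_min_add_mul_max A B) hc
    (((sol.isBddMeasurable.dflux hfl.continuous hfr.continuous).sub
      (hcfst.dflux hfl.continuous hfr.continuous)).measurable.add_const _)
    ?_ hL (fun p => ?_) ?_ ?_
  · filter_upwards [ae_comp_fst (Measure.ae_ne volume 0)] with p hp _
    rw [dflux_cAB hAB hp, sub_add_cancel]
  · rw [add_sub_cancel_right]
    exact hfL _ _ _ (huM p) (hcM p.1)
  · simp only [add_sub_cancel_right]
    exact sol.hasNonposDivergenceOn_interfaceEntropy hfl.continuous hfr.continuous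
  · have hunion : {p : ℝ × ℝ | 0 ≤ p.1} ∪ {p | p.1 ≤ 0} = univ :=
      eq_univ_of_forall fun p => le_total 0 p.1
    have hleft' : IsSubtangentWithin sol.potential (fun p => A * p.1 + α * p.2)
        {p : ℝ × ℝ | p.1 ≤ 0} (reflectFst (0, t)) := by
      refine .of_comp_isometryEquiv reflectFst ?_
      simpa [reflectFst_apply] using hleft
    rw [reflectFst_apply, neg_zero] at hleft'
    rw [← hunion]
    refine (hright.congr (fun p (hp : 0 ≤ p.1) => ?_) (le_refl (0 : ℝ))).union
      (hleft'.congr (fun p (hp : p.1 ≤ 0) => ?_) (le_refl (0 : ℝ)))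
    · simp only [min_eq_right hp, max_eq_left hp, mul_zero, zero_add]
    · simp only [min_eq_left hp, max_eq_right hp, mul_zero, add_zero]

lemma antitoneOn_potential_add_mul (hfl : Continuous fl) (hfr : Continuous fr)
    (hflA : AntitoneOn fl (Iic A)) (hfrB : MonotoneOn fr (Ici B)) (hAB : fl A = fr B) :
    AntitoneOn (fun t => sol.potential (0, t) + fl A * t) (Ici 0) := by
  intro t₁ ht₁ t₂ _ ht
  have hle : ∫ _ in t₁..t₂, fl A ≤ ∫ s in t₁..t₂, sol.rightFlux (0, s) := by
    refine intervalIntegral.integral_mono_ae_restrict ht intervalIntegrable_const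
      ((sol.isBddMeasurable_rightFlux_slice hfl hfr 0).intervalIntegrable _ _) ?_
    rw [EventuallyLE, ← restrict_Ioo_eq_restrict_Icc, ae_restrict_iff' measurableSet_Ioo]
    filter_upwards [sol.ae_interface_flux hfl hfr hflA hfrB hAB] with s hs hst
    exact (hs (lt_of_le_of_lt ht₁ hst.1)).2.2
  rw [intervalIntegral.integral_const, smul_eq_mul] at hle
  linarith [sol.potential_sub_potential_snd hfl hfr 0 ht₁ ht]

end ABSol

namespace ABSol

variable {fl fr u0 L g : ℝ → ℝ} {A B γ : ℝ} (sol : ABSol fl fr A B u0)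

/-- The condition which `IsABgic` imposes at time `t` on a path through `(z, t)` with velocity `w`.
On the interface `z = 0` it does not involve `w`. -/
def HasCharVelocity (γ z t w : ℝ) : Prop :=
  (z < 0 → deriv fl (sol.um z t) = w ∧ deriv fl (sol.up z t) = w) ∧
  (0 < z → deriv fr (sol.um z t) = w ∧ deriv fr (sol.up z t) = w) ∧
  (z = 0 → fl (sol.um 0 t) = γ ∧ fr (sol.up 0 t) = γ)

lemma hasCharVelocity_of_pos {z t w : ℝ} (hz : 0 < z)
    (h : deriv fr (sol.um z t) = w ∧ deriv fr (sol.up z t) = w) : sol.HasCharVelocity γ z t w :=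
  ⟨fun h => absurd h hz.not_gt, fun _ => h, fun h => absurd h hz.ne'⟩

lemma hasCharVelocity_of_neg {z t w : ℝ} (hz : z < 0)
    (h : deriv fl (sol.um z t) = w ∧ deriv fl (sol.up z t) = w) : sol.HasCharVelocity γ z t w :=
  ⟨fun _ => h, fun h => absurd h hz.not_gt, fun h => absurd h hz.ne⟩

lemma hasCharVelocity_zero_left {t w : ℝ} (h : fl (sol.um 0 t) = γ ∧ fr (sol.up 0 t) = γ) :
    sol.HasCharVelocity γ 0 t w :=
  ⟨fun h => absurd h (lt_irrefl 0), fun h => absurd h (lt_irrefl 0), fun _ => h⟩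

lemma charSet_time_zero_nonempty (x : ℝ) : (charSet 0 fl fr γ sol x).Nonempty := by
  refine ⟨fun _ => x, ⟨⟨0, (LipschitzWith.const x).lipschitzOnWith⟩, ?_⟩, rfl⟩
  rw [Icc_self, Measure.restrict_singleton, Real.volume_singleton, zero_smul, ae_zero]
  exact eventually_bot

lemma charSet_nonempty_of_ae_hasCharVelocity {s T x w : ℝ} (hs : 0 ≤ s) (hsT : s ≤ T)
    (h : (charSet s fl fr γ sol x).Nonempty)
    (hvel : ∀ᵐ t, t ∈ Ioo s T → sol.HasCharVelocity γ (x + w * (t - s)) t w) :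
    (charSet T fl fr γ sol (x + w * (T - s))).Nonempty := by
  obtain ⟨ζ, ⟨⟨K, hK⟩, hζ⟩, rfl⟩ := h
  set ξ : ℝ → ℝ := fun t => ζ (min t s) + w * max (t - s) 0
  have hξ_le {t : ℝ} (ht : t ≤ s) : ξ t = ζ t := by
    simp only [ξ, min_eq_left ht, max_eq_right (sub_nonpos.2 ht), mul_zero, add_zero]
  have hξ_ge {t : ℝ} (ht : s ≤ t) : ξ t = ζ s + w * (t - s) := by
    simp only [ξ, min_eq_right ht, max_eq_left (sub_nonneg.2 ht)]
  refine ⟨ξ, ⟨⟨K * 1 + ‖w‖₊ * (1 + 0), LipschitzOnWith.add ?_ ?_⟩, ?_⟩, hξ_ge hsT⟩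
  · exact hK.comp (LipschitzWith.id.min_const s).lipschitzOnWith
      fun t ht => ⟨le_min ht.1 hs, min_le_right t s⟩
  · exact ((lipschitzWith_smul w).comp
      ((LipschitzWith.id.sub (LipschitzWith.const s)).max_const 0)).lipschitzOnWith
  rw [ae_restrict_iff' measurableSet_Icc] at hζ ⊢
  filter_upwards [hζ, hvel, Measure.ae_ne volume s, Measure.ae_ne volume T]
    with t hζt hvelt hts htT ht
  rcases hts.lt_or_gt with hts | hts
  · have hev : ξ =ᶠ[𝓝 t] ζ := (gt_mem_nhds hts).mono fun _ h => hξ_le (le_of_lt h)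
    simpa only [hev.hasDerivAt_iff, hξ_le hts.le] using hζt ⟨ht.1, hts.le⟩
  · have hev : ξ =ᶠ[𝓝 t] fun t => ζ s + w * (t - s) :=
      (lt_mem_nhds hts).mono fun _ h => hξ_ge (le_of_lt h)
    have hderiv : HasDerivAt ξ w t := by
      rw [hev.hasDerivAt_iff]
      exact ((((hasDerivAt_id t).sub_const s).const_mul w).const_add _).congr_deriv (mul_one w)
    obtain ⟨hneg, hpos, hzero⟩ := hvelt ⟨hts, ht.2.lt_of_ne htT⟩
    rw [hξ_ge hts.le]
    refine ⟨fun h => ?_, fun h => ?_, hzero⟩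
    · rw [(hneg h).1, (hneg h).2]
      exact ⟨hderiv, rfl⟩
    · rw [(hpos h).1, (hpos h).2]
      exact ⟨hderiv, rfl⟩

section Segment

variable {p q : ℝ × ℝ}

lemma charSet_nonempty_of_add_segmentAction_le (hL : IsLegendreTransform fr L g)
    (hW : IsQuarterPlaneSolution fr sol.potential) (hp₁ : 0 ≤ p.1) (hp₂ : 0 ≤ p.2) (hq₁ : 0 ≤ q.1)
    (hpq₁ : 0 < p.1 + q.1) (hpq₂ : p.2 < q.2)
    (hle : sol.potential p + segmentAction L p q ≤ sol.potential q)
    (h : (charSet p.2 fl fr γ sol p.1).Nonempty) : (charSet q.2 fl fr γ sol q.1).Nonempty := by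
  rw [← segmentPos_right hpq₂]
  refine sol.charSet_nonempty_of_ae_hasCharVelocity hp₂ hpq₂.le h (.of_forall fun t ht => ?_)
  have hpos := segmentPos_pos hp₁ hq₁ hpq₁ ht
  obtain ⟨hum, hup⟩ := sol.um_eq_and_up_eq_of_hasDerivAt (hp₂.trans_lt ht.1)
    (hW.hasDerivAt_of_add_segmentAction_le hL hp₁ hp₂ hq₁ hle ht hpos)
  refine sol.hasCharVelocity_of_pos hpos ?_
  rw [← segmentPos, hum, hup, hL.deriv_apply, and_self]

lemma charSet_nonempty_of_add_segmentAction_le_reflect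
    (hL : IsLegendreTransform (fun w => fl (-w)) L g)
    (hW : IsQuarterPlaneSolution (fun w => fl (-w)) fun p => sol.potential (reflectFst p))
    (hp₁ : 0 ≤ p.1) (hp₂ : 0 ≤ p.2) (hq₁ : 0 ≤ q.1) (hpq₁ : 0 < p.1 + q.1) (hpq₂ : p.2 < q.2)
    (hle : sol.potential (reflectFst p) + segmentAction L p q ≤ sol.potential (reflectFst q))
    (h : (charSet p.2 fl fr γ sol (-p.1)).Nonempty) :
    (charSet q.2 fl fr γ sol (-q.1)).Nonempty := by
  set v := segmentVelocity p q
  have hline (t : ℝ) : -p.1 + -v * (t - p.2) = -segmentPos p q t := by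
    rw [segmentPos]
    ring
  rw [← segmentPos_right hpq₂, ← hline]
  refine sol.charSet_nonempty_of_ae_hasCharVelocity hp₂ hpq₂.le h (.of_forall fun t ht => ?_)
  rw [hline]
  have hpos := segmentPos_pos hp₁ hq₁ hpq₁ ht
  have hderiv : HasDerivAt (fun y => sol.potential (y, t)) (-g v) (-segmentPos p q t) := by
    have hrefl := hW.hasDerivAt_of_add_segmentAction_le hL hp₁ hp₂ hq₁ hle ht hpos
    rw [← neg_neg (segmentPos p q t)] at hrefl
    simpa only [reflectFst_apply, Function.comp_def, neg_neg, mul_neg, mul_one] using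
      hrefl.comp (-segmentPos p q t) (hasDerivAt_neg _)
  obtain ⟨hum, hup⟩ := sol.um_eq_and_up_eq_of_hasDerivAt (hp₂.trans_lt ht.1) hderiv
  have hfl : deriv fl (-g v) = -v := by
    rw [← neg_eq_iff_eq_neg, ← deriv_comp_neg, hL.deriv_apply]
  exact sol.hasCharVelocity_of_neg (neg_neg_of_pos hpos) (by rw [hum, hup, hfl, and_self])

end Segment

end ABSol

namespace ABSol

variable {fl fr u0 Ll gl Lr gr : ℝ → ℝ} {A B : ℝ} (sol : ABSol fl fr A B u0)

lemma ae_flux_eq_of_potential_eq (hfl : Continuous fl) (hfr : Continuous fr)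
    (hflA : AntitoneOn fl (Iic A)) (hfrB : MonotoneOn fr (Ici B)) (hAB : fl A = fr B) {s T : ℝ}
    (hs : 0 ≤ s) (heq : sol.potential (0, s) + fl A * s = sol.potential (0, T) + fl A * T) :
    ∀ᵐ t, t ∈ Ioo s T → fl (sol.um 0 t) = fl A ∧ fr (sol.up 0 t) = fl A := by
  have hanti := sol.antitoneOn_potential_add_mul hfl hfr hflA hfrB hAB
  filter_upwards [sol.ae_hasDerivAt_potential_snd hfl hfr 0,
    sol.ae_interface_flux hfl hfr hflA hfrB hAB] with t hflux htrace ht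
  have hlin : (fun t => sol.potential (0, t)) =ᶠ[𝓝 t]
      fun t => sol.potential (0, s) + fl A * s - fl A * t := by
    filter_upwards [Ioo_mem_nhds ht.1 ht.2] with r hr
    have hsr := hanti hs (hs.trans hr.1.le) hr.1.le
    have hrT := hanti (hs.trans hr.1.le) (hs.trans (hr.1.trans hr.2).le) hr.2.le
    simp only at hsr hrT
    linarith
  have hderiv : HasDerivAt (fun t => sol.potential (0, t)) (-(fl A * 1)) t :=
    (((hasDerivAt_id t).const_mul (fl A)).const_sub _).congr_of_eventuallyEq hlin
  have ht₀ := hs.trans_lt ht.1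
  have hval : sol.rightFlux (0, t) = fl A := by
    simpa only [mul_one, neg_inj] using (hflux ht₀).unique hderiv
  exact ⟨(htrace ht₀).1.trans hval, (htrace ht₀).2.1.trans hval⟩

variable (hfl : LocallyLipschitz fl) (hfr : LocallyLipschitz fr)
  (hLl : IsLegendreTransform fl Ll gl) (hLr : IsLegendreTransform fr Lr gr)
  (hflA : AntitoneOn fl (Iic A)) (hfrB : MonotoneOn fr (Ici B)) (hAB : fl A = fr B)
include hfl hfr hLl hLr hflA hfrB hAB

lemma charSet_interface_nonempty {T : ℝ} (hT : 0 ≤ T) :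
    (charSet T fl fr (fl A) sol 0).Nonempty := by
  have hWr := sol.isQuarterPlaneSolution_potential hfl.continuous hfr
  have hWl := sol.isQuarterPlaneSolution_potential_reflect hfl hfr.continuous
  have htrace (t : ℝ) : sol.potential (reflectFst (0, t)) = sol.potential (0, t) := by
    rw [reflectFst_apply, neg_zero]
  obtain ⟨s, ⟨hs, hsT⟩, heq, hmin⟩ := exists_trace_eq_and_minimizer (c₁ := B) (c₂ := -A) hWr hLr
    hWl hLl.comp_neg hAB.symm (by rw [neg_neg]) htrace
    (sol.antitoneOn_potential_add_mul hfl.continuous hfr.continuous hflA hfrB hAB)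
    (fun t ht α => sol.nonneg_of_isSubtangentWithin_interface hfl hfr hAB ht) hT
  have hstart : (charSet s fl fr (fl A) sol 0).Nonempty := by
    rcases hs.eq_or_lt with rfl | hs
    · exact sol.charSet_time_zero_nonempty 0
    rcases hmin hs with ⟨y, hy, hle⟩ | ⟨y, hy, hle⟩
    · exact sol.charSet_nonempty_of_add_segmentAction_le (p := (y, 0)) (q := (0, s)) hLr hWr hy.le
        le_rfl le_rfl (by simpa using hy) hs hle (sol.charSet_time_zero_nonempty y)
    · simpa only [neg_zero] using sol.charSet_nonempty_of_add_segmentAction_le_reflect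
        (p := (y, 0)) (q := (0, s)) hLl.comp_neg hWl hy.le le_rfl le_rfl (by simpa using hy) hs hle
        (sol.charSet_time_zero_nonempty (-y))
  have hvel : ∀ᵐ t, t ∈ Ioo s T → sol.HasCharVelocity (fl A) (0 + 0 * (t - s)) t 0 := by
    filter_upwards [sol.ae_flux_eq_of_potential_eq hfl.continuous hfr.continuous hflA hfrB hAB hs
      heq] with t hflux ht
    rw [zero_mul, add_zero]
    exact sol.hasCharVelocity_zero_left (hflux ht)
  simpa only [zero_mul, add_zero] using
    sol.charSet_nonempty_of_ae_hasCharVelocity hs hsT hstart hvel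

lemma charSet_boundary_nonempty {p : ℝ × ℝ} (hp : 0 ≤ p.2) (hbdry : p.1 = 0 ∨ p.2 = 0) :
    (charSet p.2 fl fr (fl A) sol p.1).Nonempty := by
  rcases hbdry with h | h
  · rw [h]
    exact sol.charSet_interface_nonempty hfl hfr hLl hLr hflA hfrB hAB hp
  · rw [h]
    exact sol.charSet_time_zero_nonempty p.1

lemma charSet_nonempty_of_pos {x T : ℝ} (hx : 0 < x) (hT : 0 < T) :
    (charSet T fl fr (fl A) sol x).Nonempty := by
  have hW := sol.isQuarterPlaneSolution_potential hfl.continuous hfr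
  obtain ⟨p, ⟨hp₁, hp₂, hpT⟩, hbdry, hle⟩ := hW.exists_boundary_minimizer hLr (q := (x, T)) hx hT
  exact sol.charSet_nonempty_of_add_segmentAction_le hLr hW hp₁ hp₂ hx.le
    (add_pos_of_nonneg_of_pos hp₁ hx) hpT hle
    (sol.charSet_boundary_nonempty hfl hfr hLl hLr hflA hfrB hAB hp₂ hbdry)

lemma charSet_nonempty_of_neg {x T : ℝ} (hx : x < 0) (hT : 0 < T) :
    (charSet T fl fr (fl A) sol x).Nonempty := by
  have hW := sol.isQuarterPlaneSolution_potential_reflect hfl hfr.continuous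
  have hx' : 0 < -x := neg_pos.2 hx
  obtain ⟨p, ⟨hp₁, hp₂, hpT⟩, hbdry, hle⟩ :=
    hW.exists_boundary_minimizer hLl.comp_neg (q := (-x, T)) hx' hT
  have hp : (charSet p.2 fl fr (fl A) sol (-p.1)).Nonempty :=
    sol.charSet_boundary_nonempty hfl hfr hLl hLr hflA hfrB hAB (p := reflectFst p) hp₂
      (hbdry.imp_left neg_eq_zero.2)
  simpa only [neg_neg] using sol.charSet_nonempty_of_add_segmentAction_le_reflect hLl.comp_neg hW
    hp₁ hp₂ hx'.le (add_pos_of_nonneg_of_pos hp₁ hx') hpT hle hp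

end ABSol

theorem charSet_nonempty_general {T A B : ℝ} {fl fr u0 : ℝ → ℝ} (hT : 0 ≤ T)
    (hfl : Differentiable ℝ fl) (hfr : Differentiable ℝ fr)
    (hflmono : StrictMono (deriv fl)) (hfrmono : StrictMono (deriv fr))
    (hflsurj : Function.Surjective (deriv fl)) (hfrsurj : Function.Surjective (deriv fr))
    (hAB : fl A = fr B) (hA' : deriv fl A ≤ 0) (hB' : 0 ≤ deriv fr B)
    (sol : ABSol fl fr A B u0) (x : ℝ) : (charSet T fl fr (fl A) sol x).Nonempty := by
  obtain ⟨Ll, gl, hLl⟩ := exists_isLegendreTransform hfl hflmono hflsurj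
  obtain ⟨Lr, gr, hLr⟩ := exists_isLegendreTransform hfr hfrmono hfrsurj
  have hfl' := (hflmono.monotone.convexOn_univ_of_deriv hfl).locallyLipschitz
  have hfr' := (hfrmono.monotone.convexOn_univ_of_deriv hfr).locallyLipschitz
  have hflA : AntitoneOn fl (Iic A) :=
    antitoneOn_of_deriv_nonpos (convex_Iic A) hfl.continuous.continuousOn hfl.differentiableOn
      fun w hw => (hflmono.monotone (mem_Iic.1 (interior_subset hw))).trans hA'
  have hfrB : MonotoneOn fr (Ici B) :=
    monotoneOn_of_deriv_nonneg (convex_Ici B) hfr.continuous.continuousOn hfr.differentiableOn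
      fun w hw => hB'.trans (hfrmono.monotone (mem_Ici.1 (interior_subset hw)))
  rcases hT.eq_or_lt with rfl | hT
  · exact sol.charSet_time_zero_nonempty x
  rcases lt_trichotomy x 0 with hx | rfl | hx
  · exact sol.charSet_nonempty_of_neg hfl' hfr' hLl hLr hflA hfrB hAB hx hT
  · exact sol.charSet_interface_nonempty hfl' hfr' hLl hLr hflA hfrB hAB hT.le
  · exact sol.charSet_nonempty_of_pos hfl' hfr' hLl hLr hflA hfrB hAB hx hT

/-- existence of an AB-genuine/interface characteristic reaching
any point `x` at time `T` (Proposition 4.1 (i) of the paper). -/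
theorem charSet_nonempty
    {T a θl θr A B : ℝ} {fl fr : ℝ → ℝ}
    (hT : 0 < T)
    (hflC : ContDiff ℝ 2 fl) (hfrC : ContDiff ℝ 2 fr)
    (ha : 0 < a)
    (hfl2 : ∀ w : ℝ, a ≤ deriv (deriv fl) w)
    (hfr2 : ∀ w : ℝ, a ≤ deriv (deriv fr) w)
    (hf0 : fl 0 = fr 0) (hf1 : fl 1 = fr 1)
    (hθl : deriv fl θl = 0) (hθr : deriv fr θr = 0)
    (hθl0 : 0 ≤ θl) (hθr1 : θr ≤ 1)
    (hAB : fl A = fr B) (hA' : deriv fl A ≤ 0) (hB' : 0 ≤ deriv fr B)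
    {u0 : ℝ → ℝ} (hu0 : IsLinf u0) (sol : ABSol fl fr A B u0) :
    ∀ x : ℝ, (charSet T fl fr (fl A) sol x).Nonempty := by
  have hl : Differentiable ℝ (deriv fl) := hflC.differentiable_deriv_two
  have hr : Differentiable ℝ (deriv fr) := hfrC.differentiable_deriv_two
  exact charSet_nonempty_general hT.le (hflC.differentiable two_ne_zero)
    (hfrC.differentiable two_ne_zero) (strictMono_of_deriv_pos fun w => ha.trans_le (hfl2 w))
    (strictMono_of_deriv_pos fun w => ha.trans_le (hfr2 w))
    (surjective_deriv_of_le_deriv_deriv ha hl hfl2) (surjective_deriv_of_le_deriv_deriv ha hr hfr2)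
    hAB hA' hB' sol
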